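/- arXiv:2505.19072 — 3 statements merged into one kernel-verified Lean document; each statement's English description precedes it below -/
import Mathlib

section
/- Let T ∈ SVRPP^n(λ/μ). Then T is a highest weight element (that is, e_i(T) = 0 for all i ∈ {1,...,n−1}) if and only if the reading word read(T) is a reverse lattice word. -/
open scoped Classical

/-- A partition, given as its weakly decreasing sequence of parts (0-indexed),
with finitely many nonzero parts. -/
def IsPartitionFun (f : ℕ → ℕ) : Prop :=
  (∀ i, f (i + 1) ≤ f i) ∧ ∃ N, ∀ i, N ≤ i → f i = 0

/-- Box `(i, j)` (row `i`, column `j`, both 0-indexed) lies in the skew shape `lam/mu`. -/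
def InShape (lam mu : ℕ → ℕ) (i j : ℕ) : Prop :=
  mu i ≤ j ∧ j < lam i

/-- `A ≤ B` for finite sets of naturals: every element of `A` is at most every
element of `B` (for nonempty sets this says `max A ≤ min B`). -/
def FinsetLE (A B : Finset ℕ) : Prop :=
  ∀ a ∈ A, ∀ b ∈ B, a ≤ b

/-- A set-valued reverse plane partition of skew shape `lam/mu`: every box of the
shape is filled with a nonempty finite set of positive integers, the sets weakly
increase along rows and down columns, and boxes outside the shape are empty. -/
def IsSVRPP (lam mu : ℕ → ℕ) (T : ℕ → ℕ → Finset ℕ) : Prop :=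
  (∀ i j, ¬ InShape lam mu i j → T i j = ∅) ∧
  (∀ i j, InShape lam mu i j → (T i j).Nonempty) ∧
  (∀ i j x, x ∈ T i j → 1 ≤ x) ∧
  (∀ i j, InShape lam mu i j → InShape lam mu i (j + 1) → FinsetLE (T i j) (T i (j + 1))) ∧
  (∀ i j, InShape lam mu i j → InShape lam mu (i + 1) j → FinsetLE (T i j) (T (i + 1) j))

/-- An SVRPP all of whose entries are subsets of `{1, …, n}`. -/
def IsSVRPPn (lam mu : ℕ → ℕ) (n : ℕ) (T : ℕ → ℕ → Finset ℕ) : Prop :=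
  IsSVRPP lam mu T ∧ ∀ i j, T i j ⊆ Finset.Icc 1 n

/-- `ircont T v` = number of columns of `T` containing a set that contains `v`. -/
noncomputable def ircont (T : ℕ → ℕ → Finset ℕ) (v : ℕ) : ℕ :=
  Set.ncard {j : ℕ | ∃ i, v ∈ T i j}

/-- `ceq lam mu T i` = number of boxes `(i,j)` of the shape with `(i+1,j)` also in the
shape and `max T(i,j) = min T(i+1,j)`. -/
noncomputable def ceq (lam mu : ℕ → ℕ) (T : ℕ → ℕ → Finset ℕ) (i : ℕ) : ℕ :=
  Set.ncard {j : ℕ | InShape lam mu i j ∧ InShape lam mu (i + 1) j ∧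
    ∃ m, m ∈ T i j ∧ (∀ x ∈ T i j, x ≤ m) ∧ m ∈ T (i + 1) j ∧ ∀ x ∈ T (i + 1) j, m ≤ x}

/-- `exv lam mu T i` = excess of row `i`: the sum over the boxes of row `i` of
(cardinality of the filling minus one). -/
def exv (lam mu : ℕ → ℕ) (T : ℕ → ℕ → Finset ℕ) (i : ℕ) : ℕ :=
  ∑ j ∈ Finset.Ico (mu i) (lam i), ((T i j).card - 1)

/-! ### Two-letter fillings (letters `a` and `a+1`) and descent resolution -/

/-- Column `j` of the filling `S` contains the letter `x` somewhere. -/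
def ColHas (S : ℕ → ℕ → Finset ℕ) (j x : ℕ) : Prop := ∃ r, x ∈ S r j

/-- Column `j` is `a`-pure: it contains the letter `a` but not the letter `a+1`. -/
def ColPureA (a : ℕ) (S : ℕ → ℕ → Finset ℕ) (j : ℕ) : Prop :=
  ColHas S j a ∧ ¬ ColHas S j (a + 1)

/-- Column `j` is `(a+1)`-pure: it contains the letter `a+1` but not the letter `a`. -/
def ColPureB (a : ℕ) (S : ℕ → ℕ → Finset ℕ) (j : ℕ) : Prop :=
  ColHas S j (a + 1) ∧ ¬ ColHas S j a

/-- Column `j` is mixed: it contains both letters `a` and `a+1`. -/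
def ColMixed (a : ℕ) (S : ℕ → ℕ → Finset ℕ) (j : ℕ) : Prop :=
  ColHas S j a ∧ ColHas S j (a + 1)

/-- `sep a S j`: the smallest row index `r` with `a+1 ∈ S r j` (the transition row of a
mixed column). -/
noncomputable def sep (a : ℕ) (S : ℕ → ℕ → Finset ℕ) (j : ℕ) : ℕ :=
  sInf {r : ℕ | a + 1 ∈ S r j}

/-- `botA a S j`: the largest row index `r` with `a ∈ S r j` (the bottom-most box of
column `j` containing the letter `a`). -/
noncomputable def botA (a : ℕ) (S : ℕ → ℕ → Finset ℕ) (j : ℕ) : ℕ :=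
  sSup {r : ℕ | a ∈ S r j}

/-- `k` is a descent of `S`: in some row, a box whose maximum is `a+1` lies immediately
to the left of a box whose minimum is `a`. -/
def Descent (a : ℕ) (S : ℕ → ℕ → Finset ℕ) (k : ℕ) : Prop :=
  ∃ r, a + 1 ∈ S r k ∧ a ∈ S r (k + 1)

/-- The flip map: each entry of every `a`-pure column is replaced by `{a+1}`, each entry
of every `(a+1)`-pure column is replaced by `{a}`, and mixed columns stay unchanged. -/
noncomputable def flipT (a : ℕ) (S : ℕ → ℕ → Finset ℕ) : ℕ → ℕ → Finset ℕ :=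
  fun r j =>
    if ColPureA a S j then (S r j).image (fun _ => a + 1)
    else if ColPureB a S j then (S r j).image (fun _ => a)
    else S r j

/-- The descent-resolution operation `res_k` at columns `k, k+1`, implementing the
(M1), (2M) and (21) moves (with `a, a+1` playing the roles of `1, 2`). -/
noncomputable def resFun (a : ℕ) (S : ℕ → ℕ → Finset ℕ) (k : ℕ) : ℕ → ℕ → Finset ℕ :=
  fun r j =>
    if ColMixed a S k ∧ ColPureA a S (k + 1) then
      -- (M1): the transition row is `sep a S k`, the transition entry is `S (sep a S k) k`.
      (if j = k then (S r j).image (fun _ => a)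
       else if j = k + 1 then
         (if (S r j).Nonempty then
            (if r < sep a S k then {a}
             else if r = sep a S k then S r k
             else {a + 1})
          else ∅)
       else S r j)
    else if ColPureB a S k ∧ ColMixed a S (k + 1) then
      -- (2M): the transition row is `botA a S (k+1)`, the transition entry is
      -- `S (botA a S (k+1)) (k+1)`.
      (if j = k then
         (if (S r j).Nonempty then
            (if r < botA a S (k + 1) then {a}
             else if r = botA a S (k + 1) then S r (k + 1)
             else {a + 1})
          else ∅)
       else if j = k + 1 then (S r j).image (fun _ => a + 1)
       else S r j)
    else if ColPureB a S k ∧ ColPureA a S (k + 1) then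
      -- (21): the two columns swap purities.
      (if j = k then (S r j).image (fun _ => a)
       else if j = k + 1 then (S r j).image (fun _ => a + 1)
       else S r j)
    else S r j

/-- One descent-resolution step: `ResStep a S S'` holds when `S' = res_k S` for some
descent `k` of `S`. -/
def ResStep (a : ℕ) (S S' : ℕ → ℕ → Finset ℕ) : Prop :=
  ∃ k, Descent a S k ∧ S' = resFun a S k

/-! ### Crystal operators on set-valued reverse plane partitions -/

/-- The restriction `T^{(i)}` of a filling to the letters `i` and `i+1`: each box keeps
its intersection with `{i, i+1}`. -/
def restrictTwo (i : ℕ) (T : ℕ → ℕ → Finset ℕ) : ℕ → ℕ → Finset ℕ :=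
  fun r j => (T r j).filter (fun x => x = i ∨ x = i + 1)

/-- The complement of `T^{(i)}` inside `T`: each box keeps its letters other than
`i` and `i+1`. -/
def eraseTwo (i : ℕ) (T : ℕ → ℕ → Finset ℕ) : ℕ → ℕ → Finset ℕ :=
  fun r j => (T r j).filter (fun x => ¬ (x = i ∨ x = i + 1))

/-- Recombine a filling `T` with a new `{i, i+1}`-part `S`. -/
def mergeTwo (i : ℕ) (T S : ℕ → ℕ → Finset ℕ) : ℕ → ℕ → Finset ℕ :=
  fun r j => eraseTwo i T r j ∪ S r j

/-- In column `A`, replace every letter `i+1` by `i`. -/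
def raiseCol (i A : ℕ) (S : ℕ → ℕ → Finset ℕ) : ℕ → ℕ → Finset ℕ :=
  fun r j => if j = A then (S r j).image (fun x => if x = i + 1 then i else x) else S r j

/-- In column `A`, replace every letter `i` by `i+1`. -/
def lowerCol (i A : ℕ) (S : ℕ → ℕ → Finset ℕ) : ℕ → ℕ → Finset ℕ :=
  fun r j => if j = A then (S r j).image (fun x => if x = i then i + 1 else x) else S r j

/-- Suffix statistic of the `i`-signature: the number of `(i+1)`-pure columns `≥ p` minus
the number of `i`-pure columns `≥ p` (of `T^{(i)}`). -/
noncomputable def fsuffix (i : ℕ) (T : ℕ → ℕ → Finset ℕ) (p : ℕ) : ℤ :=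
  (Set.ncard {j : ℕ | p ≤ j ∧ ColPureB i (restrictTwo i T) j} : ℤ) -
  (Set.ncard {j : ℕ | p ≤ j ∧ ColPureA i (restrictTwo i T) j} : ℤ)

/-- Prefix statistic of the `i`-signature: the number of `i`-pure columns `≤ p` minus the
number of `(i+1)`-pure columns `≤ p` (of `T^{(i)}`). -/
noncomputable def gprefix (i : ℕ) (T : ℕ → ℕ → Finset ℕ) (p : ℕ) : ℤ :=
  (Set.ncard {j : ℕ | j ≤ p ∧ ColPureA i (restrictTwo i T) j} : ℤ) -
  (Set.ncard {j : ℕ | j ≤ p ∧ ColPureB i (restrictTwo i T) j} : ℤ)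

/-- Column `A` carries the leftmost uncancelled `−` of the reduced `i`-signature of `T`:
it is `(i+1)`-pure and is the largest maximizer of the suffix statistic. -/
def LeftmostUnpairedMinus (i : ℕ) (T : ℕ → ℕ → Finset ℕ) (A : ℕ) : Prop :=
  ColPureB i (restrictTwo i T) A ∧
  (∀ p, fsuffix i T p ≤ fsuffix i T A) ∧
  (∀ p, A < p → fsuffix i T p < fsuffix i T A)

/-- Column `A` carries the rightmost uncancelled `+` of the reduced `i`-signature of `T`:
it is `i`-pure and is the smallest maximizer of the prefix statistic. -/
def RightmostUnpairedPlus (i : ℕ) (T : ℕ → ℕ → Finset ℕ) (A : ℕ) : Prop :=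
  ColPureA i (restrictTwo i T) A ∧
  (∀ p, gprefix i T p ≤ gprefix i T A) ∧
  (∀ p, p < A → gprefix i T p < gprefix i T A)

/-- `ERel i T T'` : `T'` is obtained from `T` by the raising operator `e_i`: change all
`(i+1)`'s to `i`'s in the column of the leftmost uncancelled `−`, run the
descent-resolution algorithm on the `{i, i+1}`-part until no descent remains, and merge
the result back into `T`. -/
def ERel (i : ℕ) (T T' : ℕ → ℕ → Finset ℕ) : Prop :=
  ∃ A S', LeftmostUnpairedMinus i T A ∧
    Relation.ReflTransGen (ResStep i) (raiseCol i A (restrictTwo i T)) S' ∧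
    (∀ k, ¬ Descent i S' k) ∧
    T' = mergeTwo i T S'

/-- `FRel i T T'` : `T'` is obtained from `T` by the lowering operator `f_i`. -/
def FRel (i : ℕ) (T T' : ℕ → ℕ → Finset ℕ) : Prop :=
  ∃ A S', RightmostUnpairedPlus i T A ∧
    Relation.ReflTransGen (ResStep i) (lowerCol i A (restrictTwo i T)) S' ∧
    (∀ k, ¬ Descent i S' k) ∧
    T' = mergeTwo i T S'

/-- The raising crystal operator `e_i` (with value `none` playing the role of `0`). -/
noncomputable def eOp (i : ℕ) (T : ℕ → ℕ → Finset ℕ) : Option (ℕ → ℕ → Finset ℕ) :=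
  if h : ∃ T', ERel i T T' then some h.choose else none

/-- The lowering crystal operator `f_i` (with value `none` playing the role of `0`). -/
noncomputable def fOp (i : ℕ) (T : ℕ → ℕ → Finset ℕ) : Option (ℕ → ℕ → Finset ℕ) :=
  if h : ∃ T', FRel i T T' then some h.choose else none

/-! ### Reading words -/

/-- The contribution of row `r` to the reading word of `T` (columns bounded by `C`; empty
boxes are skipped). First the non-pivot entries are read from right to left, within each
box from largest to smallest; then the pivots (minima of boxes) are read from left to
right, omitting every pivot equal to the maximum entry of the (nonempty) box directly
above it. -/
noncomputable def rowRead (C : ℕ) (T : ℕ → ℕ → Finset ℕ) (r : ℕ) : List ℕ :=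
  (((List.range C).reverse).flatMap
      (fun j => ((T r j).sort (· ≤ ·)).tail.reverse)) ++
  ((List.range C).filterMap
      (fun j =>
        if h : (T r j).Nonempty then
          (if r ≠ 0 ∧ (T r j).min' h ∈ T (r - 1) j ∧
              (∀ x ∈ T (r - 1) j, x ≤ (T r j).min' h)
           then none else some ((T r j).min' h))
        else none))

/-- The reading word of `T`: rows are read from bottom (row `R - 1`) to top (row `0`). -/
noncomputable def readWord (R C : ℕ) (T : ℕ → ℕ → Finset ℕ) : List ℕ :=
  ((List.range R).reverse).flatMap (fun r => rowRead C T r)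

/-- The height vector of `T`: the sequence of (0-indexed) row indices of the letters of
the reading word. -/
noncomputable def heightWord (R C : ℕ) (T : ℕ → ℕ → Finset ℕ) : List ℕ :=
  ((List.range R).reverse).flatMap (fun r => (rowRead C T r).map (fun _ => r))

/-- A word is a reverse lattice (Yamanouchi) word if every suffix contains at least as
many `a`'s as `b`'s whenever `a < b` (for positive letters). -/
def IsReverseLatticeWord (w : List ℕ) : Prop :=
  ∀ k a b, 1 ≤ a → a < b → (w.drop k).count b ≤ (w.drop k).count a

/-!
The operator `e_i` vanishes exactly when the reduced `i`-signature has no `-`, because descent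
resolution always terminates: a column with letters `a`, `a + 1` is determined by its shape and the
height at which it passes from `a` to `a + 1`, and each of the rules (M1), (2M), (21) merely
exchanges these heights between two adjacent columns, putting the larger one on the left.
An uncancelled `-` in turn amounts to a suffix of the `i`-signature with more `-` than `+`.

A letter is read once from each column containing it, at its topmost occurrence. If a suffix of the
reading word contains a letter `i + 1` from column `p`, it also contains the letters `i` and `i + 1`
of all columns to the right of `p`. Columns with both letters in the suffix contribute equally to
both counts. If the suffix has more `i + 1` than `i`, let `p` be the first column that contributes
only `i + 1`; then the signature has more `-` than `+` from `p` onwards. Conversely, given such an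
`(i + 1)`-pure column `p`, the suffix starting with its letter `i + 1` contains no `i` from columns
to the left of `p`, and hence has more `i + 1` than `i`.
-/

/-- The set of nonempty boxes `(r, j)` of a filling. -/
def occupied (T : ℕ → ℕ → Finset ℕ) : Set (ℕ × ℕ) := {p | (T p.1 p.2).Nonempty}

/-- A filling of an order-convex set of boxes inside the `R × C` rectangle whose entries weakly
increase along the product order. Unlike `IsSVRPP`, the notion does not mention the partitions,
and it is inherited by the restriction to two letters. -/
structure IsSkewFilling (R C : ℕ) (T : ℕ → ℕ → Finset ℕ) : Prop where
  ordConnected : (occupied T).OrdConnected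
  subset : occupied T ⊆ Set.Iio R ×ˢ Set.Iio C
  le_of_lt {p q : ℕ × ℕ} : p < q → FinsetLE (T p.1 p.2) (T q.1 q.2)

theorem finsetLE_of_covBy {T : ℕ → ℕ → Finset ℕ} (hT : (occupied T).OrdConnected)
    (hcov : ∀ p ∈ occupied T, ∀ q ∈ occupied T, p ⋖ q → FinsetLE (T p.1 p.2) (T q.1 q.2))
    {p q : ℕ × ℕ} (hpq : p < q) : FinsetLE (T p.1 p.2) (T q.1 q.2) := by
  induction q using WellFoundedLT.induction with
  | ind q ih =>
    intro x hx y hy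
    obtain ⟨m, hpm, hmq⟩ := exists_le_covBy_of_lt hpq
    obtain ⟨z, hz⟩ : m ∈ occupied T := hT.out ⟨x, hx⟩ ⟨y, hy⟩ ⟨hpm, hmq.le⟩
    have hzy : z ≤ y := hcov m ⟨z, hz⟩ q ⟨y, hy⟩ hmq z hz y hy
    rcases hpm.eq_or_lt with rfl | hpm
    · exact hcov p ⟨x, hx⟩ q ⟨y, hy⟩ hmq x hx y hy
    · exact (ih m hmq.lt hpm x hx z hz).trans hzy

theorem IsSVRPP.mem_occupied_iff {lam mu : ℕ → ℕ} {T : ℕ → ℕ → Finset ℕ} (hT : IsSVRPP lam mu T)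
    {p : ℕ × ℕ} : p ∈ occupied T ↔ InShape lam mu p.1 p.2 :=
  ⟨fun h => by_contra fun hp => h.ne_empty (hT.1 _ _ hp), hT.2.1 _ _⟩

theorem IsSVRPP.isSkewFilling {lam mu : ℕ → ℕ} {T : ℕ → ℕ → Finset ℕ} {R C : ℕ}
    (hT : IsSVRPP lam mu T) (hlam : Antitone lam) (hmu : Antitone mu)
    (hR : ∀ r, R ≤ r → lam r = 0) (hC : ∀ r, lam r ≤ C) : IsSkewFilling R C T := by
  have hconv : (occupied T).OrdConnected := by
    refine ⟨fun p hp q hq m hm => ?_⟩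
    rw [hT.mem_occupied_iff] at hp hq ⊢
    exact ⟨(hmu hm.1.1).trans (hp.1.trans hm.1.2), hm.2.2.trans_lt (hq.2.trans_le (hlam hm.2.1))⟩
  refine ⟨hconv, fun p hp => ?_, finsetLE_of_covBy hconv ?_⟩
  · have hp' : p.2 < lam p.1 := (hT.mem_occupied_iff.1 hp).2
    refine ⟨?_, hp'.trans_le (hC p.1)⟩
    by_contra hrow
    rw [hR p.1 (not_lt.1 hrow)] at hp'
    exact absurd hp' (Nat.not_lt_zero _)
  · rintro ⟨r, j⟩ hp ⟨r', j'⟩ hq hpq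
    rw [hT.mem_occupied_iff] at hp hq
    rcases Prod.mk_covBy_mk_iff.1 hpq with ⟨hr, rfl⟩ | ⟨hj, rfl⟩
    · obtain rfl := Nat.covBy_iff_add_one_eq.1 hr
      exact hT.2.2.2.2 r j hp hq
    · obtain rfl := Nat.covBy_iff_add_one_eq.1 hj
      exact hT.2.2.2.1 r j hp hq

namespace IsSkewFilling

variable {R C : ℕ} {T : ℕ → ℕ → Finset ℕ}

theorem row_lt (hT : IsSkewFilling R C T) {x r j : ℕ} (hx : x ∈ T r j) : r < R :=
  (hT.subset (a := (r, j)) ⟨x, hx⟩).1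

theorem col_lt (hT : IsSkewFilling R C T) {x r j : ℕ} (hx : x ∈ T r j) : j < C :=
  (hT.subset (a := (r, j)) ⟨x, hx⟩).2

theorem le_of_lt_of_le (hT : IsSkewFilling R C T) {x y r r' j j' : ℕ} (hr : r < r') (hj : j ≤ j')
    (hx : x ∈ T r j) (hy : y ∈ T r' j') : x ≤ y :=
  hT.le_of_lt (Prod.mk_lt_mk_of_lt_of_le hr hj) x hx y hy

theorem le_of_le_of_lt (hT : IsSkewFilling R C T) {x y r r' j j' : ℕ} (hr : r ≤ r') (hj : j < j')
    (hx : x ∈ T r j) (hy : y ∈ T r' j') : x ≤ y :=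
  hT.le_of_lt (Prod.mk_lt_mk_of_le_of_lt hr hj) x hx y hy

theorem exists_mem_between (hT : IsSkewFilling R C T) {x y r s r' j k j' : ℕ}
    (hrs : r ≤ s) (hsr : s ≤ r') (hjk : j ≤ k) (hkj : k ≤ j') (hxy : x ≤ y)
    (hx : x ∈ T r j) (hy : y ∈ T r' j') : ∃ z ∈ T s k, x ≤ z ∧ z ≤ y := by
  have hpm : (r, j) ≤ (s, k) := ⟨hrs, hjk⟩
  have hmq : (s, k) ≤ (r', j') := ⟨hsr, hkj⟩
  obtain ⟨z, hz⟩ : (s, k) ∈ occupied T := hT.ordConnected.out ⟨x, hx⟩ ⟨y, hy⟩ ⟨hpm, hmq⟩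
  rcases hpm.eq_or_lt with heq | hpm
  · rw [Prod.mk.injEq] at heq
    exact ⟨x, heq.1 ▸ heq.2 ▸ hx, le_rfl, hxy⟩
  rcases hmq.eq_or_lt with heq | hmq
  · rw [Prod.mk.injEq] at heq
    exact ⟨y, heq.1 ▸ heq.2 ▸ hy, hxy, le_rfl⟩
  exact ⟨z, hz, hT.le_of_lt hpm x hx z hz, hT.le_of_lt hmq z hz y hy⟩

theorem mem_of_le_of_le (hT : IsSkewFilling R C T) {v r s r' j : ℕ} (hrs : r ≤ s) (hsr : s ≤ r')
    (hr : v ∈ T r j) (hr' : v ∈ T r' j) : v ∈ T s j := by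
  obtain ⟨z, hz, hvz, hzv⟩ := hT.exists_mem_between hrs hsr le_rfl le_rfl le_rfl hr hr'
  rwa [le_antisymm hzv hvz] at hz

end IsSkewFilling

section RestrictTwo

variable {i : ℕ} {T : ℕ → ℕ → Finset ℕ}

theorem mem_restrictTwo {r j x : ℕ} :
    x ∈ restrictTwo i T r j ↔ x ∈ T r j ∧ (x = i ∨ x = i + 1) :=
  Finset.mem_filter

theorem colHas_restrictTwo {j x : ℕ} (hx : x = i ∨ x = i + 1) :
    ColHas (restrictTwo i T) j x ↔ ColHas T j x :=
  exists_congr fun _ => mem_restrictTwo.trans (and_iff_left hx)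

theorem colPureA_restrictTwo {j : ℕ} :
    ColPureA i (restrictTwo i T) j ↔ ColHas T j i ∧ ¬ ColHas T j (i + 1) :=
  and_congr (colHas_restrictTwo (.inl rfl)) (not_congr (colHas_restrictTwo (.inr rfl)))

theorem colPureB_restrictTwo {j : ℕ} :
    ColPureB i (restrictTwo i T) j ↔ ColHas T j (i + 1) ∧ ¬ ColHas T j i :=
  and_congr (colHas_restrictTwo (.inr rfl)) (not_congr (colHas_restrictTwo (.inl rfl)))

theorem isSkewFilling_restrictTwo {R C : ℕ} (hT : IsSkewFilling R C T) (i : ℕ) :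
    IsSkewFilling R C (restrictTwo i T) where
  ordConnected := by
    refine ⟨fun p ⟨x, hx⟩ q ⟨y, hy⟩ m hm => ?_⟩
    rw [mem_restrictTwo] at hx hy
    rcases le_or_gt x y with hxy | hyx
    · obtain ⟨z, hz, hxz, hzy⟩ :=
        hT.exists_mem_between hm.1.1 hm.2.1 hm.1.2 hm.2.2 hxy hx.1 hy.1
      exact ⟨z, mem_restrictTwo.2 ⟨hz, by lia⟩⟩
    · obtain rfl : p = q := by
        by_contra hne
        exact hyx.not_ge (hT.le_of_lt ((hm.1.trans hm.2).lt_of_ne hne) x hx.1 y hy.1)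
      obtain rfl := le_antisymm hm.1 hm.2
      exact ⟨x, mem_restrictTwo.2 hx⟩
  subset := fun _ ⟨x, hx⟩ => hT.subset ⟨x, (mem_restrictTwo.1 hx).1⟩
  le_of_lt hpq x hx y hy :=
    hT.le_of_lt hpq x (mem_restrictTwo.1 hx).1 y (mem_restrictTwo.1 hy).1

end RestrictTwo

/-! ### Descent resolution -/

/-- The box in row `r` of a column with letters `a` and `a + 1` whose threshold is `τ`: the letter
`a` occurs exactly in the rows `r` with `2 * r < τ`, and `a + 1` in those with `τ ≤ 2 * r + 1`. An
odd threshold `2 * r + 1` thus puts both letters into row `r`. -/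
def thresholdBox (a τ r : ℕ) : Finset ℕ :=
  if 2 * r + 1 < τ then {a} else if 2 * r + 1 = τ then {a, a + 1} else {a + 1}

/-- The two-letter filling of the boxes in `D` whose column `j` has threshold `t j`. -/
noncomputable def thresholdFilling (a : ℕ) (D : Set (ℕ × ℕ)) (t : ℕ → ℕ) : ℕ → ℕ → Finset ℕ :=
  fun r j => if (r, j) ∈ D then thresholdBox a (t j) r else ∅

/-- Threshold `τ` puts both letters into column `j` of the shape `D`. -/
def IsMixedThreshold (D : Set (ℕ × ℕ)) (j τ : ℕ) : Prop :=
  ∃ r s, (r, j) ∈ D ∧ (s, j) ∈ D ∧ 2 * r < τ ∧ τ ≤ 2 * s + 1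

/-- The threshold sequences that occur during descent resolution on the shape `D`, whose rows are
less than `R`: every column has threshold `0` (if `(a + 1)`-pure), threshold `2 * R` (if `a`-pure),
or contains both letters, and descents only arise from pure columns. -/
structure IsResolvable (R : ℕ) (D : Set (ℕ × ℕ)) (t : ℕ → ℕ) : Prop where
  pure_or_mixed (j : ℕ) : t j = 0 ∨ t j = 2 * R ∨ IsMixedThreshold D j (t j)
  sorted {j j' r : ℕ} : j < j' → t j ≠ 0 → t j' ≠ 2 * R → 2 * r < t j' → 2 * r + 1 < t j

section ThresholdBox

variable {a τ r : ℕ}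

theorem mem_thresholdBox {x : ℕ} :
    x ∈ thresholdBox a τ r ↔ x = a ∧ 2 * r < τ ∨ x = a + 1 ∧ τ ≤ 2 * r + 1 := by
  unfold thresholdBox
  split_ifs <;> simp <;> lia

theorem left_mem_thresholdBox : a ∈ thresholdBox a τ r ↔ 2 * r < τ := by
  simp [mem_thresholdBox]

theorem succ_mem_thresholdBox : a + 1 ∈ thresholdBox a τ r ↔ τ ≤ 2 * r + 1 := by
  simp [mem_thresholdBox]

theorem thresholdBox_nonempty : (thresholdBox a τ r).Nonempty := by
  rcases lt_or_ge (2 * r) τ with h | h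
  · exact ⟨a, left_mem_thresholdBox.2 h⟩
  · exact ⟨a + 1, succ_mem_thresholdBox.2 (by lia)⟩

theorem thresholdBox_zero : thresholdBox a 0 r = {a + 1} := by
  simp [thresholdBox]

theorem thresholdBox_two_mul {R : ℕ} (hr : r < R) : thresholdBox a (2 * R) r = {a} :=
  if_pos (by lia)

theorem ite_thresholdBox {s : ℕ} (h : 2 * s ≤ τ) (h' : τ ≤ 2 * s + 2) :
    (if r < s then {a} else if r = s then thresholdBox a τ r else {a + 1}) =
      thresholdBox a τ r := by
  ext x
  split_ifs <;> simp [mem_thresholdBox] <;> lia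

end ThresholdBox

section ThresholdFilling

variable {a R r j k : ℕ} {D : Set (ℕ × ℕ)} {t : ℕ → ℕ}

theorem left_mem_thresholdFilling :
    a ∈ thresholdFilling a D t r j ↔ (r, j) ∈ D ∧ 2 * r < t j := by
  unfold thresholdFilling
  split_ifs with h <;> simp [h, left_mem_thresholdBox]

theorem succ_mem_thresholdFilling :
    a + 1 ∈ thresholdFilling a D t r j ↔ (r, j) ∈ D ∧ t j ≤ 2 * r + 1 := by
  unfold thresholdFilling
  split_ifs with h <;> simp [h, succ_mem_thresholdBox]

theorem descent_thresholdFilling : Descent a (thresholdFilling a D t) k ↔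
    ∃ r, (r, k) ∈ D ∧ (r, k + 1) ∈ D ∧ t k ≤ 2 * r + 1 ∧ 2 * r < t (k + 1) := by
  simp only [Descent, left_mem_thresholdFilling, succ_mem_thresholdFilling]
  grind

theorem colPureB_thresholdFilling (hr : (r, j) ∈ D) (h : t j = 0) :
    ColPureB a (thresholdFilling a D t) j := by
  simp only [ColPureB, ColHas, left_mem_thresholdFilling, succ_mem_thresholdFilling, h]
  grind

theorem colPureA_thresholdFilling (hD : ∀ r, (r, j) ∈ D → r < R) (hr : (r, j) ∈ D)
    (h : t j = 2 * R) : ColPureA a (thresholdFilling a D t) j := by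
  simp only [ColPureA, ColHas, left_mem_thresholdFilling, succ_mem_thresholdFilling, h]
  grind

theorem colMixed_thresholdFilling (h : IsMixedThreshold D j (t j)) :
    ColMixed a (thresholdFilling a D t) j := by
  obtain ⟨r, s, hr, hs, hrt, hts⟩ := h
  exact ⟨⟨r, left_mem_thresholdFilling.2 ⟨hr, hrt⟩⟩, s, succ_mem_thresholdFilling.2 ⟨hs, hts⟩⟩

theorem image_const_thresholdFilling {b : ℕ} :
    (thresholdFilling a D t r j).image (fun _ => b) = if (r, j) ∈ D then {b} else ∅ := by
  unfold thresholdFilling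
  split_ifs
  · exact Finset.image_const thresholdBox_nonempty b
  · rfl

theorem thresholdFilling_nonempty : (thresholdFilling a D t r j).Nonempty ↔ (r, j) ∈ D := by
  unfold thresholdFilling
  split_ifs with h <;> simp [h, thresholdBox_nonempty]

namespace IsMixedThreshold

variable {τ : ℕ}

theorem mem_of_le (h : IsMixedThreshold D j τ) (hD : D.OrdConnected)
    (hr : τ ≤ 2 * r + 2) (hr' : 2 * r ≤ τ) : (r, j) ∈ D := by
  obtain ⟨r₁, r₂, h₁, h₂, h₁τ, hτ₂⟩ := h
  exact hD.out h₁ h₂ ⟨⟨by lia, le_rfl⟩, by lia, le_rfl⟩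

theorem sep_eq (h : IsMixedThreshold D j (t j)) (hD : D.OrdConnected) :
    sep a (thresholdFilling a D t) j = t j / 2 := by
  refine IsLeast.csInf_eq ⟨succ_mem_thresholdFilling.2 ⟨?_, by lia⟩, fun m hm => ?_⟩
  · exact h.mem_of_le hD (by lia) (by lia)
  · have := (succ_mem_thresholdFilling.1 hm).2
    lia

theorem botA_eq (h : IsMixedThreshold D j (t j)) (hD : D.OrdConnected) :
    botA a (thresholdFilling a D t) j = (t j - 1) / 2 := by
  obtain ⟨r, hr⟩ : ∃ r, 2 * r < t j := h.imp fun _ ⟨_, _, _, hr, _⟩ => hr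
  refine IsGreatest.csSup_eq ⟨left_mem_thresholdFilling.2 ⟨?_, by lia⟩, fun m hm => ?_⟩
  · exact h.mem_of_le hD (by lia) (by lia)
  · have := (left_mem_thresholdFilling.1 hm).2
    lia

end IsMixedThreshold

theorem resFun_thresholdFilling_M1 (hD : D.OrdConnected) (hDR : ∀ r j, (r, j) ∈ D → r < R)
    (hk : IsMixedThreshold D k (t k)) (hr : (r, k + 1) ∈ D) (hk' : t (k + 1) = 2 * R) :
    resFun a (thresholdFilling a D t) k = thresholdFilling a D (t ∘ Equiv.swap k (k + 1)) := by
  have hM1 : ColMixed a (thresholdFilling a D t) k ∧ ColPureA a (thresholdFilling a D t) (k + 1) :=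
    ⟨colMixed_thresholdFilling hk, colPureA_thresholdFilling (hDR · _) hr hk'⟩
  have hsep : (t k / 2, k) ∈ D := hk.mem_of_le hD (by lia) (by lia)
  funext r j
  simp only [resFun, if_pos hM1, hk.sep_eq hD, image_const_thresholdFilling,
    thresholdFilling_nonempty]
  rcases eq_or_ne j k with rfl | hjk
  · simp only [if_true, thresholdFilling, Function.comp_apply, Equiv.swap_apply_left, hk']
    exact ite_congr rfl (fun h => (thresholdBox_two_mul (hDR r j h)).symm) fun _ => rfl
  rcases eq_or_ne j (k + 1) with rfl | hjk'
  · simp only [if_neg hjk, if_true, thresholdFilling, Function.comp_apply, Equiv.swap_apply_right]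
    rw [← ite_thresholdBox (a := a) (τ := t k) (r := r) (s := t k / 2) (by lia) (by lia)]
    grind
  · simp only [if_neg hjk, if_neg hjk', thresholdFilling, Function.comp_apply,
      Equiv.swap_apply_of_ne_of_ne hjk hjk']

theorem resFun_thresholdFilling_2M (hD : D.OrdConnected) (hr : (r, k) ∈ D) (hk : t k = 0)
    (hk' : IsMixedThreshold D (k + 1) (t (k + 1))) :
    resFun a (thresholdFilling a D t) k = thresholdFilling a D (t ∘ Equiv.swap k (k + 1)) := by
  have h2M : ColPureB a (thresholdFilling a D t) k ∧ ColMixed a (thresholdFilling a D t) (k + 1) :=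
    ⟨colPureB_thresholdFilling hr hk, colMixed_thresholdFilling hk'⟩
  have hbot : ((t (k + 1) - 1) / 2, k + 1) ∈ D := hk'.mem_of_le hD (by lia) (by lia)
  funext r j
  simp only [resFun, if_neg fun h : ColMixed _ _ _ ∧ _ => h2M.1.2 h.1.1, if_pos h2M,
    hk'.botA_eq hD, image_const_thresholdFilling, thresholdFilling_nonempty]
  rcases eq_or_ne j k with rfl | hjk
  · simp only [if_true, thresholdFilling, Function.comp_apply, Equiv.swap_apply_left]
    rw [← ite_thresholdBox (a := a) (τ := t (j + 1)) (r := r) (s := (t (j + 1) - 1) / 2)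
      (by lia) (by lia)]
    grind
  rcases eq_or_ne j (k + 1) with rfl | hjk'
  · simp only [if_neg hjk, if_true, thresholdFilling, Function.comp_apply, Equiv.swap_apply_right,
      hk, thresholdBox_zero]
  · simp only [if_neg hjk, if_neg hjk', thresholdFilling, Function.comp_apply,
      Equiv.swap_apply_of_ne_of_ne hjk hjk']

theorem resFun_thresholdFilling_21 (hDR : ∀ r j, (r, j) ∈ D → r < R) (hr : (r, k) ∈ D)
    (hr' : (r, k + 1) ∈ D) (hk : t k = 0) (hk' : t (k + 1) = 2 * R) :
    resFun a (thresholdFilling a D t) k = thresholdFilling a D (t ∘ Equiv.swap k (k + 1)) := by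
  have h21 : ColPureB a (thresholdFilling a D t) k ∧ ColPureA a (thresholdFilling a D t) (k + 1) :=
    ⟨colPureB_thresholdFilling hr hk, colPureA_thresholdFilling (hDR · _) hr' hk'⟩
  funext r j
  simp only [resFun, if_neg fun h : ColMixed _ _ _ ∧ _ => h21.1.2 h.1.1,
    if_neg fun h : _ ∧ ColMixed _ _ _ => h21.2.2 h.2.2, if_pos h21, image_const_thresholdFilling]
  rcases eq_or_ne j k with rfl | hjk
  · simp only [if_true, thresholdFilling, Function.comp_apply, Equiv.swap_apply_left, hk']
    exact ite_congr rfl (fun h => (thresholdBox_two_mul (hDR r j h)).symm) fun _ => rfl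
  rcases eq_or_ne j (k + 1) with rfl | hjk'
  · simp only [if_neg hjk, if_true, thresholdFilling, Function.comp_apply, Equiv.swap_apply_right,
      hk, thresholdBox_zero]
  · simp only [if_neg hjk, if_neg hjk', thresholdFilling, Function.comp_apply,
      Equiv.swap_apply_of_ne_of_ne hjk hjk']

end ThresholdFilling

theorem swap_succ_lt_swap_succ {j j' k : ℕ} (h : j < j') (hne : ¬ (j = k ∧ j' = k + 1)) :
    Equiv.swap k (k + 1) j < Equiv.swap k (k + 1) j' := by
  simp only [Equiv.swap_apply_def]
  grind

theorem sum_mul_comp_swap_lt {C k : ℕ} {t : ℕ → ℕ} (hkC : k + 1 < C)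
    (hlt : t k < t (k + 1)) :
    ∑ j ∈ Finset.range C, j * (t ∘ Equiv.swap k (k + 1)) j < ∑ j ∈ Finset.range C, j * t j := by
  have hk : k ∈ (Finset.range C).erase (k + 1) := by simp; lia
  rw [← Finset.add_sum_erase _ _ (Finset.mem_range.2 hkC), ← Finset.add_sum_erase _ _ hk,
    ← Finset.add_sum_erase _ (fun j => j * t j) (Finset.mem_range.2 hkC),
    ← Finset.add_sum_erase _ (fun j => j * t j) hk]
  have hrest : ∑ j ∈ ((Finset.range C).erase (k + 1)).erase k,
      j * (t ∘ Equiv.swap k (k + 1)) j = ∑ j ∈ ((Finset.range C).erase (k + 1)).erase k, j * t j :=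
    Finset.sum_congr rfl fun j hj => by
      simp only [Finset.mem_erase] at hj
      rw [Function.comp_apply, Equiv.swap_apply_of_ne_of_ne hj.1 hj.2.1]
  rw [hrest]
  simp only [Function.comp_apply, Equiv.swap_apply_left, Equiv.swap_apply_right]
  lia

namespace IsResolvable

variable {a R C k : ℕ} {D : Set (ℕ × ℕ)} {t : ℕ → ℕ}

theorem eq_zero_or_eq_of_descent (ht : IsResolvable R D t)
    (hk : Descent a (thresholdFilling a D t) k) : t k = 0 ∨ t (k + 1) = 2 * R := by
  obtain ⟨r, -, -, hle, hlt⟩ := descent_thresholdFilling.1 hk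
  by_contra! hpure
  exact hle.not_gt (ht.sorted k.lt_succ_self hpure.1 hpure.2 hlt)

theorem resFun_eq (ht : IsResolvable R D t) (hD : D.OrdConnected)
    (hDR : ∀ r j, (r, j) ∈ D → r < R) (hk : Descent a (thresholdFilling a D t) k) :
    resFun a (thresholdFilling a D t) k = thresholdFilling a D (t ∘ Equiv.swap k (k + 1)) := by
  obtain ⟨r, hr, hr', hle, hlt⟩ := descent_thresholdFilling.1 hk
  have hrR : r < R := hDR r k hr
  have hk_cases := ht.pure_or_mixed k
  have hk'_cases := ht.pure_or_mixed (k + 1)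
  rcases ht.eq_zero_or_eq_of_descent hk with h0 | hR
  · rcases hk'_cases with h | hR | hmix
    · lia
    · exact resFun_thresholdFilling_21 hDR hr hr' h0 hR
    · exact resFun_thresholdFilling_2M hD hr h0 hmix
  · rcases hk_cases with h0 | h | hmix
    · exact resFun_thresholdFilling_21 hDR hr hr' h0 hR
    · lia
    · exact resFun_thresholdFilling_M1 hD hDR hmix hr' hR

theorem comp_swap (ht : IsResolvable R D t) (hD : D.OrdConnected)
    (hDR : ∀ r j, (r, j) ∈ D → r < R) (hk : Descent a (thresholdFilling a D t) k) :
    IsResolvable R D (t ∘ Equiv.swap k (k + 1)) := by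
  obtain ⟨m, hm, hm', hle, hlt⟩ := descent_thresholdFilling.1 hk
  constructor
  · intro j
    rcases eq_or_ne j k with rfl | hjk
    · rw [Function.comp_apply, Equiv.swap_apply_left]
      refine (ht.pure_or_mixed (j + 1)).imp_right (.imp_right fun ⟨_, s, _, hs, _, hts⟩ => ?_)
      exact ⟨m, s, hm, hD.out hm hs ⟨⟨by lia, le_rfl⟩, le_rfl, by lia⟩, hlt, hts⟩
    rcases eq_or_ne j (k + 1) with rfl | hjk'
    · rw [Function.comp_apply, Equiv.swap_apply_right]
      refine (ht.pure_or_mixed k).imp_right (.imp_right fun ⟨r, _, hr, _, hrt, _⟩ => ?_)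
      exact ⟨r, m, hD.out hr hm' ⟨⟨le_rfl, by lia⟩, by lia, le_rfl⟩, hm', hrt, hle⟩
    · rw [Function.comp_apply, Equiv.swap_apply_of_ne_of_ne hjk hjk']
      exact ht.pure_or_mixed j
  · intro j j' r hjj'
    by_cases hswap : j = k ∧ j' = k + 1
    · obtain ⟨rfl, rfl⟩ := hswap
      have hpure := ht.eq_zero_or_eq_of_descent hk
      have hmR : m < R := hDR m j hm
      simp only [Function.comp_apply, Equiv.swap_apply_left, Equiv.swap_apply_right]
      lia
    · exact ht.sorted (swap_succ_lt_swap_succ hjj' hswap)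

theorem exists_resolution (ht : IsResolvable R D t) (hD : D.OrdConnected)
    (hDRC : D ⊆ Set.Iio R ×ˢ Set.Iio C) :
    ∃ S', Relation.ReflTransGen (ResStep a) (thresholdFilling a D t) S' ∧
      ∀ k, ¬ Descent a S' k := by
  have hDR : ∀ r j, (r, j) ∈ D → r < R := fun _ _ h => (hDRC h).1
  -- A step moves the larger of two adjacent thresholds to the left, which decreases this sum.
  induction hN : ∑ j ∈ Finset.range C, j * t j using Nat.strong_induction_on generalizing t with
  | h N ih =>
    by_cases hdesc : ∃ k, Descent a (thresholdFilling a D t) k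
    · obtain ⟨k, hk⟩ := hdesc
      obtain ⟨r, -, hr', hle, hlt⟩ := descent_thresholdFilling.1 hk
      have htk : t k < t (k + 1) := by
        have hpure := ht.eq_zero_or_eq_of_descent hk
        lia
      obtain ⟨S', hsteps, hS'⟩ := ih _ (hN ▸ sum_mul_comp_swap_lt (hDRC hr').2 htk)
        (ht.comp_swap hD hDR hk) rfl
      exact ⟨S', .head ⟨k, hk, (ht.resFun_eq hD hDR hk).symm⟩ hsteps, hS'⟩
    · exact ⟨_, .refl, not_exists.1 hdesc⟩

end IsResolvable

section Threshold

variable {a R : ℕ} {c : ℕ → Finset ℕ}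

theorem eq_thresholdBox {τ r : ℕ} {s : Finset ℕ} (hletters : ∀ x ∈ s, x = a ∨ x = a + 1)
    (ha : a ∈ s ↔ 2 * r < τ) (hb : a + 1 ∈ s ↔ τ ≤ 2 * r + 1) : s = thresholdBox a τ r := by
  ext x
  rw [mem_thresholdBox, ← ha, ← hb]
  constructor
  · intro hx
    rcases hletters x hx with rfl | rfl
    exacts [.inl ⟨rfl, hx⟩, .inr ⟨rfl, hx⟩]
  · rintro (⟨rfl, hx⟩ | ⟨rfl, hx⟩) <;> exact hx

theorem exists_threshold_of_mem_of_succ_mem (hletters : ∀ r, ∀ x ∈ c r, x = a ∨ x = a + 1)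
    (hle : ∀ r r', a + 1 ∈ c r → a ∈ c r' → r' ≤ r) (ha : ∃ r, a ∈ c r) (hb : ∃ r, a + 1 ∈ c r) :
    ∃ τ, (∀ r, (c r).Nonempty → c r = thresholdBox a τ r) ∧
      ∃ r s, (c r).Nonempty ∧ (c s).Nonempty ∧ 2 * r < τ ∧ τ ≤ 2 * s + 1 := by
  obtain ⟨r₀, hr₀⟩ := ha
  obtain ⟨s, hs, hmin⟩ : ∃ s, a + 1 ∈ c s ∧ ∀ r, a + 1 ∈ c r → s ≤ r :=
    ⟨Nat.find hb, Nat.find_spec hb, fun r => Nat.find_min' hb⟩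
  have hr₀s : r₀ ≤ s := hle s r₀ hs hr₀
  refine ⟨if a ∈ c s then 2 * s + 1 else 2 * s, fun r hr => ?_,
    r₀, s, ⟨a, hr₀⟩, ⟨a + 1, hs⟩, ?_⟩
  · have hor : a ∈ c r ∨ a + 1 ∈ c r := by
      obtain ⟨x, hx⟩ := hr
      rcases hletters r x hx with rfl | rfl
      exacts [.inl hx, .inr hx]
    have hrs := hle s r hs
    have hsr := hmin r
    rcases eq_or_ne r s with rfl | hne
    · apply eq_thresholdBox (hletters r) <;> split_ifs <;> simp_all
    · apply eq_thresholdBox (hletters r) <;> split_ifs <;> lia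
  · rcases eq_or_ne r₀ s with rfl | hne
    · simp [hr₀]
    · split_ifs <;> lia

theorem exists_threshold (hletters : ∀ r, ∀ x ∈ c r, x = a ∨ x = a + 1)
    (hR : ∀ r, (c r).Nonempty → r < R) (hle : ∀ r r', a + 1 ∈ c r → a ∈ c r' → r' ≤ r) :
    ∃ τ, (∀ r, (c r).Nonempty → c r = thresholdBox a τ r) ∧
      (τ = 0 ∨ τ = 2 * R ∨
        ∃ r s, (c r).Nonempty ∧ (c s).Nonempty ∧ 2 * r < τ ∧ τ ≤ 2 * s + 1) := by
  have heq_singleton {b : ℕ} (hb : ∀ r, ∀ x ∈ c r, x = b) (r : ℕ) (hr : (c r).Nonempty) :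
      c r = {b} :=
    Finset.eq_singleton_iff_nonempty_unique_mem.2 ⟨hr, hb r⟩
  by_cases ha : ∃ r, a ∈ c r
  · by_cases hb : ∃ r, a + 1 ∈ c r
    · obtain ⟨τ, hτ, hmix⟩ := exists_threshold_of_mem_of_succ_mem hletters hle ha hb
      exact ⟨τ, hτ, .inr (.inr hmix)⟩
    · refine ⟨2 * R, fun r hr => ?_, .inr (.inl rfl)⟩
      rw [thresholdBox_two_mul (hR r hr)]
      exact heq_singleton (fun r x hx => (hletters r x hx).resolve_right
        fun h => hb ⟨r, h ▸ hx⟩) r hr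
  · refine ⟨0, fun r hr => ?_, .inl rfl⟩
    rw [thresholdBox_zero]
    exact heq_singleton (fun r x hx => (hletters r x hx).resolve_left
      fun h => ha ⟨r, h ▸ hx⟩) r hr

end Threshold

theorem IsSkewFilling.exists_isResolvable {R C : ℕ} {T : ℕ → ℕ → Finset ℕ}
    (hT : IsSkewFilling R C T) (i : ℕ) :
    ∃ t, IsResolvable R (occupied (restrictTwo i T)) t ∧
      restrictTwo i T = thresholdFilling i (occupied (restrictTwo i T)) t := by
  have hT' := isSkewFilling_restrictTwo hT i
  set S := restrictTwo i T
  have hcol (j : ℕ) := exists_threshold (a := i) (R := R) (c := fun r => S r j)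
    (fun r x hx => (mem_restrictTwo.1 hx).2) (fun r ⟨x, hx⟩ => hT'.row_lt hx) (by
      intro r r' hr hr'
      by_contra! hlt
      exact absurd (hT'.le_of_lt_of_le hlt le_rfl hr hr') (by lia))
  choose t hbox ht using hcol
  have hfill : S = thresholdFilling i (occupied S) t := by
    funext r j
    by_cases hrj : (r, j) ∈ occupied S
    · exact (hbox j r hrj).trans (if_pos hrj).symm
    · exact (Finset.not_nonempty_iff_eq_empty.1 hrj).trans (if_neg hrj).symm
  refine ⟨t, ⟨ht, fun {j j' r} hjj' hj hj' hr => ?_⟩, hfill⟩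
  obtain ⟨r', s', hr', hs', hrt', hts'⟩ : IsMixedThreshold (occupied S) j' (t j') :=
    ((ht j').resolve_left (by lia)).resolve_left hj'
  rcases (ht j).resolve_left hj with hR | (hmix : IsMixedThreshold (occupied S) j (t j))
  · have : s' < R := (hT'.subset hs').1
    lia
  by_contra! hlt
  have hsucc : i + 1 ∈ S (t j / 2) j := by
    rw [hfill, succ_mem_thresholdFilling]
    exact ⟨hmix.mem_of_le hT'.ordConnected (by lia) (by lia), by lia⟩
  have hleft : i ∈ S ((t j' - 1) / 2) j' := by
    rw [hfill, left_mem_thresholdFilling]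
    refine ⟨IsMixedThreshold.mem_of_le ⟨r', s', hr', hs', hrt', hts'⟩ hT'.ordConnected ?_ ?_, ?_⟩
    all_goals lia
  exact absurd (hT'.le_of_le_of_lt (by lia) hjj' hsucc hleft) (by lia)

theorem raiseCol_thresholdFilling {i A R : ℕ} {D : Set (ℕ × ℕ)} {t : ℕ → ℕ}
    (hDR : ∀ r j, (r, j) ∈ D → r < R) :
    raiseCol i A (thresholdFilling i D t) = thresholdFilling i D (Function.update t A (2 * R)) := by
  funext r j
  rcases eq_or_ne j A with rfl | hj
  · have himage : (thresholdFilling i D t r j).image (fun x => if x = i + 1 then i else x) =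
        (thresholdFilling i D t r j).image fun _ => i := by
      refine Finset.image_congr fun x hx => ?_
      unfold thresholdFilling at hx
      split_ifs at hx
      · have := mem_thresholdBox.1 hx
        grind only
      · exact absurd hx (Finset.notMem_empty x)
    simp only [raiseCol, if_true, himage, image_const_thresholdFilling]
    simp only [thresholdFilling, Function.update_self]
    exact ite_congr rfl (fun h => (thresholdBox_two_mul (hDR r j h)).symm) fun _ => rfl
  · simp only [raiseCol, if_neg hj, thresholdFilling, Function.update_of_ne hj]

theorem IsResolvable.le_two_mul {R : ℕ} {D : Set (ℕ × ℕ)} {t : ℕ → ℕ} (ht : IsResolvable R D t)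
    (hDR : ∀ r j, (r, j) ∈ D → r < R) (j : ℕ) : t j ≤ 2 * R := by
  rcases ht.pure_or_mixed j with h | h | ⟨_, s, _, hs, _, hts⟩
  · lia
  · exact h.le
  · have := hDR s j hs
    lia

theorem IsResolvable.update_two_mul {R A : ℕ} {D : Set (ℕ × ℕ)} {t : ℕ → ℕ}
    (ht : IsResolvable R D t) (hDR : ∀ r j, (r, j) ∈ D → r < R) :
    IsResolvable R D (Function.update t A (2 * R)) where
  pure_or_mixed j := by
    rcases eq_or_ne j A with rfl | hj
    · simp
    · simpa only [Function.update_of_ne hj] using ht.pure_or_mixed j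
  sorted {j j' r} hjj' := by
    have ht' : t j' ≤ 2 * R := ht.le_two_mul hDR j'
    have hsorted := ht.sorted (r := r) hjj'
    simp only [Function.update_apply]
    split_ifs <;> lia

theorem IsSkewFilling.eOp_eq_none_iff {R C i : ℕ} {T : ℕ → ℕ → Finset ℕ}
    (hT : IsSkewFilling R C T) : eOp i T = none ↔ ¬ ∃ A, LeftmostUnpairedMinus i T A := by
  have heOp : eOp i T = none ↔ ¬ ∃ T', ERel i T T' := by
    unfold eOp
    split_ifs with h <;> simp [h]
  rw [heOp, not_iff_not]
  refine ⟨fun ⟨_, A, _, hA, _⟩ => ⟨A, hA⟩, fun ⟨A, hA⟩ => ?_⟩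
  have hT' := isSkewFilling_restrictTwo hT i
  have hDR : ∀ r j, (r, j) ∈ occupied (restrictTwo i T) → r < R :=
    fun _ _ h => (hT'.subset h).1
  obtain ⟨t, ht, hfill⟩ := hT.exists_isResolvable i
  obtain ⟨S', hsteps, hS'⟩ :=
    (ht.update_two_mul (A := A) hDR).exists_resolution (a := i) hT'.ordConnected hT'.subset
  rw [← raiseCol_thresholdFilling hDR, ← hfill] at hsteps
  exact ⟨_, A, S', hA, hsteps, hS', rfl⟩

/-! ### The signature -/

namespace IsSkewFilling

variable {R C : ℕ} {T : ℕ → ℕ → Finset ℕ}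

theorem fsuffix_eq_zero (hT : IsSkewFilling R C T) (i : ℕ) {p : ℕ} (hp : C ≤ p) :
    fsuffix i T p = 0 := by
  have hempty {v j : ℕ} (hj : p ≤ j) : ¬ ColHas T j v :=
    fun ⟨_, hx⟩ => (hT.col_lt hx).not_ge (hp.trans hj)
  have hB : {j | p ≤ j ∧ ColPureB i (restrictTwo i T) j} = ∅ :=
    Set.eq_empty_of_forall_notMem fun j ⟨hj, h⟩ => hempty hj (colPureB_restrictTwo.1 h).1
  have hA : {j | p ≤ j ∧ ColPureA i (restrictTwo i T) j} = ∅ :=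
    Set.eq_empty_of_forall_notMem fun j ⟨hj, h⟩ => hempty hj (colPureA_restrictTwo.1 h).1
  simp [fsuffix, hA, hB]

theorem finite_colHas (hT : IsSkewFilling R C T) (v : ℕ) : {j | ColHas T j v}.Finite :=
  (Set.finite_Iio C).subset fun _ ⟨_, hx⟩ => hT.col_lt hx

theorem finite_colPureA (hT : IsSkewFilling R C T) (i p : ℕ) :
    {j | p ≤ j ∧ ColPureA i (restrictTwo i T) j}.Finite :=
  (hT.finite_colHas i).subset fun _ h => (colPureA_restrictTwo.1 h.2).1

theorem finite_colPureB (hT : IsSkewFilling R C T) (i p : ℕ) :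
    {j | p ≤ j ∧ ColPureB i (restrictTwo i T) j}.Finite :=
  (hT.finite_colHas (i + 1)).subset fun _ h => (colPureB_restrictTwo.1 h.2).1

theorem colPureB_of_fsuffix_succ_lt (hT : IsSkewFilling R C T) {i A : ℕ}
    (h : fsuffix i T (A + 1) < fsuffix i T A) : ColPureB i (restrictTwo i T) A := by
  by_contra hA
  refine h.not_ge (sub_le_sub ?_ ?_)
  · refine Nat.cast_le.2 (Set.ncard_le_ncard (fun j hj => ⟨?_, hj.2⟩) (hT.finite_colPureB i _))
    exact hj.1.lt_of_ne fun hAj => hA (hAj ▸ hj.2)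
  · exact Nat.cast_le.2 (Set.ncard_le_ncard (fun j hj => ⟨A.le_succ.trans hj.1, hj.2⟩)
      (hT.finite_colPureA i _))

theorem exists_leftmostUnpairedMinus (hT : IsSkewFilling R C T) {i p : ℕ}
    (hp : 0 < fsuffix i T p) : ∃ A, LeftmostUnpairedMinus i T A := by
  have hlt_C {q : ℕ} (hq : 0 < fsuffix i T q) : q < C :=
    not_le.1 fun hC => hq.ne' (hT.fsuffix_eq_zero i hC)
  obtain ⟨A, -, hA⟩ := (Finset.range C).exists_max_image (fun q => toLex (fsuffix i T q, q))
    ⟨p, Finset.mem_range.2 (hlt_C hp)⟩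
  simp only [Finset.mem_range, Prod.Lex.toLex_le_toLex] at hA
  have hmax {q : ℕ} (hq : 0 < fsuffix i T q) :
      fsuffix i T q < fsuffix i T A ∨ fsuffix i T q = fsuffix i T A ∧ q ≤ A :=
    hA q (hlt_C hq)
  have hpos : 0 < fsuffix i T A := by
    have := hmax hp
    lia
  have hle (q : ℕ) : fsuffix i T q ≤ fsuffix i T A := by
    by_contra! hlt
    have := hmax (hpos.trans hlt)
    lia
  have hlt (q : ℕ) (hq : A < q) : fsuffix i T q < fsuffix i T A := by
    by_contra! hge
    have := hmax (hpos.trans_le hge)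
    lia
  exact ⟨A, hT.colPureB_of_fsuffix_succ_lt (hlt _ A.lt_succ_self), hle, hlt⟩

theorem fsuffix_pos (hT : IsSkewFilling R C T) {i A : ℕ} (hA : LeftmostUnpairedMinus i T A) :
    0 < fsuffix i T A := by
  rw [← hT.fsuffix_eq_zero i (le_max_left C (A + 1))]
  exact hA.2.2 _ (le_max_right C (A + 1))

end IsSkewFilling

/-! ### The reading word -/

/-- An occurrence of a letter in a box of a filling. -/
structure Occurrence where
  letter : ℕ
  row : ℕ
  col : ℕ

/-- The letter of the occurrence is the minimum of its box. -/
def IsPivot (T : ℕ → ℕ → Finset ℕ) (x : Occurrence) : Prop :=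
  ∀ u ∈ T x.row x.col, x.letter ≤ u

/-- The order in which `rowRead` and `readWord` visit the occurrences of letters in `T`, before any
pivot is omitted. -/
inductive ReadsBefore (T : ℕ → ℕ → Finset ℕ) (x y : Occurrence) : Prop
  | row (hrow : y.row < x.row)
  | pivot (hrow : x.row = y.row) (hx : ¬ IsPivot T x) (hy : IsPivot T y)
  | nonpivots (hrow : x.row = y.row) (hx : ¬ IsPivot T x) (hy : ¬ IsPivot T y)
      (hcol : y.col < x.col)
  | box (hrow : x.row = y.row) (hcol : x.col = y.col) (hletter : y.letter < x.letter)
  | pivots (hrow : x.row = y.row) (hx : IsPivot T x) (hy : IsPivot T y) (hcol : x.col < y.col)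

/-- The part of `labelledWord` contributed by row `r`; compare `rowRead`. -/
noncomputable def labelledRow (C : ℕ) (T : ℕ → ℕ → Finset ℕ) (r : ℕ) : List Occurrence :=
  ((List.range C).reverse.flatMap fun j =>
    ((T r j).sort (· ≤ ·)).tail.reverse.map fun v => ⟨v, r, j⟩) ++
  (List.range C).filterMap fun j =>
    if h : (T r j).Nonempty then
      (if r ≠ 0 ∧ (T r j).min' h ∈ T (r - 1) j ∧ (∀ x ∈ T (r - 1) j, x ≤ (T r j).min' h)
        then none else some ⟨(T r j).min' h, r, j⟩)
    else none

/-- The reading word in which every letter remembers the box it is read from. -/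
noncomputable def labelledWord (R C : ℕ) (T : ℕ → ℕ → Finset ℕ) : List Occurrence :=
  (List.range R).reverse.flatMap (labelledRow C T)

/-- The columns from which the suffix of the reading word starting at position `k` reads the
letter `v`. -/
noncomputable def suffixCols (R C : ℕ) (T : ℕ → ℕ → Finset ℕ) (k v : ℕ) : Finset ℕ :=
  ((((labelledWord R C T).drop k).filter fun x => x.letter = v).map Occurrence.col).toFinset

section PairwiseLists

variable {α : Type*} {r : α → α → Prop} {l : List α} {x y : α}

theorem mem_drop_of_not_rel (hl : l.Pairwise r) {k : ℕ} (hx : x ∈ l.drop k) (hy : y ∈ l)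
    (hyx : ¬ r y x) : y ∈ l.drop k := by
  rw [← List.take_append_drop k l] at hl hy
  exact (List.mem_append.1 hy).resolve_left fun hy =>
    hyx ((List.pairwise_append.1 hl).2.2 y hy x hx)

theorem exists_mem_drop_forall_eq_or_rel (hl : l.Pairwise r) (hx : x ∈ l) :
    ∃ k, x ∈ l.drop k ∧ ∀ y ∈ l.drop k, y = x ∨ r x y := by
  obtain ⟨s, t, rfl⟩ := List.mem_iff_append.1 hx
  have ht := (List.pairwise_cons.1 (List.pairwise_append.1 hl).2.1).1
  refine ⟨s.length, ?_⟩
  rw [List.drop_left]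
  exact ⟨List.mem_cons_self, fun y hy => (List.mem_cons.1 hy).imp_right (ht y)⟩

end PairwiseLists

theorem mem_tail_sort {s : Finset ℕ} {v : ℕ} :
    v ∈ (s.sort (· ≤ ·)).tail ↔ v ∈ s ∧ ∃ u ∈ s, u < v := by
  have hsorted := s.sortedLT_sort.pairwise
  have hmem (w : ℕ) : w ∈ s ↔ w ∈ s.sort (· ≤ ·) := (Finset.mem_sort _).symm
  simp only [hmem]
  generalize s.sort (· ≤ ·) = l at hsorted
  cases l with
  | nil => simp
  | cons a l =>
    rw [List.pairwise_cons] at hsorted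
    simp only [List.tail_cons, List.mem_cons]
    constructor
    · exact fun hv => ⟨.inr hv, a, .inl rfl, hsorted.1 v hv⟩
    · rintro ⟨rfl | hv, u, rfl | hu, huv⟩
      · exact absurd huv (lt_irrefl _)
      · exact absurd huv (hsorted.1 u hu).asymm
      · exact hv
      · exact hv

section LabelledWord

variable {R C : ℕ} {T : ℕ → ℕ → Finset ℕ}

theorem map_letter_labelledRow (C : ℕ) (T : ℕ → ℕ → Finset ℕ) (r : ℕ) :
    (labelledRow C T r).map Occurrence.letter = rowRead C T r := by
  have hletter (r j : ℕ) : (Occurrence.letter ∘ fun v => ⟨v, r, j⟩) = id := rfl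
  simp only [labelledRow, rowRead, List.map_append, List.map_flatMap, List.map_map, hletter,
    List.map_id, List.map_filterMap]
  congr! 3
  split_ifs <;> rfl

theorem map_letter_labelledWord (R C : ℕ) (T : ℕ → ℕ → Finset ℕ) :
    (labelledWord R C T).map Occurrence.letter = readWord R C T := by
  simp only [labelledWord, readWord, List.map_flatMap, map_letter_labelledRow]

theorem mem_labelledRow_nonpivots {r : ℕ} {x : Occurrence} :
    x ∈ ((List.range C).reverse.flatMap fun j =>
      ((T r j).sort (· ≤ ·)).tail.reverse.map fun v => (⟨v, r, j⟩ : Occurrence)) ↔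
    x.row = r ∧ x.col < C ∧ x.letter ∈ T x.row x.col ∧ ¬ IsPivot T x := by
  obtain ⟨v, s, j⟩ := x
  simp only [List.mem_flatMap, List.mem_reverse, List.mem_range, List.mem_map, mem_tail_sort,
    IsPivot, Occurrence.mk.injEq]
  push Not
  constructor
  · rintro ⟨_, hj, _, hv, rfl, rfl, rfl⟩
    exact ⟨rfl, hj, hv⟩
  · rintro ⟨rfl, hj, hv⟩
    exact ⟨j, hj, v, hv, rfl, rfl, rfl⟩

theorem labelledRow_pivot_eq_some_iff {r j : ℕ} {x : Occurrence} :
    (if h : (T r j).Nonempty then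
      (if r ≠ 0 ∧ (T r j).min' h ∈ T (r - 1) j ∧ (∀ x ∈ T (r - 1) j, x ≤ (T r j).min' h)
        then none else some (⟨(T r j).min' h, r, j⟩ : Occurrence))
      else none) = some x ↔
    x.row = r ∧ x.col = j ∧ x.letter ∈ T x.row x.col ∧ IsPivot T x ∧
      ¬ (r ≠ 0 ∧ x.letter ∈ T (r - 1) j ∧ ∀ u ∈ T (r - 1) j, u ≤ x.letter) := by
  obtain ⟨v, s, k⟩ := x
  constructor
  · intro h
    split_ifs at h with hne habove
    obtain ⟨rfl, rfl, rfl⟩ := Occurrence.mk.inj (Option.some.inj h)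
    exact ⟨rfl, rfl, Finset.min'_mem _ hne, fun u hu => Finset.min'_le _ _ hu, habove⟩
  · rintro ⟨rfl, rfl, hv, hpivot, habove⟩
    have hmin : (T s k).min' ⟨v, hv⟩ = v :=
      le_antisymm (Finset.min'_le _ _ hv) (hpivot _ (Finset.min'_mem _ _))
    rw [dif_pos ⟨v, hv⟩, hmin, if_neg habove]

theorem mem_labelledRow {r : ℕ} {x : Occurrence} :
    x ∈ labelledRow C T r ↔ x.row = r ∧ x.col < C ∧ x.letter ∈ T x.row x.col ∧
      (IsPivot T x → ¬ (r ≠ 0 ∧ x.letter ∈ T (r - 1) x.col ∧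
        ∀ u ∈ T (r - 1) x.col, u ≤ x.letter)) := by
  rw [labelledRow, List.mem_append, mem_labelledRow_nonpivots, List.mem_filterMap]
  simp only [labelledRow_pivot_eq_some_iff, List.mem_range]
  constructor
  · rintro (⟨hr, hj, hv, hpivot⟩ | ⟨_, hj, hr, rfl, hv, _, habove⟩)
    · exact ⟨hr, hj, hv, fun h => absurd h hpivot⟩
    · exact ⟨hr, hj, hv, fun _ => habove⟩
  · rintro ⟨hr, hj, hv, habove⟩
    by_cases hpivot : IsPivot T x
    · exact .inr ⟨_, hj, hr, rfl, hv, hpivot, habove hpivot⟩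
    · exact .inl ⟨hr, hj, hv, hpivot⟩

theorem pairwise_labelledRow (C : ℕ) (T : ℕ → ℕ → Finset ℕ) (r : ℕ) :
    (labelledRow C T r).Pairwise (ReadsBefore T) := by
  refine List.pairwise_append.2 ⟨List.pairwise_flatMap.2 ⟨fun j _ => ?_, ?_⟩, ?_, ?_⟩
  · rw [List.pairwise_map, List.pairwise_reverse]
    exact (T r j).sortedLT_sort.pairwise.tail.imp fun hlt => .box rfl rfl hlt
  · rw [List.pairwise_reverse]
    refine List.pairwise_lt_range.imp fun {j j'} hlt x hx y hy => ?_
    simp only [List.mem_map, List.mem_reverse, mem_tail_sort] at hx hy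
    obtain ⟨v, ⟨_, u, hu, huv⟩, rfl⟩ := hx
    obtain ⟨w, ⟨_, u', hu', huw⟩, rfl⟩ := hy
    exact .nonpivots rfl (fun h => huv.not_ge (h u hu)) (fun h => huw.not_ge (h u' hu')) hlt
  · rw [List.pairwise_filterMap]
    refine List.pairwise_lt_range.imp fun hlt x hx y hy => ?_
    obtain ⟨hxr, hxj, _, hxp, _⟩ := labelledRow_pivot_eq_some_iff.1 hx
    obtain ⟨hyr, hyj, _, hyp, _⟩ := labelledRow_pivot_eq_some_iff.1 hy
    exact .pivots (hxr.trans hyr.symm) hxp hyp (hxj ▸ hyj ▸ hlt)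
  · intro x hx y hy
    obtain ⟨hxr, _, _, hxp⟩ := mem_labelledRow_nonpivots.1 hx
    obtain ⟨j, _, hy⟩ := List.mem_filterMap.1 hy
    obtain ⟨hyr, _, _, hyp, _⟩ := labelledRow_pivot_eq_some_iff.1 hy
    exact .pivot (hxr.trans hyr.symm) hxp hyp

theorem pairwise_labelledWord (R C : ℕ) (T : ℕ → ℕ → Finset ℕ) :
    (labelledWord R C T).Pairwise (ReadsBefore T) := by
  refine List.pairwise_flatMap.2 ⟨fun r _ => pairwise_labelledRow C T r, ?_⟩
  rw [List.pairwise_reverse]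
  refine List.pairwise_lt_range.imp fun hlt x hx y hy => .row ?_
  rwa [(mem_labelledRow.1 hx).1, (mem_labelledRow.1 hy).1]

end LabelledWord

namespace IsSkewFilling

variable {R C : ℕ} {T : ℕ → ℕ → Finset ℕ}

theorem mem_labelledWord (hT : IsSkewFilling R C T) {x : Occurrence} :
    x ∈ labelledWord R C T ↔ IsLeast {r | x.letter ∈ T r x.col} x.row := by
  obtain ⟨v, r, j⟩ := x
  simp only [labelledWord, List.mem_flatMap, List.mem_reverse, List.mem_range, mem_labelledRow]
  constructor
  · rintro ⟨_, _, rfl, _, hv, habove⟩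
    refine ⟨hv, fun s hs => not_lt.1 fun hsr => ?_⟩
    refine habove (fun u hu => hT.le_of_lt_of_le hsr le_rfl hs hu) ⟨by lia, ?_, fun u hu => ?_⟩
    · exact hT.mem_of_le_of_le (by lia) (Nat.sub_le r 1) hs hv
    · exact hT.le_of_lt_of_le (by lia) le_rfl hu hv
  · rintro ⟨hv, hleast⟩
    refine ⟨r, hT.row_lt hv, rfl, hT.col_lt hv, hv, fun _ ⟨hr, hv', _⟩ =>
      (hleast hv').not_gt (Nat.sub_one_lt hr)⟩

theorem not_readsBefore_of_le (hT : IsSkewFilling R C T) {x y : Occurrence}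
    (hx : x ∈ labelledWord R C T) (hy : y ∈ labelledWord R C T) (hcol : x.col ≤ y.col)
    (hletter : y.letter ≤ x.letter) : ¬ ReadsBefore T y x := by
  rw [hT.mem_labelledWord] at hx hy
  intro h
  cases h with
  | row hrow =>
    obtain ⟨z, hz, hxz, hzy⟩ := hT.exists_mem_between le_rfl hrow.le hcol le_rfl
      (hT.le_of_lt_of_le hrow hcol hx.1 hy.1) hx.1 hy.1
    obtain rfl : z = y.letter := by lia
    exact (hy.2 hz).not_gt hrow
  | box _ _ hlt => exact hletter.not_gt hlt
  | pivots _ _ _ hlt => exact hcol.not_gt hlt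
  | pivot hrow hpivot hx' =>
    refine hpivot fun u hu => hletter.trans ?_
    rcases hcol.eq_or_lt with hcol | hcol
    · exact hx' u (hrow ▸ hcol ▸ hu)
    · exact hT.le_of_le_of_lt hrow.ge hcol hx.1 hu
  | nonpivots hrow hpivot _ hcol =>
    exact hpivot fun u hu => hletter.trans (hT.le_of_le_of_lt hrow.ge hcol hx.1 hu)

theorem not_readsBefore_of_col_lt (hT : IsSkewFilling R C T) {x y : Occurrence}
    (hx : x ∈ labelledWord R C T) (hy : y ∈ labelledWord R C T) (hcol : y.col < x.col)
    (hletter : x.letter = y.letter + 1) (hnot : ¬ ColHas T x.col y.letter) :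
    ¬ ReadsBefore T x y := by
  rw [hT.mem_labelledWord] at hx hy
  have hpivot (hrow : x.row = y.row) : IsPivot T x := by
    intro u hu
    have hyu := hT.le_of_le_of_lt hrow.ge hcol hy.1 hu
    by_contra! hlt
    obtain rfl : u = y.letter := by lia
    exact hnot ⟨_, hu⟩
  intro h
  cases h with
  | row hrow =>
    obtain ⟨z, hz, hyz, hzx⟩ := hT.exists_mem_between le_rfl hrow.le hcol.le le_rfl
      (by lia) hy.1 hx.1
    obtain rfl : z = x.letter := by
      by_contra! hne
      obtain rfl : z = y.letter := by lia
      exact hnot ⟨_, hz⟩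
    exact (hx.2 hz).not_gt hrow
  | box _ hcol' _ => exact hcol.ne' hcol'
  | pivots _ _ _ hlt => exact hlt.not_gt hcol
  | pivot hrow hx' _ => exact hx' (hpivot hrow)
  | nonpivots hrow hx' _ _ => exact hx' (hpivot hrow)

theorem exists_mem_labelledWord (hT : IsSkewFilling R C T) {v j : ℕ} (h : ColHas T j v) :
    ∃ r, ⟨v, r, j⟩ ∈ labelledWord R C T :=
  ⟨Nat.find h, hT.mem_labelledWord.2 ⟨Nat.find_spec h, fun _ => Nat.find_min' h⟩⟩

end IsSkewFilling

section SuffixCols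

variable {R C k v j : ℕ} {T : ℕ → ℕ → Finset ℕ}

theorem mem_suffixCols :
    j ∈ suffixCols R C T k v ↔ ∃ r, ⟨v, r, j⟩ ∈ (labelledWord R C T).drop k := by
  simp only [suffixCols, List.mem_toFinset, List.mem_map, List.mem_filter, decide_eq_true_eq]
  constructor
  · rintro ⟨⟨_, r, _⟩, ⟨hx, rfl⟩, rfl⟩
    exact ⟨r, hx⟩
  · rintro ⟨r, hr⟩
    exact ⟨_, ⟨hr, rfl⟩, rfl⟩

namespace IsSkewFilling

theorem colHas_of_mem_suffixCols (hT : IsSkewFilling R C T) (hj : j ∈ suffixCols R C T k v) :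
    ColHas T j v := by
  obtain ⟨r, hr⟩ := mem_suffixCols.1 hj
  exact ⟨r, (hT.mem_labelledWord.1 (List.mem_of_mem_drop hr)).1⟩

theorem count_drop_readWord (hT : IsSkewFilling R C T) (k v : ℕ) :
    ((readWord R C T).drop k).count v = (suffixCols R C T k v).card := by
  have hpair := (pairwise_labelledWord R C T).sublist (List.drop_sublist k _)
  have hnodup : ((((labelledWord R C T).drop k).filter fun x => x.letter = v).map
      Occurrence.col).Nodup := by
    rw [List.Nodup, List.pairwise_map]
    refine (hpair.filter _).imp_of_mem fun {x y} hx hy hxy hcol => ?_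
    simp only [List.mem_filter, decide_eq_true_eq] at hx hy
    exact hT.not_readsBefore_of_le (List.mem_of_mem_drop hy.1) (List.mem_of_mem_drop hx.1) hcol.ge
      (hx.2.trans hy.2.symm).le hxy
  rw [suffixCols, List.toFinset_card_of_nodup hnodup, List.length_map, ← map_letter_labelledWord,
    ← List.map_drop, List.count, List.countP_map, List.countP_eq_length_filter]
  rfl

theorem mem_suffixCols_of_le (hT : IsSkewFilling R C T) {p w : ℕ} (hp : p ∈ suffixCols R C T k w)
    (hpj : p ≤ j) (hvw : v ≤ w) (hj : ColHas T j v) : j ∈ suffixCols R C T k v := by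
  obtain ⟨r, hr⟩ := mem_suffixCols.1 hp
  obtain ⟨s, hs⟩ := hT.exists_mem_labelledWord hj
  exact mem_suffixCols.2 ⟨s, mem_drop_of_not_rel (pairwise_labelledWord R C T) hr hs
    (hT.not_readsBefore_of_le (List.mem_of_mem_drop hr) hs hpj hvw)⟩

theorem exists_mem_suffixCols_forall_le (hT : IsSkewFilling R C T) {i A : ℕ}
    (hA : ColHas T A (i + 1)) (hA' : ¬ ColHas T A i) :
    ∃ k, A ∈ suffixCols R C T k (i + 1) ∧ ∀ j ∈ suffixCols R C T k i, A ≤ j := by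
  -- The suffix starts with the letter `i + 1` that is read from column `A`.
  obtain ⟨r, hr⟩ := hT.exists_mem_labelledWord hA
  obtain ⟨k, hk, hbefore⟩ := exists_mem_drop_forall_eq_or_rel (pairwise_labelledWord R C T) hr
  refine ⟨k, mem_suffixCols.2 ⟨r, hk⟩, fun j hj => not_lt.1 fun hjA => ?_⟩
  obtain ⟨s, hs⟩ := mem_suffixCols.1 hj
  rcases hbefore _ hs with heq | hlt
  · exact absurd (congrArg Occurrence.letter heq) (by simp)
  · exact hT.not_readsBefore_of_col_lt hr (List.mem_of_mem_drop hs) hjA rfl hA' hlt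

end IsSkewFilling

end SuffixCols

/-! ### Comparison of the signature with the reading word -/

namespace IsSkewFilling

variable {R C : ℕ} {T : ℕ → ℕ → Finset ℕ}

theorem exists_count_lt_of_fsuffix_pos (hT : IsSkewFilling R C T) {i A : ℕ}
    (hA : ColPureB i (restrictTwo i T) A) (hpos : 0 < fsuffix i T A) :
    ∃ k, ((readWord R C T).drop k).count i < ((readWord R C T).drop k).count (i + 1) := by
  obtain ⟨hA, hA'⟩ := colPureB_restrictTwo.1 hA
  obtain ⟨k, hk, hle⟩ := hT.exists_mem_suffixCols_forall_le hA hA'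
  refine ⟨k, ?_⟩
  simp only [hT.count_drop_readWord]
  set α := suffixCols R C T k i
  set β := suffixCols R C T k (i + 1)
  rw [← Finset.card_sdiff_lt_card_sdiff_iff]
  calc (α \ β).card
      = ((α \ β : Finset ℕ) : Set ℕ).ncard := (Set.ncard_coe_finset _).symm
    _ ≤ {j | A ≤ j ∧ ColPureA i (restrictTwo i T) j}.ncard := by
      refine Set.ncard_le_ncard (fun j hj => ?_) (hT.finite_colPureA i A)
      obtain ⟨hjα, hjβ⟩ := Finset.mem_sdiff.1 hj
      exact ⟨hle j hjα, colPureA_restrictTwo.2 ⟨hT.colHas_of_mem_suffixCols hjα,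
        fun h => hjβ (hT.mem_suffixCols_of_le hk (hle j hjα) le_rfl h)⟩⟩
    _ < {j | A ≤ j ∧ ColPureB i (restrictTwo i T) j}.ncard := Nat.cast_lt.1 (sub_pos.1 hpos)
    _ ≤ ((β \ α : Finset ℕ) : Set ℕ).ncard := by
      refine Set.ncard_le_ncard (fun j ⟨hAj, hj⟩ => ?_)
      obtain ⟨hjB, hjA⟩ := colPureB_restrictTwo.1 hj
      exact Finset.mem_sdiff.2 ⟨hT.mem_suffixCols_of_le hk hAj le_rfl hjB,
        fun h => hjA (hT.colHas_of_mem_suffixCols h)⟩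
    _ = (β \ α).card := Set.ncard_coe_finset _

theorem exists_fsuffix_pos_of_count_lt (hT : IsSkewFilling R C T) {i k : ℕ}
    (hlt : ((readWord R C T).drop k).count i < ((readWord R C T).drop k).count (i + 1)) :
    ∃ p, 0 < fsuffix i T p := by
  simp only [hT.count_drop_readWord] at hlt
  set α := suffixCols R C T k i
  set β := suffixCols R C T k (i + 1)
  rw [← Finset.card_sdiff_lt_card_sdiff_iff] at hlt
  obtain ⟨p, hp, hmin⟩ := (β \ α).exists_min_image id
    (Finset.card_pos.1 (Nat.zero_lt_of_lt hlt))
  have hpβ := (Finset.mem_sdiff.1 hp).1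
  refine ⟨p, sub_pos.2 (Nat.cast_lt.2 ?_)⟩
  calc {j | p ≤ j ∧ ColPureA i (restrictTwo i T) j}.ncard
    _ ≤ ((α \ β : Finset ℕ) : Set ℕ).ncard := by
      refine Set.ncard_le_ncard (fun j ⟨hpj, hj⟩ => ?_)
      obtain ⟨hjA, hjB⟩ := colPureA_restrictTwo.1 hj
      exact Finset.mem_sdiff.2 ⟨hT.mem_suffixCols_of_le hpβ hpj i.le_succ hjA,
        fun h => hjB (hT.colHas_of_mem_suffixCols h)⟩
    _ = (α \ β).card := Set.ncard_coe_finset _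
    _ < (β \ α).card := hlt
    _ = ((β \ α : Finset ℕ) : Set ℕ).ncard := (Set.ncard_coe_finset _).symm
    _ ≤ {j | p ≤ j ∧ ColPureB i (restrictTwo i T) j}.ncard := by
      refine Set.ncard_le_ncard (fun j hj => ?_) (hT.finite_colPureB i p)
      obtain ⟨hjβ, hjα⟩ := Finset.mem_sdiff.1 hj
      exact ⟨hmin j hj, colPureB_restrictTwo.2 ⟨hT.colHas_of_mem_suffixCols hjβ,
        fun h => hjα (hT.mem_suffixCols_of_le hpβ (hmin j hj) i.le_succ h)⟩⟩

theorem eOp_eq_none_iff_count_le (hT : IsSkewFilling R C T) (i : ℕ) :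
    eOp i T = none ↔
      ∀ k, ((readWord R C T).drop k).count (i + 1) ≤ ((readWord R C T).drop k).count i := by
  rw [hT.eOp_eq_none_iff, ← not_iff_not, not_not]
  push Not
  constructor
  · rintro ⟨A, hA⟩
    exact hT.exists_count_lt_of_fsuffix_pos hA.1 (hT.fsuffix_pos hA)
  · rintro ⟨k, hk⟩
    obtain ⟨p, hp⟩ := hT.exists_fsuffix_pos_of_count_lt hk
    exact hT.exists_leftmostUnpairedMinus hp

end IsSkewFilling

theorem mem_of_mem_readWord {R C v : ℕ} {T : ℕ → ℕ → Finset ℕ} (hv : v ∈ readWord R C T) :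
    ∃ r j, v ∈ T r j := by
  rw [← map_letter_labelledWord, List.mem_map] at hv
  obtain ⟨x, hx, rfl⟩ := hv
  obtain ⟨r, -, hx⟩ := List.mem_flatMap.1 hx
  exact ⟨_, _, (mem_labelledRow.1 hx).2.2.1⟩

theorem isReverseLatticeWord_iff_count_succ_le {w : List ℕ} {n : ℕ} (hw : ∀ v ∈ w, v ≤ n) :
    IsReverseLatticeWord w ↔
      ∀ i, 1 ≤ i → i < n → ∀ k, (w.drop k).count (i + 1) ≤ (w.drop k).count i := by
  refine ⟨fun h i hi _ k => h k i (i + 1) hi i.lt_succ_self, fun h k a b ha hab => ?_⟩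
  replace hab := hab.le
  induction b, hab using Nat.le_induction with
  | base => exact le_rfl
  | succ b hab ih =>
    refine le_trans ?_ ih
    by_cases hbn : b < n
    · exact h b (ha.trans hab) hbn k
    · rw [List.count_eq_zero.2 fun hmem => hbn (hw _ (List.mem_of_mem_drop hmem))]
      exact Nat.zero_le _

/-- `T ∈ SVRPP^n(lam/mu)` is a highest weight element (`e_i(T) = 0` for
all `i ∈ {1,…,n−1}`) if and only if its reading word is a reverse lattice word. -/
theorem highest_weight_iff_reverse_lattice (lam mu : ℕ → ℕ)
    (hlam : IsPartitionFun lam) (hmu : IsPartitionFun mu) (hsub : ∀ r, mu r ≤ lam r)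
    (R C : ℕ) (hR : ∀ r, R ≤ r → lam r = 0) (hC : ∀ r, lam r ≤ C)
    (n : ℕ) (hn : 1 ≤ n)
    (T : ℕ → ℕ → Finset ℕ) (hT : IsSVRPPn lam mu n T) :
    (∀ i, 1 ≤ i → i < n → eOp i T = none) ↔
      IsReverseLatticeWord (readWord R C T) := by
  have hfill : IsSkewFilling R C T :=
    hT.1.isSkewFilling (antitone_nat_of_succ_le hlam.1) (antitone_nat_of_succ_le hmu.1) hR hC
  have hletters : ∀ v ∈ readWord R C T, v ≤ n := fun v hv =>
    have ⟨r, j, hv⟩ := mem_of_mem_readWord hv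
    (Finset.mem_Icc.1 (hT.2 r j hv)).2
  rw [isReverseLatticeWord_iff_count_succ_le hletters]
  simp only [hfill.eOp_eq_none_iff_count_le]
end

section
/- Fix a skew shape λ/μ, a word w of positive integers, a sequence h of positive integers, and a vector α of nonnegative integers. Then there exists at most one SVRPP T of shape λ/μ with read(T) = w, height(T) = h, and ex(T) = α. In other words, an SVRPP is uniquely determined by its shape, reading word, height vector, and excess vector. -/
/-!
The height vector cuts the reading word into rows, and the excess of a row says where its
non-pivots end and its pivots begin. Rows are then recovered from top to bottom. Once the row
above is known, the pivots of a row are recovered from right to left: if two candidates for the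
rightmost pivot differ, the larger one exceeds the maximum of the box above, so it is read, but it
exceeds every pivot of the other candidate row. Finally, a non-pivot `x` has to lie in the last
box of its row whose pivot is smaller than `x`.
-/

open scoped Classical

theorem eq_of_flatMap_eq_of_flatMap_replicate_length_eq {ι α : Type*} {f g : ι → List α}
    {L : List ι} (hL : L.Nodup) (hfg : L.flatMap f = L.flatMap g)
    (htag : L.flatMap (fun i => List.replicate (f i).length i) =
      L.flatMap (fun i => List.replicate (g i).length i)) :
    ∀ i ∈ L, f i = g i := by
  induction L with
  | nil => simp
  | cons i L ih =>
    obtain ⟨hi, hL⟩ := List.nodup_cons.1 hL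
    simp only [List.flatMap_cons] at hfg htag
    have count_eq_zero (k : ι → List α) :
        (L.flatMap fun j => List.replicate (k j).length j).count i = 0 := by
      refine List.count_eq_zero.2 fun hmem => ?_
      obtain ⟨j, hj, hij⟩ := List.mem_flatMap.1 hmem
      exact hi (List.eq_of_mem_replicate hij ▸ hj)
    have hlen : (f i).length = (g i).length := by
      simpa only [List.count_append, count_eq_zero, List.count_replicate_self, add_zero] using
        congrArg (List.count i) htag
    obtain ⟨hhead, htail⟩ := List.append_inj hfg hlen
    have htag_tail := (List.append_inj htag (by simp only [List.length_replicate, hlen])).2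
    exact List.forall_mem_cons.2 ⟨hhead, ih hL htail htag_tail⟩

theorem rowRead_eq_of_readWord_eq {R C : ℕ} {T₁ T₂ : ℕ → ℕ → Finset ℕ}
    (hread : readWord R C T₁ = readWord R C T₂)
    (hheight : heightWord R C T₁ = heightWord R C T₂) {r : ℕ} (hr : r < R) :
    rowRead C T₁ r = rowRead C T₂ r := by
  simp only [heightWord, List.map_const'] at hheight
  exact eq_of_flatMap_eq_of_flatMap_replicate_length_eq (List.nodup_reverse.2 List.nodup_range)
    hread hheight r (List.mem_reverse.2 (List.mem_range.2 hr))

section OmittedLetters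

variable {ι α : Type*} [PartialOrder α] [DecidableEq α] {m p q : ι → α}

theorem last_le_of_map_filter_ne_eq {L : List ι} {i : ι}
    (hp : (L ++ [i]).Pairwise fun j k => p j ≤ p k) (hmp : m i ≤ p i)
    (h : ((L ++ [i]).filter fun j => p j ≠ m j).map p =
      ((L ++ [i]).filter fun j => q j ≠ m j).map q) :
    q i ≤ p i := by
  by_cases hqi : q i = m i
  · exact hqi.trans_le hmp
  have hmem : q i ∈ ((L ++ [i]).filter fun j => p j ≠ m j).map p := by
    rw [h]
    exact List.mem_map_of_mem (List.mem_filter.2 ⟨by simp, by simpa using hqi⟩)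
  obtain ⟨j, hj, hji⟩ := List.mem_map.1 hmem
  rw [← hji]
  rcases List.mem_append.1 (List.mem_filter.1 hj).1 with hjL | hj
  · exact (List.pairwise_append.1 hp).2.2 j hjL i (List.mem_singleton_self i)
  · rw [List.mem_singleton.1 hj]

theorem eq_of_map_filter_ne_eq {L : List ι}
    (hp : L.Pairwise fun j k => p j ≤ p k) (hq : L.Pairwise fun j k => q j ≤ q k)
    (hmp : ∀ j ∈ L, m j ≤ p j) (hmq : ∀ j ∈ L, m j ≤ q j)
    (h : (L.filter fun j => p j ≠ m j).map p = (L.filter fun j => q j ≠ m j).map q) :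
    ∀ j ∈ L, p j = q j := by
  induction L using List.reverseRecOn with
  | nil => simp
  | append_singleton L i ih =>
    have hlast : p i = q i := le_antisymm
      (last_le_of_map_filter_ne_eq hq (hmq i (by simp)) h.symm)
      (last_le_of_map_filter_ne_eq hp (hmp i (by simp)) h)
    have hinit : (L.filter fun j => p j ≠ m j).map p = (L.filter fun j => q j ≠ m j).map q := by
      by_cases hqi : q i = m i <;> simpa [List.filter_append, hlast, hqi] using h
    have hL := List.sublist_append_left L [i]
    intro j hj
    rcases List.mem_append.1 hj with hj | hj
    · exact ih (hp.sublist hL) (hq.sublist hL) (fun k hk => hmp k (hL.subset hk))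
        (fun k hk => hmq k (hL.subset hk)) hinit j hj
    · rwa [List.mem_singleton.1 hj]

end OmittedLetters

theorem isGreatest_iff_eq_sup_id {α : Type*} [LinearOrder α] [OrderBot α] {s : Finset α} {a : α}
    (ha : a ≠ ⊥) : IsGreatest (s : Set α) a ↔ a = s.sup id := by
  constructor
  · rintro ⟨hmem, hub⟩
    exact le_antisymm (Finset.le_sup (f := id) hmem) (Finset.sup_le hub)
  · rintro rfl
    have hs : s.Nonempty := by
      rw [Finset.nonempty_iff_ne_empty]
      rintro rfl
      exact ha Finset.sup_empty
    obtain ⟨x, hx, hsup⟩ := Finset.exists_mem_eq_sup s hs id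
    exact ⟨hsup ▸ hx, fun y hy => Finset.le_sup (f := id) hy⟩

/-- The pivot of a box with filling `s`, i.e. its minimum; the pivot of an empty box is `0`. -/
noncomputable def pivot (s : Finset ℕ) : ℕ :=
  sInf (s : Set ℕ)

theorem pivot_mem {s : Finset ℕ} (hs : s.Nonempty) : pivot s ∈ s :=
  Nat.sInf_mem (s := (s : Set ℕ)) hs

theorem pivot_le {s : Finset ℕ} {x : ℕ} (hx : x ∈ s) : pivot s ≤ x :=
  Nat.sInf_le hx

theorem FinsetLE.le_pivot {A B : Finset ℕ} (h : FinsetLE A B) (hB : B.Nonempty) {x : ℕ}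
    (hx : x ∈ A) : x ≤ pivot B :=
  h x hx _ (pivot_mem hB)

theorem tail_sort_eq_sort_erase_pivot (s : Finset ℕ) :
    (s.sort (· ≤ ·)).tail = (s.erase (pivot s)).sort (· ≤ ·) := by
  rcases s.eq_empty_or_nonempty with rfl | hs
  · simp
  · conv_lhs => rw [← Finset.insert_erase (pivot_mem hs)]
    rw [Finset.sort_insert _ (fun x hx => pivot_le (Finset.mem_of_mem_erase hx))
      (Finset.notMem_erase _ _), List.tail_cons]

theorem subset_of_pivot_eq {ι : Type*} [LinearOrder ι] {A B : ι → Finset ℕ}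
    (hA : ∀ i j, i < j → FinsetLE (A i) (A j)) (hB : ∀ i j, i < j → FinsetLE (B i) (B j))
    (hne : ∀ j, (A j).Nonempty ↔ (B j).Nonempty) (hpivot : ∀ j, pivot (A j) = pivot (B j))
    (hnonpivot : ∀ j, ∀ x ∈ (A j).erase (pivot (A j)), ∃ k, x ∈ (B k).erase (pivot (B k)))
    (j : ι) : A j ⊆ B j := by
  intro x hx
  by_cases hxp : x = pivot (A j)
  · rw [hxp, hpivot]
    exact pivot_mem ((hne j).1 ⟨x, hx⟩)
  obtain ⟨k, hk⟩ := hnonpivot j x (Finset.mem_erase.2 ⟨hxp, hx⟩)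
  obtain ⟨hxk, hxB⟩ := Finset.mem_erase.1 hk
  rcases lt_trichotomy j k with hjk | rfl | hkj
  · have hle : x ≤ pivot (B k) := hpivot k ▸ (hA j k hjk).le_pivot ((hne k).2 ⟨x, hxB⟩) hx
    exact absurd (hle.antisymm (pivot_le hxB)) hxk
  · exact hxB
  · have hle : x ≤ pivot (A j) := hpivot j ▸ (hB k j hkj).le_pivot ((hne j).1 ⟨x, hx⟩) hxB
    exact absurd (hle.antisymm (pivot_le hx)) hxp

/-- The first half of the reading word of a row whose box in column `j < C` is filled with `A j`:
its non-pivot entries, in weakly decreasing order. -/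
noncomputable def nonpivotWord (C : ℕ) (A : ℕ → Finset ℕ) : List ℕ :=
  (List.range C).reverse.flatMap fun j => ((A j).sort (· ≤ ·)).tail.reverse

theorem length_nonpivotWord (C : ℕ) (A : ℕ → Finset ℕ) :
    (nonpivotWord C A).length = ∑ j ∈ Finset.range C, ((A j).card - 1) := by
  simp only [nonpivotWord, List.length_flatMap, List.length_reverse, List.length_tail,
    Finset.length_sort, List.map_reverse, List.sum_reverse]
  rw [← List.sum_toFinset _ List.nodup_range, List.toFinset_range]

theorem mem_nonpivotWord {C : ℕ} {A : ℕ → Finset ℕ} {x : ℕ} :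
    x ∈ nonpivotWord C A ↔ ∃ j < C, x ∈ (A j).erase (pivot (A j)) := by
  simp only [nonpivotWord, tail_sort_eq_sort_erase_pivot, List.mem_flatMap, List.mem_reverse,
    List.mem_range, Finset.mem_sort]

/-- The maximum entry of the box directly above `(r, j)`. It is `0`, hence different from every
pivot of an SVRPP, if there is no such box. -/
def maxAbove (T : ℕ → ℕ → Finset ℕ) : ℕ → ℕ → ℕ
  | 0, _ => 0
  | r + 1, j => (T r j).sup id

theorem omitted_iff_eq_maxAbove {T : ℕ → ℕ → Finset ℕ} {r j a : ℕ} (ha : a ≠ 0) :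
    (r ≠ 0 ∧ a ∈ T (r - 1) j ∧ ∀ x ∈ T (r - 1) j, x ≤ a) ↔ a = maxAbove T r j := by
  cases r with
  | zero => simp [maxAbove, ha]
  | succ r =>
    exact (and_iff_right r.succ_ne_zero).trans (isGreatest_iff_eq_sup_id (s := T r j) ha)

/-- The columns `j < C` of row `r` of the shape `lam/mu`, from left to right. -/
noncomputable def rowColumns (lam mu : ℕ → ℕ) (C r : ℕ) : List ℕ :=
  (List.range C).filter fun j => InShape lam mu r j

theorem mem_rowColumns {lam mu : ℕ → ℕ} {C r j : ℕ} :
    j ∈ rowColumns lam mu C r ↔ j < C ∧ InShape lam mu r j := by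
  simp [rowColumns]

theorem pairwise_lt_rowColumns (lam mu : ℕ → ℕ) (C r : ℕ) :
    (rowColumns lam mu C r).Pairwise (· < ·) :=
  List.pairwise_lt_range.filter _

/-- The second half of the reading word of row `r` of `T`: its pivots from left to right, without
those that equal the maximum entry of the box above. -/
noncomputable def pivotWord (lam mu : ℕ → ℕ) (C : ℕ) (T : ℕ → ℕ → Finset ℕ) (r : ℕ) : List ℕ :=
  ((rowColumns lam mu C r).filter fun j => pivot (T r j) ≠ maxAbove T r j).map
    fun j => pivot (T r j)

namespace IsSVRPP

variable {lam mu : ℕ → ℕ} {T T₁ T₂ : ℕ → ℕ → Finset ℕ} {C r j : ℕ}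

theorem nonempty_iff (h : IsSVRPP lam mu T) : (T r j).Nonempty ↔ InShape lam mu r j :=
  ⟨fun hne => by_contra fun hj => hne.ne_empty (h.1 r j hj), h.2.1 r j⟩

theorem pivot_ne_zero (h : IsSVRPP lam mu T) (hj : InShape lam mu r j) : pivot (T r j) ≠ 0 :=
  Nat.one_le_iff_ne_zero.1 (h.2.2.1 r j _ (pivot_mem (h.nonempty_iff.2 hj)))

theorem finsetLE_of_lt (h : IsSVRPP lam mu T) (r i j : ℕ) (hij : i < j) :
    FinsetLE (T r i) (T r j) := by
  intro a ha b hb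
  have hi := h.nonempty_iff.1 ⟨a, ha⟩
  induction j, hij using Nat.le_induction generalizing b with
  | base => exact h.2.2.2.1 r i hi (h.nonempty_iff.1 ⟨b, hb⟩) a ha b hb
  | succ j hij ih =>
    have hj₁ := h.nonempty_iff.1 ⟨b, hb⟩
    have hj : InShape lam mu r j :=
      ⟨hi.1.trans (Nat.le_of_succ_le hij), (Nat.lt_succ_self j).trans hj₁.2⟩
    have hmem := pivot_mem (h.nonempty_iff.2 hj)
    exact (ih _ hmem).trans (h.2.2.2.1 r j hj hj₁ _ hmem b hb)

theorem maxAbove_le_pivot (h : IsSVRPP lam mu T) (hj : InShape lam mu r j) :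
    maxAbove T r j ≤ pivot (T r j) := by
  cases r with
  | zero => exact Nat.zero_le _
  | succ r =>
    refine Finset.sup_le fun x hx => ?_
    have hle := h.2.2.2.2 r j (h.nonempty_iff.1 ⟨x, hx⟩) hj
    exact hle.le_pivot (h.nonempty_iff.2 hj) hx

theorem pairwise_pivot_le (h : IsSVRPP lam mu T) (C r : ℕ) :
    (rowColumns lam mu C r).Pairwise fun i j => pivot (T r i) ≤ pivot (T r j) := by
  refine (pairwise_lt_rowColumns lam mu C r).imp_of_mem fun hi hj hij => ?_
  exact (h.finsetLE_of_lt r _ _ hij).le_pivot (h.nonempty_iff.2 (mem_rowColumns.1 hj).2)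
    (pivot_mem (h.nonempty_iff.2 (mem_rowColumns.1 hi).2))

theorem length_nonpivotWord_eq_exv (h : IsSVRPP lam mu T) (hC : lam r ≤ C) :
    (nonpivotWord C (T r)).length = exv lam mu T r := by
  rw [length_nonpivotWord, exv]
  refine (Finset.sum_subset (fun j hj => ?_) fun j _ hj => ?_).symm
  · exact Finset.mem_range.2 ((Finset.mem_Ico.1 hj).2.trans_le hC)
  · simp [h.1 r j fun hs => hj (Finset.mem_Ico.2 hs)]

theorem rowRead_eq_append (h : IsSVRPP lam mu T) (C r : ℕ) :
    rowRead C T r = nonpivotWord C (T r) ++ pivotWord lam mu C T r := by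
  refine congrArg (nonpivotWord C (T r) ++ ·) ?_
  rw [pivotWord, rowColumns, ← List.filterMap_eq_map, List.filterMap_filter, List.filterMap_filter]
  refine List.filterMap_congr fun j _ => ?_
  by_cases hj : InShape lam mu r j
  · have hne := h.nonempty_iff.2 hj
    have hmin : (T r j).min' hne = pivot (T r j) := hne.csInf_eq_min'.symm
    simp [hne, hj, hmin, omitted_iff_eq_maxAbove (h.pivot_ne_zero hj)]
  · simp [h.1 r j hj, hj]

theorem pivot_eq_of_pivotWord_eq (h₁ : IsSVRPP lam mu T₁) (h₂ : IsSVRPP lam mu T₂)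
    (hC : lam r ≤ C) (habove : maxAbove T₁ r = maxAbove T₂ r)
    (hword : pivotWord lam mu C T₁ r = pivotWord lam mu C T₂ r) (j : ℕ) :
    pivot (T₁ r j) = pivot (T₂ r j) := by
  by_cases hj : InShape lam mu r j
  · rw [pivotWord, pivotWord, ← habove] at hword
    exact eq_of_map_filter_ne_eq (h₁.pairwise_pivot_le C r) (h₂.pairwise_pivot_le C r)
      (fun i hi => h₁.maxAbove_le_pivot (mem_rowColumns.1 hi).2)
      (fun i hi => habove ▸ h₂.maxAbove_le_pivot (mem_rowColumns.1 hi).2) hword j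
      (mem_rowColumns.2 ⟨hj.2.trans_le hC, hj⟩)
  · rw [h₁.1 r j hj, h₂.1 r j hj]

theorem subset_of_nonpivotWord_eq (h₁ : IsSVRPP lam mu T₁) (h₂ : IsSVRPP lam mu T₂)
    (hC : lam r ≤ C) (hword : nonpivotWord C (T₁ r) = nonpivotWord C (T₂ r))
    (hpivot : ∀ j, pivot (T₁ r j) = pivot (T₂ r j)) (j : ℕ) : T₁ r j ⊆ T₂ r j := by
  refine subset_of_pivot_eq (h₁.finsetLE_of_lt r) (h₂.finsetLE_of_lt r)
    (fun j => h₁.nonempty_iff.trans h₂.nonempty_iff.symm) hpivot (fun j x hx => ?_) j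
  have hj := h₁.nonempty_iff.1 ⟨x, Finset.mem_of_mem_erase hx⟩
  have hmem : x ∈ nonpivotWord C (T₁ r) := mem_nonpivotWord.2 ⟨j, hj.2.trans_le hC, hx⟩
  obtain ⟨k, -, hk⟩ := mem_nonpivotWord.1 (hword ▸ hmem)
  exact ⟨k, hk⟩

theorem row_eq_of_rowRead_eq (h₁ : IsSVRPP lam mu T₁) (h₂ : IsSVRPP lam mu T₂)
    (hC : lam r ≤ C) (habove : maxAbove T₁ r = maxAbove T₂ r)
    (hrow : rowRead C T₁ r = rowRead C T₂ r) (hex : exv lam mu T₁ r = exv lam mu T₂ r) :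
    T₁ r = T₂ r := by
  rw [h₁.rowRead_eq_append, h₂.rowRead_eq_append] at hrow
  obtain ⟨hnonpivot, hword⟩ := List.append_inj hrow
    (by rw [h₁.length_nonpivotWord_eq_exv hC, h₂.length_nonpivotWord_eq_exv hC, hex])
  have hpivot := h₁.pivot_eq_of_pivotWord_eq h₂ hC habove hword
  exact funext fun j => (h₁.subset_of_nonpivotWord_eq h₂ hC hnonpivot hpivot j).antisymm
    (h₂.subset_of_nonpivotWord_eq h₁ hC hnonpivot.symm (fun k => (hpivot k).symm) j)

theorem row_eq_empty (h : IsSVRPP lam mu T) (hr : lam r = 0) : T r = fun _ => ∅ :=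
  funext fun j => h.1 r j fun hj => Nat.not_lt_zero j (hr ▸ hj.2)

end IsSVRPP

theorem svrpp_unique_reconstruction_general (lam mu : ℕ → ℕ)
    (R C : ℕ) (hR : ∀ r, R ≤ r → lam r = 0) (hC : ∀ r, lam r ≤ C)
    (T₁ T₂ : ℕ → ℕ → Finset ℕ)
    (h₁ : IsSVRPP lam mu T₁) (h₂ : IsSVRPP lam mu T₂)
    (hread : readWord R C T₁ = readWord R C T₂)
    (hheight : heightWord R C T₁ = heightWord R C T₂)
    (hex : ∀ r, exv lam mu T₁ r = exv lam mu T₂ r) :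
    T₁ = T₂ := by
  have row_eq (r : ℕ) (habove : maxAbove T₁ r = maxAbove T₂ r) : T₁ r = T₂ r := by
    rcases lt_or_ge r R with hr | hr
    · have hrow := rowRead_eq_of_readWord_eq hread hheight hr
      exact h₁.row_eq_of_rowRead_eq h₂ (hC r) habove hrow (hex r)
    · rw [h₁.row_eq_empty (hR r hr), h₂.row_eq_empty (hR r hr)]
  funext r
  induction r with
  | zero => exact row_eq 0 rfl
  | succ r ih => exact row_eq (r + 1) (funext fun j => congrArg (fun A => (A j).sup id) ih)

/-- An SVRPP of shape `lam/mu` is uniquely determined by its reading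
word, its height vector and its excess vector: there is at most one SVRPP with given
values of these three statistics. (`R` bounds the rows and `C` the columns of the
shape.) -/
theorem svrpp_unique_reconstruction (lam mu : ℕ → ℕ)
    (hlam : IsPartitionFun lam) (hmu : IsPartitionFun mu) (hsub : ∀ r, mu r ≤ lam r)
    (R C : ℕ) (hR : ∀ r, R ≤ r → lam r = 0) (hC : ∀ r, lam r ≤ C)
    (T₁ T₂ : ℕ → ℕ → Finset ℕ)
    (h₁ : IsSVRPP lam mu T₁) (h₂ : IsSVRPP lam mu T₂)
    (hread : readWord R C T₁ = readWord R C T₂)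
    (hheight : heightWord R C T₁ = heightWord R C T₂)
    (hex : ∀ r, exv lam mu T₁ r = exv lam mu T₂ r) :
    T₁ = T₂ := by
  exact svrpp_unique_reconstruction_general lam mu R C hR hC T₁ T₂ h₁ h₂ hread hheight hex
end

section
/- Let T ∈ SVRPP^n(λ/μ) and i ∈ {1,...,n−1}. Then E_i(read(T)) = read(e_i(T)), with the convention that both sides are 0 simultaneously; in particular e_i(T) = 0 if and only if E_i(read(T)) = 0. -/
open scoped Classical

/-! ### The crystal raising operator on words -/

/-- Suffix statistic for the bracketing rule on a word: the number of letters `i+1` minus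
the number of letters `i` in the suffix starting at position `p`. -/
def wordF (i : ℕ) (w : List ℕ) (p : ℕ) : ℤ :=
  ((w.drop p).count (i + 1) : ℤ) - ((w.drop p).count i : ℤ)

/-- The raising operator `E_i` on words: if after the bracketing rule some `−` (letter
`i+1`) remains uncancelled, the one corresponding to the leftmost uncancelled `−`
(located at the largest maximizer `p` of the suffix statistic) is changed into an `i`;
otherwise the result is `0` (i.e. `none`). -/
noncomputable def EWord (i : ℕ) (w : List ℕ) : Option (List ℕ) :=
  if h : ∃ p, (∀ q, wordF i w q ≤ wordF i w p) ∧
      (∀ q, p < q → wordF i w q < wordF i w p) ∧ 1 ≤ wordF i w p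
  then some (w.set h.choose i) else none

/-!
Attach to each letter of the reading word its row, its column and its pivot status; the reading word
then lists the letters in a linear order. Among the letters `i` and `i + 1`, each precedes all those
weakly to its right, except that an `i` may come after the `i + 1` of a mixed column. Hence mixed
columns contribute `i + 1` before `i`, the pure columns contribute from left to right, and the
leftmost uncancelled `-` of the word lies in the column `A` of the leftmost uncancelled `-` of the
`i`-signature.

After the letters of column `A` have been changed into `i`, descent resolution only ever applies the
(M1) move, at the columns `A - 1`, `A - 2`, …, `k`. Each of these moves shifts the `i + 1` of the
reading word one column to the right and keeps its row and its pivot status. So, up to columns, the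
letters of `e_i(T)` are those of `T` with a single `i + 1` turned into `i`, and since forgetting
columns is monotone for the reading order, the two words are sorted lists with the same elements,
hence equal.
-/

/-! ### Fillings with convex support -/

theorem isLeast_congr_of_subset {A B : Set ℕ} (hAB : A ⊆ B) (hBA : ∀ b ∈ B, ∃ a ∈ A, a ≤ b)
    (r : ℕ) : IsLeast A r ↔ IsLeast B r := by
  have lowerBounds_eq : lowerBounds A = lowerBounds B :=
    Set.Subset.antisymm
      (fun c hc b hb => let ⟨a, ha, hab⟩ := hBA b hb; (hc ha).trans hab)
      (lowerBounds_mono_set hAB)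
  refine ⟨fun h => ⟨hAB h.1, lowerBounds_eq ▸ h.2⟩, fun h => ⟨?_, lowerBounds_eq ▸ h.2⟩⟩
  obtain ⟨a, ha, har⟩ := hBA r h.1
  exact le_antisymm har (h.2 (hAB ha)) ▸ ha

theorem le_of_mem_of_adjacent {F : ℕ → Finset ℕ}
    (nonempty_between : ∀ {a b c}, a ≤ b → b ≤ c → (F a).Nonempty → (F c).Nonempty →
      (F b).Nonempty)
    (adjacent : ∀ {a x y}, x ∈ F a → y ∈ F (a + 1) → x ≤ y)
    {a b x y : ℕ} (hab : a < b) (hx : x ∈ F a) (hy : y ∈ F b) : x ≤ y := by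
  induction b, hab using Nat.le_induction generalizing y with
  | base => exact adjacent hx hy
  | succ b hab ih =>
    obtain ⟨z, hz⟩ := nonempty_between (by omega) b.le_succ ⟨x, hx⟩ ⟨y, hy⟩
    exact (ih hz).trans (adjacent hz hy)

/-- A set-valued reverse plane partition of an unspecified shape inside the `R × C` box. The
shape, recovered as the set of nonempty boxes, is only required to be order-convex, as skew shapes
are. -/
structure IsBoxedSVRPP (R C : ℕ) (T : ℕ → ℕ → Finset ℕ) : Prop where
  le_of_mem : ∀ {r r' j j' x y}, r ≤ r' → j ≤ j' → r < r' ∨ j < j' →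
    x ∈ T r j → y ∈ T r' j' → x ≤ y
  nonempty_between : ∀ {r s r' j m j'}, r ≤ s → s ≤ r' → j ≤ m → m ≤ j' →
    (T r j).Nonempty → (T r' j').Nonempty → (T s m).Nonempty
  lt_of_mem : ∀ {r j x}, x ∈ T r j → r < R ∧ j < C

section Boxed

variable {R C : ℕ} {T : ℕ → ℕ → Finset ℕ}

theorem isBoxedSVRPP_of_adjacent
    (nonempty_between : ∀ {r s r' j m j'}, r ≤ s → s ≤ r' → j ≤ m → m ≤ j' →
      (T r j).Nonempty → (T r' j').Nonempty → (T s m).Nonempty)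
    (lt_of_mem : ∀ {r j x}, x ∈ T r j → r < R ∧ j < C)
    (row_le : ∀ {r j x y}, x ∈ T r j → y ∈ T r (j + 1) → x ≤ y)
    (col_le : ∀ {r j x y}, x ∈ T r j → y ∈ T (r + 1) j → x ≤ y) : IsBoxedSVRPP R C T where
  nonempty_between := nonempty_between
  lt_of_mem := lt_of_mem
  le_of_mem {r r' j j' x y} hr hj hlt hx hy := by
    have le_in_row {r j j' x y} (hj : j < j') (hx : x ∈ T r j) (hy : y ∈ T r j') : x ≤ y :=
      le_of_mem_of_adjacent (F := T r) (nonempty_between le_rfl le_rfl) row_le hj hx hy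
    have le_in_col {r r' j x y} (hr : r < r') (hx : x ∈ T r j) (hy : y ∈ T r' j) : x ≤ y :=
      le_of_mem_of_adjacent (F := fun s => T s j)
        (fun hab hbc => nonempty_between hab hbc le_rfl le_rfl) col_le hr hx hy
    rcases hr.eq_or_lt with rfl | hr
    · exact le_in_row (by omega) hx hy
    rcases hj.eq_or_lt with rfl | hj
    · exact le_in_col hr hx hy
    obtain ⟨z, hz⟩ := nonempty_between hr.le le_rfl le_rfl hj.le ⟨x, hx⟩ ⟨y, hy⟩
    exact (le_in_col hr hx hz).trans (le_in_row hj hz hy)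

theorem isBoxedSVRPP_of_isSVRPP {lam mu : ℕ → ℕ} (hlam : IsPartitionFun lam)
    (hmu : IsPartitionFun mu) (hR : ∀ r, R ≤ r → lam r = 0) (hC : ∀ r, lam r ≤ C)
    (hT : IsSVRPP lam mu T) : IsBoxedSVRPP R C T := by
  obtain ⟨empty_of_not_inShape, nonempty_of_inShape, -, row_le, col_le⟩ := hT
  have inShape_of_nonempty {r j} (h : (T r j).Nonempty) : InShape lam mu r j :=
    by_contra fun hn => h.ne_empty (empty_of_not_inShape r j hn)
  refine isBoxedSVRPP_of_adjacent (fun {r s r' j m j'} hrs hsr hjm hmj h h' => ?_)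
    (fun {r j x} hx => ?_)
    (fun hx hy => row_le _ _ (inShape_of_nonempty ⟨_, hx⟩) (inShape_of_nonempty ⟨_, hy⟩) _ hx _ hy)
    (fun hx hy => col_le _ _ (inShape_of_nonempty ⟨_, hx⟩) (inShape_of_nonempty ⟨_, hy⟩) _ hx _ hy)
  · exact nonempty_of_inShape s m
      ⟨(antitone_nat_of_succ_le hmu.1 hrs).trans ((inShape_of_nonempty h).1.trans hjm),
        hmj.trans_lt ((inShape_of_nonempty h').2.trans_le (antitone_nat_of_succ_le hlam.1 hsr))⟩
  · have hj := (inShape_of_nonempty ⟨x, hx⟩).2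
    refine ⟨not_le.1 fun hr => ?_, hj.trans_le (hC r)⟩
    rw [hR r hr] at hj
    exact absurd hj (Nat.not_lt_zero j)

namespace IsBoxedSVRPP

theorem exists_mem_between (hT : IsBoxedSVRPP R C T) {r s r' j m j' x y : ℕ}
    (hrs : r ≤ s) (hsr : s ≤ r') (hjm : j ≤ m) (hmj : m ≤ j') (hx : x ∈ T r j) (hy : y ∈ T r' j')
    (hxy : x ≤ y) : ∃ z ∈ T s m, x ≤ z ∧ z ≤ y := by
  by_cases hfirst : r = s ∧ j = m
  · obtain ⟨rfl, rfl⟩ := hfirst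
    exact ⟨x, hx, le_rfl, hxy⟩
  by_cases hlast : s = r' ∧ m = j'
  · obtain ⟨rfl, rfl⟩ := hlast
    exact ⟨y, hy, hxy, le_rfl⟩
  obtain ⟨z, hz⟩ := hT.nonempty_between hrs hsr hjm hmj ⟨x, hx⟩ ⟨y, hy⟩
  exact ⟨z, hz, hT.le_of_mem hrs hjm (by omega) hx hz, hT.le_of_mem hsr hmj (by omega) hz hy⟩

theorem isLeast_row_iff (hT : IsBoxedSVRPP R C T) {r j x : ℕ} :
    IsLeast {s | x ∈ T s j} r ↔ x ∈ T r j ∧ (r ≠ 0 → x ∉ T (r - 1) j) := by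
  refine ⟨fun h => ⟨h.1, fun hr hx => absurd (h.2 hx) (by omega)⟩,
    fun ⟨hx, habove⟩ => ⟨hx, fun s hs => ?_⟩⟩
  by_contra! hsr
  obtain ⟨z, hz, hxz, hzx⟩ :=
    hT.exists_mem_between (s := r - 1) (by omega) (Nat.sub_le r 1) le_rfl le_rfl hs hx le_rfl
  exact habove (by omega) (le_antisymm hzx hxz ▸ hz)

theorem restrictTwo (hT : IsBoxedSVRPP R C T) (i : ℕ) : IsBoxedSVRPP R C (restrictTwo i T) where
  le_of_mem hr hj hlt hx hy :=
    hT.le_of_mem hr hj hlt (Finset.mem_filter.1 hx).1 (Finset.mem_filter.1 hy).1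
  lt_of_mem hx := hT.lt_of_mem (Finset.mem_filter.1 hx).1
  nonempty_between {r s r' j m j'} hrs hsr hjm hmj h h' := by
    obtain ⟨⟨x, hx⟩, y, hy⟩ := h, h'
    rw [_root_.restrictTwo, Finset.mem_filter] at hx hy
    by_cases hcorner : r = r' ∧ j = j'
    · obtain rfl : s = r := by omega
      obtain rfl : m = j := by omega
      exact ⟨x, Finset.mem_filter.2 hx⟩
    have hxy : x ≤ y := hT.le_of_mem (hrs.trans hsr) (hjm.trans hmj) (by omega) hx.1 hy.1
    obtain ⟨z, hz, hxz, hzy⟩ := hT.exists_mem_between hrs hsr hjm hmj hx.1 hy.1 hxy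
    exact ⟨z, Finset.mem_filter.2 ⟨hz, by omega⟩⟩

end IsBoxedSVRPP

end Boxed

/-! ### Letters of the reading word -/

/-- A letter of the reading word together with the box it is read from and whether it is the pivot
of that box. -/
@[ext]
structure Letter where
  row : ℕ
  col : ℕ
  val : ℕ
  pivot : Bool

namespace Letter

/-- Position of a letter within its row: non-pivots come first, in decreasing order, then the pivots
in increasing order. -/
def rank (e : Letter) : ℤ := if e.pivot then e.val else -1 - e.val

/-- Sort key for the reading order: bottom row first, then by `rank`, then from left to right. -/
def key (e : Letter) : ℕᵒᵈ ×ₗ ℤ ×ₗ ℕ := toLex (OrderDual.toDual e.row, toLex (e.rank, e.col))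

theorem key_injective : Function.Injective key := by
  rintro ⟨r, j, x, p⟩ ⟨r', j', x', p'⟩ h
  simp only [key, rank, EmbeddingLike.apply_eq_iff_eq, Prod.mk.injEq] at h
  cases p <;> cases p' <;> grind

/-- The reading order. -/
noncomputable instance : LinearOrder Letter := LinearOrder.lift' key key_injective

theorem lt_iff {e f : Letter} :
    e < f ↔ f.row < e.row ∨ e.row = f.row ∧ (e.rank < f.rank ∨ e.rank = f.rank ∧ e.col < f.col) :=
  show key e < key f ↔ _ by simp [key, Prod.Lex.toLex_lt_toLex]

/-- The letter with its column forgotten (set to `0`). -/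
def forgetCol (e : Letter) : Letter := { e with col := 0 }

theorem forgetCol_le_forgetCol_iff {e f : Letter} :
    e.forgetCol ≤ f.forgetCol ↔ f.row < e.row ∨ e.row = f.row ∧ e.rank ≤ f.rank := by
  change toLex (OrderDual.toDual e.row, toLex (e.rank, 0)) ≤
    toLex (OrderDual.toDual f.row, toLex (f.rank, 0)) ↔ _
  simp [Prod.Lex.toLex_le_toLex, ← le_iff_lt_or_eq]

theorem forgetCol_monotone : Monotone forgetCol :=
  monotone_iff_forall_lt.2 fun _ _ h => forgetCol_le_forgetCol_iff.2 <|
    (lt_iff.1 h).imp_right fun h => ⟨h.1, h.2.elim le_of_lt fun h => h.1.le⟩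

end Letter

/-- `e` is a letter of the reading word of `T`. Omitting a pivot that occurs in the box above
amounts to reading each value of a column in its topmost occurrence only. -/
structure IsLetter (T : ℕ → ℕ → Finset ℕ) (e : Letter) : Prop where
  isLeast_row : IsLeast {s | e.val ∈ T s e.col} e.row
  pivot_iff : e.pivot = true ↔ ∀ y ∈ T e.row e.col, e.val ≤ y

/-- The non-pivots of row `r`, in the order in which `rowRead` reads them. -/
noncomputable def nonpivotLetters (C : ℕ) (T : ℕ → ℕ → Finset ℕ) (r : ℕ) : List Letter :=
  (List.range C).reverse.flatMap fun j =>
    ((T r j).sort (· ≤ ·)).tail.reverse.map fun x => ⟨r, j, x, false⟩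

/-- The pivots of row `r` not omitted by `rowRead`, from left to right. -/
noncomputable def pivotLetters (C : ℕ) (T : ℕ → ℕ → Finset ℕ) (r : ℕ) : List Letter :=
  (List.range C).filterMap fun j =>
    if h : (T r j).Nonempty then
      if r ≠ 0 ∧ (T r j).min' h ∈ T (r - 1) j ∧ ∀ x ∈ T (r - 1) j, x ≤ (T r j).min' h
      then none else some ⟨r, j, (T r j).min' h, true⟩
    else none

/-- `readWord` with letters in place of their values. -/
noncomputable def letterWord (R C : ℕ) (T : ℕ → ℕ → Finset ℕ) : List Letter :=
  (List.range R).reverse.flatMap fun r => nonpivotLetters C T r ++ pivotLetters C T r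

theorem map_val_letterWord (R C : ℕ) (T : ℕ → ℕ → Finset ℕ) :
    (letterWord R C T).map Letter.val = readWord R C T := by
  simp only [letterWord, readWord, rowRead, nonpivotLetters, pivotLetters, List.map_flatMap,
    List.map_append, List.map_map, List.map_filterMap]
  congr! 3 with r
  · simp [Function.comp_def]
  · congr 1
    funext j
    split_ifs <;> rfl

theorem mem_tail_sort_iff {s : Finset ℕ} {x : ℕ} :
    x ∈ (s.sort (· ≤ ·)).tail ↔ x ∈ s ∧ ∃ y ∈ s, y < x := by
  have hsorted : (s.sort (· ≤ ·)).Pairwise (· < ·) := s.sortedLT_sort.pairwise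
  have hmem (y : ℕ) : y ∈ s.sort (· ≤ ·) ↔ y ∈ s := Finset.mem_sort _
  generalize s.sort (· ≤ ·) = l at hsorted hmem
  cases l with
  | nil => simp_all
  | cons a l =>
    rw [List.pairwise_cons] at hsorted
    simp only [List.tail_cons, ← hmem, List.mem_cons]
    constructor
    · exact fun hx => ⟨.inr hx, a, .inl rfl, hsorted.1 x hx⟩
    · rintro ⟨rfl | hx, y, rfl | hy, hlt⟩
      · exact absurd hlt (lt_irrefl _)
      · exact absurd hlt (hsorted.1 y hy).asymm
      all_goals exact hx

section Letters

variable {R C : ℕ} {T : ℕ → ℕ → Finset ℕ}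

theorem mem_nonpivotLetters_iff (hT : IsBoxedSVRPP R C T) {r : ℕ} {e : Letter} :
    e ∈ nonpivotLetters C T r ↔ IsLetter T e ∧ e.row = r ∧ e.pivot = false := by
  simp only [nonpivotLetters, List.mem_flatMap, List.mem_reverse, List.mem_range, List.mem_map,
    mem_tail_sort_iff]
  constructor
  · rintro ⟨j, -, x, ⟨hx, y, hy, hyx⟩, rfl⟩
    refine ⟨⟨hT.isLeast_row_iff.2 ⟨hx, fun (hr : r ≠ 0) hxabove => ?_⟩, ?_⟩, rfl, rfl⟩
    · have hxy : x ≤ y := hT.le_of_mem (r.sub_le 1) le_rfl (by omega) hxabove hy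
      omega
    · simpa using ⟨y, hy, hyx⟩
  · rintro ⟨⟨hrow, hpivot⟩, rfl, hfalse⟩
    obtain ⟨r, j, x, p⟩ := e
    obtain rfl : p = false := hfalse
    exact ⟨j, (hT.lt_of_mem hrow.1).2, x, ⟨hrow.1, by simpa using hpivot⟩, rfl⟩

theorem mem_pivotLetters_iff (hT : IsBoxedSVRPP R C T) {r : ℕ} {e : Letter} :
    e ∈ pivotLetters C T r ↔ IsLetter T e ∧ e.row = r ∧ e.pivot = true := by
  simp only [pivotLetters, List.mem_filterMap, List.mem_range]
  constructor
  · rintro ⟨j, -, he⟩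
    split_ifs at he with hne homit
    obtain rfl := Option.some_injective _ he
    have hmin : (T r j).min' hne ∈ T r j := Finset.min'_mem _ hne
    refine ⟨⟨hT.isLeast_row_iff.2 ⟨hmin, fun (hr : r ≠ 0) habove =>
      homit ⟨hr, habove, fun x hx => ?_⟩⟩, ?_⟩, rfl, rfl⟩
    · exact hT.le_of_mem (r.sub_le 1) le_rfl (by omega) hx hmin
    · simpa only [true_iff] using fun y hy => Finset.min'_le _ y hy
  · rintro ⟨⟨hrow, hpivot⟩, rfl, htrue⟩
    obtain ⟨r, j, x, p⟩ := e
    obtain rfl : p = true := htrue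
    have hne : (T r j).Nonempty := ⟨x, hrow.1⟩
    have hmin : (T r j).min' hne = x :=
      le_antisymm (Finset.min'_le _ _ hrow.1) (hpivot.1 rfl _ (Finset.min'_mem _ hne))
    refine ⟨j, (hT.lt_of_mem hrow.1).2, ?_⟩
    rw [dif_pos hne, hmin, if_neg]
    exact fun ⟨hr, habove, _⟩ => (hT.isLeast_row_iff.1 hrow).2 hr habove

theorem mem_letterWord_iff (hT : IsBoxedSVRPP R C T) {e : Letter} :
    e ∈ letterWord R C T ↔ IsLetter T e := by
  simp only [letterWord, List.mem_flatMap, List.mem_reverse, List.mem_range, List.mem_append,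
    mem_nonpivotLetters_iff hT, mem_pivotLetters_iff hT]
  constructor
  · rintro ⟨r, -, ⟨he, -⟩ | ⟨he, -⟩⟩ <;> exact he
  · intro he
    refine ⟨e.row, (hT.lt_of_mem he.isLeast_row.1).1, ?_⟩
    cases e.pivot <;> simp [he]

theorem pairwise_nonpivotLetters (hT : IsBoxedSVRPP R C T) (r : ℕ) :
    (nonpivotLetters C T r).Pairwise (· < ·) := by
  have lt_of_val_lt {j j' x x' : ℕ} (h : x' < x) :
      (⟨r, j, x, false⟩ : Letter) < ⟨r, j', x', false⟩ :=
    Letter.lt_iff.2 (.inr ⟨rfl, .inl (by simpa [Letter.rank] using h)⟩)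
  refine List.pairwise_flatMap.2 ⟨fun j _ => ?_, List.pairwise_reverse.2 ?_⟩
  · exact List.pairwise_map.2 (List.pairwise_reverse.2
      (((T r j).sortedLT_sort.pairwise.sublist (List.tail_sublist _)).imp lt_of_val_lt))
  · refine List.pairwise_lt_range.imp fun {j j'} hj e he f hf => ?_
    simp only [List.mem_reverse, List.mem_map, mem_tail_sort_iff] at he hf
    obtain ⟨x, ⟨-, y, hy, hyx⟩, rfl⟩ := he
    obtain ⟨x', ⟨hx', -⟩, rfl⟩ := hf
    exact lt_of_val_lt ((hT.le_of_mem le_rfl hj.le (.inr hj) hx' hy).trans_lt hyx)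

theorem pairwise_pivotLetters (hT : IsBoxedSVRPP R C T) (r : ℕ) :
    (pivotLetters C T r).Pairwise (· < ·) := by
  refine List.pairwise_filterMap.2 (List.pairwise_lt_range.imp fun {j j'} hj e he f hf => ?_)
  split_ifs at he hf with hne homit hne' homit'
  obtain rfl := Option.some_injective _ he
  obtain rfl := Option.some_injective _ hf
  have hle : (T r j).min' hne ≤ (T r j').min' hne' :=
    hT.le_of_mem le_rfl hj.le (.inr hj) (Finset.min'_mem _ hne) (Finset.min'_mem _ hne')
  refine Letter.lt_iff.2 (.inr ⟨rfl, hle.lt_or_eq.imp (fun h => ?_) fun h => ⟨?_, hj⟩⟩)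
  · simpa [Letter.rank] using h
  · simpa [Letter.rank] using h

theorem pairwise_letterWord (hT : IsBoxedSVRPP R C T) :
    (letterWord R C T).Pairwise (· < ·) := by
  refine List.pairwise_flatMap.2 ⟨fun r _ => ?_, List.pairwise_reverse.2 ?_⟩
  · refine List.pairwise_append.2
      ⟨pairwise_nonpivotLetters hT r, pairwise_pivotLetters hT r, fun e he f hf => ?_⟩
    obtain ⟨-, rfl, hpe⟩ := (mem_nonpivotLetters_iff hT).1 he
    obtain ⟨-, hrow, hpf⟩ := (mem_pivotLetters_iff hT).1 hf
    refine Letter.lt_iff.2 (.inr ⟨hrow.symm, .inl ?_⟩)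
    simp only [Letter.rank, hpe, hpf, Bool.false_eq_true, if_false, if_true]
    omega
  · refine List.pairwise_lt_range.imp fun {r r'} hr e he f hf => Letter.lt_iff.2 (.inl ?_)
    simp only [List.mem_append, mem_nonpivotLetters_iff hT, mem_pivotLetters_iff hT] at he hf
    omega

theorem nodup_letterWord (hT : IsBoxedSVRPP R C T) : (letterWord R C T).Nodup :=
  (pairwise_letterWord hT).imp LT.lt.ne

end Letters

namespace IsLetter

variable {R C : ℕ} {T : ℕ → ℕ → Finset ℕ} {e f : Letter}

theorem eq_of_val_eq_of_col_eq (he : IsLetter T e) (hf : IsLetter T f) (hval : e.val = f.val)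
    (hcol : e.col = f.col) : e = f := by
  have hrow : e.row = f.row := he.isLeast_row.unique (by rw [hval, hcol]; exact hf.isLeast_row)
  refine Letter.ext hrow hcol hval (Bool.eq_iff_iff.2 ?_)
  rw [he.pivot_iff, hf.pivot_iff, hrow, hcol, hval]

theorem colHas (he : IsLetter T e) : ColHas T e.col e.val := ⟨e.row, he.isLeast_row.1⟩

theorem lt_of_row_eq_of_col_le (hT : IsBoxedSVRPP R C T) (he : IsLetter T e) (hf : IsLetter T f)
    (hrow : e.row = f.row) (hcol : e.col ≤ f.col) (hne : e ≠ f)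
    (hgap : ∀ y ∈ T f.row f.col, e.val ≤ y → f.val ≤ y) : e < f := by
  have hmem_e : e.val ∈ T f.row e.col := hrow ▸ he.isLeast_row.1
  have hmem_f := hf.isLeast_row.1
  have pivot_e : e.pivot = true ↔ ∀ y ∈ T f.row e.col, e.val ≤ y := hrow ▸ he.pivot_iff
  have pivot_f := hf.pivot_iff
  have ne_of_col_eq (h : e.col = f.col) : e.val ≠ f.val := fun hval =>
    hne (he.eq_of_val_eq_of_col_eq hf hval h)
  have le_of_col_lt (h : e.col < f.col) {y : ℕ} (hy : y ∈ T f.row f.col) : e.val ≤ y :=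
    hT.le_of_mem le_rfl hcol (.inr h) hmem_e hy
  refine Letter.lt_iff.2 (.inr ⟨hrow, ?_⟩)
  cases hpf : f.pivot
  · obtain ⟨y, hy, hyf⟩ : ∃ y ∈ T f.row f.col, y < f.val := by simpa [hpf] using pivot_f
    have hcol_eq : e.col = f.col := hcol.eq_of_not_lt fun h =>
      hyf.not_ge (hgap y hy (le_of_col_lt h hy))
    rw [hcol_eq] at pivot_e hmem_e
    have hfe : f.val ≤ e.val := hgap _ hmem_e le_rfl
    have hpe : e.pivot = false := Bool.eq_false_iff.2 fun h =>
      (pivot_e.1 h y hy).not_gt (hyf.trans_le hfe)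
    have := ne_of_col_eq hcol_eq
    simp only [Letter.rank, hpe, hpf, Bool.false_eq_true, if_false]
    omega
  · cases hpe : e.pivot
    · left
      simp only [Letter.rank, hpe, hpf, Bool.false_eq_true, if_false, if_true]
      omega
    · simp only [Letter.rank, hpe, hpf, if_true, Nat.cast_lt, Nat.cast_inj]
      rcases hcol.eq_or_lt with hcol | hcol
      · rw [hcol] at pivot_e hmem_e
        exact absurd ((pivot_e.1 hpe _ hmem_f).antisymm (pivot_f.1 hpf _ hmem_e))
          (ne_of_col_eq hcol)
      · exact (le_of_col_lt hcol hmem_f).lt_or_eq.imp_right fun h => ⟨h, hcol⟩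

theorem lt_of_col_le (hT : IsBoxedSVRPP R C T) (he : IsLetter T e) (hf : IsLetter T f)
    (hcol : e.col ≤ f.col) (hne : e ≠ f)
    (hgap : ∀ s, ∀ y ∈ T s f.col, e.val ≤ y → f.val ≤ y) : e < f := by
  rcases lt_trichotomy e.row f.row with hrow | hrow | hrow
  · obtain ⟨z, hz, hez, hzf⟩ := hT.exists_mem_between le_rfl hrow.le hcol le_rfl
      he.isLeast_row.1 hf.isLeast_row.1
      (hT.le_of_mem hrow.le hcol (.inl hrow) he.isLeast_row.1 hf.isLeast_row.1)
    obtain rfl : z = f.val := hzf.antisymm (hgap _ z hz hez)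
    exact absurd (hf.isLeast_row.2 hz) hrow.not_ge
  · exact lt_of_row_eq_of_col_le hT he hf hrow hcol hne (hgap _)
  · exact Letter.lt_iff.2 (.inl hrow)

end IsLetter

theorem exists_isLetter {T : ℕ → ℕ → Finset ℕ} {j x : ℕ} (h : ColHas T j x) :
    ∃ e, IsLetter T e ∧ e.val = x ∧ e.col = j := by
  set r := sInf {s | x ∈ T s j}
  exact ⟨⟨r, j, x, decide (∀ y ∈ T r j, x ≤ y)⟩, ⟨isLeast_csInf h, by simp⟩, rfl, rfl⟩

/-! ### The signature of a filling -/

/-- Column `j` contributes a sign to the `i`-signature. -/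
def ColPure (i : ℕ) (T : ℕ → ℕ → Finset ℕ) (j : ℕ) : Prop := ColPureA i T j ∨ ColPureB i T j

/-- The columns of the letters of value `x` in `V`. -/
noncomputable def columns (V : List Letter) (x : ℕ) : Finset ℕ :=
  ((V.filter (·.val = x)).map Letter.col).toFinset

/-- Those pure columns whose letters lie in `V` are the pure columns from `c` on. -/
def IsCut (i : ℕ) (T : ℕ → ℕ → Finset ℕ) (V : List Letter) (c : ℕ) : Prop :=
  ∀ j, ColPure i T j → (c ≤ j ↔ j ∈ columns V i ∪ columns V (i + 1))

theorem mem_columns_iff {V : List Letter} {x j : ℕ} :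
    j ∈ columns V x ↔ ∃ e ∈ V, e.val = x ∧ e.col = j := by
  simp [columns, and_assoc]

theorem mem_of_lt_of_suffix {α : Type*} [Preorder α] {V l : List α} (hl : l.Pairwise (· < ·))
    (hV : V <:+ l) {e f : α} (he : e ∈ V) (hf : f ∈ l) (hef : e < f) : f ∈ V := by
  obtain ⟨U, rfl⟩ := hV
  refine (List.mem_append.1 hf).resolve_left fun hU => ?_
  exact ((List.pairwise_append.1 hl).2.2 f hU e he).asymm hef

theorem ncard_setOf_le_and_eq_succ {P : ℕ → Prop} (hfin : {j | P j}.Finite) (p : ℕ) :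
    {j | p ≤ j ∧ P j}.ncard = {j | p + 1 ≤ j ∧ P j}.ncard + if P p then 1 else 0 := by
  split_ifs with hp
  · rw [← Set.ncard_insert_of_notMem (a := p) (by simp) (hfin.subset fun j hj => hj.2)]
    congr 1
    ext j
    grind
  · congr 1
    ext j
    grind

section Signature

variable {R C i : ℕ} {T : ℕ → ℕ → Finset ℕ}

theorem colHas_restrictTwo_iff {j x : ℕ} :
    ColHas (restrictTwo i T) j x ↔ ColHas T j x ∧ (x = i ∨ x = i + 1) := by
  simp [ColHas, restrictTwo]

theorem colPureA_restrictTwo_iff {j : ℕ} :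
    ColPureA i (restrictTwo i T) j ↔ ColPureA i T j := by
  simp [ColPureA, colHas_restrictTwo_iff]

theorem colPureB_restrictTwo_iff {j : ℕ} :
    ColPureB i (restrictTwo i T) j ↔ ColPureB i T j := by
  simp [ColPureB, colHas_restrictTwo_iff]

theorem fsuffix_eq (p : ℕ) : fsuffix i T p =
    ({j | p ≤ j ∧ ColPureB i T j}.ncard : ℤ) - {j | p ≤ j ∧ ColPureA i T j}.ncard := by
  simp only [fsuffix, colPureA_restrictTwo_iff, colPureB_restrictTwo_iff]

theorem lt_of_colHas (hT : IsBoxedSVRPP R C T) {j x : ℕ} (h : ColHas T j x) : j < C :=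
  let ⟨_, hx⟩ := h
  (hT.lt_of_mem hx).2

theorem fsuffix_eq_succ (hT : IsBoxedSVRPP R C T) (p : ℕ) : fsuffix i T p =
    fsuffix i T (p + 1) + (if ColPureB i T p then 1 else 0) - if ColPureA i T p then 1 else 0 := by
  have finite_of_colHas {P : ℕ → Prop} {x : ℕ} (hP : ∀ j, P j → ColHas T j x) :
      {j | P j}.Finite := (Set.finite_lt_nat C).subset fun j hj => lt_of_colHas hT (hP j hj)
  rw [fsuffix_eq, fsuffix_eq, ncard_setOf_le_and_eq_succ (finite_of_colHas fun _ h => h.1),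
    ncard_setOf_le_and_eq_succ (P := ColPureA i T) (finite_of_colHas fun _ h => h.1)]
  push_cast
  ring

theorem fsuffix_eq_zero (hT : IsBoxedSVRPP R C T) {p : ℕ} (hp : C ≤ p) : fsuffix i T p = 0 := by
  have empty_of_colHas {P : ℕ → Prop} {x : ℕ} (hP : ∀ j, P j → ColHas T j x) :
      {j | p ≤ j ∧ P j} = ∅ := Set.eq_empty_of_forall_notMem fun j hj =>
    (hp.trans hj.1).not_gt (lt_of_colHas hT (hP j hj.2))
  rw [fsuffix_eq, empty_of_colHas fun _ h => h.1,
    empty_of_colHas (P := ColPureA i T) fun _ h => h.1]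
  simp

theorem LeftmostUnpairedMinus.one_le_fsuffix (hT : IsBoxedSVRPP R C T) {A : ℕ}
    (hA : LeftmostUnpairedMinus i T A) : 1 ≤ fsuffix i T A := by
  have := hA.2.2 (A + 1 + C) (by omega)
  rwa [fsuffix_eq_zero hT (by omega)] at this

theorem exists_leftmostUnpairedMinus (hT : IsBoxedSVRPP R C T) {c : ℕ} (hc : 1 ≤ fsuffix i T c) :
    ∃ A, LeftmostUnpairedMinus i T A := by
  have lt_of_pos {p : ℕ} (hp : 1 ≤ fsuffix i T p) : p < C := by
    by_contra! h
    rw [fsuffix_eq_zero hT h] at hp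
    omega
  obtain ⟨A, -, hmax⟩ := Finset.exists_max_image (Finset.range C)
    (fun p => toLex (fsuffix i T p, p)) ⟨c, Finset.mem_range.2 (lt_of_pos hc)⟩
  have key_le {p : ℕ} (hp : 1 ≤ fsuffix i T p) :
      fsuffix i T p < fsuffix i T A ∨ fsuffix i T p = fsuffix i T A ∧ p ≤ A :=
    Prod.Lex.toLex_le_toLex.1 (hmax p (Finset.mem_range.2 (lt_of_pos hp)))
  have hA : 1 ≤ fsuffix i T A := by
    have := key_le hc
    omega
  have hlt (p : ℕ) (hp : A < p) : fsuffix i T p < fsuffix i T A := by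
    by_contra! h
    have := key_le (hA.trans h)
    omega
  refine ⟨A, colPureB_restrictTwo_iff.2 (by_contra fun hpure => ?_), fun p => ?_, hlt⟩
  · have hsucc := fsuffix_eq_succ (i := i) hT A
    have := hlt (A + 1) A.lt_succ_self
    rw [if_neg hpure] at hsucc
    split_ifs at hsucc <;> omega
  · by_contra! h
    have := key_le (hA.trans h.le)
    omega

theorem IsLetter.lt_of_col_lt_of_colPure (hT : IsBoxedSVRPP R C T) {e f : Letter}
    (he : IsLetter T e) (hf : IsLetter T f) (he_val : e.val = i ∨ e.val = i + 1)
    (hf_val : f.val = i ∨ f.val = i + 1) (hpure : ColPure i T f.col) (hcol : e.col < f.col) :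
    e < f := by
  refine lt_of_col_le hT he hf hcol.le (fun h => hcol.ne (h ▸ rfl)) fun s y hy hey => ?_
  rcases hf_val with hf_val | hf_val
  · omega
  · have hy_ne : y ≠ i := by
      rintro rfl
      rcases hpure with hpure | hpure
      · exact hpure.2 (hf_val ▸ hf.colHas)
      · exact hpure.2 ⟨s, hy⟩
    omega

theorem exists_isLetter_of_colPure {j : ℕ} (h : ColPure i T j) :
    ∃ e, IsLetter T e ∧ (e.val = i ∨ e.val = i + 1) ∧ e.col = j := by
  rcases h with h | h
  · obtain ⟨e, he, hval, hcol⟩ := exists_isLetter h.1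
    exact ⟨e, he, .inl hval, hcol⟩
  · obtain ⟨e, he, hval, hcol⟩ := exists_isLetter h.1
    exact ⟨e, he, .inr hval, hcol⟩

theorem mem_columns_union_iff {V : List Letter} {j : ℕ} :
    j ∈ columns V i ∪ columns V (i + 1) ↔ ∃ e ∈ V, (e.val = i ∨ e.val = i + 1) ∧ e.col = j := by
  grind [mem_columns_iff]

section Suffix

variable {V : List Letter} (hT : IsBoxedSVRPP R C T) (hV : V <:+ letterWord R C T)

include hT hV

theorem isLetter_of_mem_suffix {e : Letter} (he : e ∈ V) : IsLetter T e :=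
  (mem_letterWord_iff hT).1 (hV.subset he)

theorem mem_suffix_of_lt {e f : Letter} (he : e ∈ V) (hf : IsLetter T f) (hef : e < f) : f ∈ V :=
  mem_of_lt_of_suffix (pairwise_letterWord hT) hV he ((mem_letterWord_iff hT).2 hf) hef

theorem count_eq_card_columns (x : ℕ) : (V.map Letter.val).count x = (columns V x).card := by
  have hnodup : ((V.filter (·.val = x)).map Letter.col).Nodup := by
    refine (((nodup_letterWord hT).sublist hV.sublist).filter _).map_on fun e he f hf hcol => ?_
    simp only [List.mem_filter, decide_eq_true_eq] at he hf
    exact (isLetter_of_mem_suffix hT hV he.1).eq_of_val_eq_of_col_eq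
      (isLetter_of_mem_suffix hT hV hf.1) (he.2.trans hf.2.symm) hcol
  rw [columns, List.toFinset_card_of_nodup hnodup, List.length_map, List.count,
    List.countP_map, List.countP_eq_length_filter]
  congr 1

theorem exists_isCut (i : ℕ) : ∃ c, IsCut i T V c := by
  have hex : ∃ c, ∀ j, c ≤ j → ColPure i T j → j ∈ columns V i ∪ columns V (i + 1) := by
    refine ⟨C, fun j hj hpure => absurd hj (not_le.2 ?_)⟩
    obtain ⟨e, he, -, rfl⟩ := exists_isLetter_of_colPure hpure
    exact lt_of_colHas hT he.colHas
  refine ⟨Nat.find hex, fun j hpure =>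
    ⟨fun hj => Nat.find_spec hex j hj hpure, fun hj => Nat.find_min' hex fun j' hjj' hpure' => ?_⟩⟩
  rcases hjj'.eq_or_lt with rfl | hlt
  · exact hj
  obtain ⟨e, he, he_val, rfl⟩ := mem_columns_union_iff.1 hj
  obtain ⟨f, hf, hf_val, rfl⟩ := exists_isLetter_of_colPure hpure'
  have he_letter := isLetter_of_mem_suffix hT hV he
  exact mem_columns_union_iff.2 ⟨f, mem_suffix_of_lt hT hV he hf
    (he_letter.lt_of_col_lt_of_colPure hT hf he_val hf_val hpure' hlt), hf_val, rfl⟩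

theorem colHas_of_mem_columns {x j : ℕ} (hj : j ∈ columns V x) : ColHas T j x := by
  obtain ⟨e, he, rfl, rfl⟩ := mem_columns_iff.1 hj
  exact (isLetter_of_mem_suffix hT hV he).colHas

theorem setOf_colPureB_eq {c : ℕ} (hc : IsCut i T V c) :
    {j | c ≤ j ∧ ColPureB i T j} = ↑(columns V (i + 1) \ columns V i) := by
  ext j
  simp only [Finset.coe_sdiff, Set.mem_sdiff, Finset.mem_coe]
  constructor
  · rintro ⟨hcj, hpure⟩
    have hnot : j ∉ columns V i := fun h => hpure.2 (colHas_of_mem_columns hT hV h)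
    exact ⟨(Finset.mem_union.1 ((hc j (.inr hpure)).1 hcj)).resolve_left hnot, hnot⟩
  · rintro ⟨hj, hnot⟩
    have hpure : ColPureB i T j := by
      refine ⟨colHas_of_mem_columns hT hV hj, fun hi => hnot ?_⟩
      obtain ⟨e, he, he_val, rfl⟩ := mem_columns_iff.1 hj
      obtain ⟨f, hf, hf_val, hcol⟩ := exists_isLetter hi
      refine mem_columns_iff.2 ⟨f, mem_suffix_of_lt hT hV he hf ?_, hf_val, hcol⟩
      exact (isLetter_of_mem_suffix hT hV he).lt_of_col_le hT hf hcol.ge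
        (fun h => by rw [h] at he_val; omega) fun s y _ hy => by omega
    exact ⟨(hc j (.inr hpure)).2 (Finset.mem_union_right _ hj), hpure⟩

theorem setOf_colPureA_eq {c : ℕ} (hc : IsCut i T V c) :
    {j | c ≤ j ∧ ColPureA i T j} =
      ↑((columns V i \ columns V (i + 1)).filter fun j => ¬ ColHas T j (i + 1)) := by
  ext j
  simp only [Finset.coe_filter, Finset.mem_sdiff]
  constructor
  · rintro ⟨hcj, hpure⟩
    have hnot : j ∉ columns V (i + 1) := fun h => hpure.2 (colHas_of_mem_columns hT hV h)
    exact ⟨⟨(Finset.mem_union.1 ((hc j (.inl hpure)).1 hcj)).resolve_right hnot, hnot⟩, hpure.2⟩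
  · rintro ⟨⟨hj, -⟩, hnot⟩
    have hpure : ColPureA i T j := ⟨colHas_of_mem_columns hT hV hj, hnot⟩
    exact ⟨(hc j (.inl hpure)).2 (Finset.mem_union_left _ hj), hpure⟩

/- A mixed column contributes `i + 1` before `i`, so all it can add to the signature statistic of
the cut is an uncompensated `i`. -/
theorem count_sub_count_eq {c : ℕ} (hc : IsCut i T V c) :
    ((V.map Letter.val).count (i + 1) : ℤ) - (V.map Letter.val).count i =
      fsuffix i T c -
        ((columns V i \ columns V (i + 1)).filter fun j => ColHas T j (i + 1)).card := by
  have card_sdiff := Finset.card_sdiff_add_card_inter (columns V (i + 1)) (columns V i)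
  have card_sdiff' := Finset.card_sdiff_add_card_inter (columns V i) (columns V (i + 1))
  have card_filter := Finset.card_filter_add_card_filter_not (s := columns V i \ columns V (i + 1))
    (fun j => ColHas T j (i + 1))
  rw [Finset.inter_comm] at card_sdiff'
  rw [fsuffix_eq, setOf_colPureB_eq hT hV hc, setOf_colPureA_eq hT hV hc, Set.ncard_coe_finset,
    Set.ncard_coe_finset, count_eq_card_columns hT hV, count_eq_card_columns hT hV]
  omega

end Suffix

theorem lt_of_isCut_of_notMem (hT : IsBoxedSVRPP R C T) {V : List Letter}
    (hV : V <:+ letterWord R C T) {c : ℕ} (hc : IsCut i T V c) {e : Letter} (he : IsLetter T e)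
    (he_val : e.val = i + 1) (hpure : ColPureB i T e.col) (hnot : e ∉ V) : e.col < c := by
  by_contra! hle
  obtain ⟨f, hf, hf_val, hcol⟩ := mem_columns_union_iff.1 ((hc e.col (.inr hpure)).1 hle)
  have hf_letter := isLetter_of_mem_suffix hT hV hf
  rcases hf_val with hf_val | hf_val
  · exact hpure.2 (hcol ▸ hf_val ▸ hf_letter.colHas)
  · exact hnot (he.eq_of_val_eq_of_col_eq hf_letter (he_val.trans hf_val.symm) hcol.symm ▸ hf)

section Head

variable {U V : List Letter} {e : Letter}

theorem isLetter_of_letterWord_eq (hT : IsBoxedSVRPP R C T) (hw : letterWord R C T = U ++ e :: V) :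
    IsLetter T e := (mem_letterWord_iff hT).1 (hw ▸ by simp)

theorem suffix_of_letterWord_eq (hw : letterWord R C T = U ++ e :: V) :
    e :: V <:+ letterWord R C T := ⟨U, hw.symm⟩

theorem mem_cons_iff_le (hT : IsBoxedSVRPP R C T) (hw : letterWord R C T = U ++ e :: V)
    {f : Letter} (hf : IsLetter T f) : f ∈ e :: V ↔ e ≤ f := by
  have hsorted := pairwise_letterWord hT
  rw [hw, List.pairwise_append, List.pairwise_cons] at hsorted
  refine ⟨fun h => ?_, fun h => ?_⟩
  · rcases List.mem_cons.1 h with rfl | h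
    · exact le_rfl
    · exact (hsorted.2.1.1 f h).le
  · rcases h.eq_or_lt with rfl | h
    · exact List.mem_cons_self
    · exact mem_suffix_of_lt hT (suffix_of_letterWord_eq hw) List.mem_cons_self hf h

theorem isCut_col_head (hT : IsBoxedSVRPP R C T) (hw : letterWord R C T = U ++ e :: V)
    (he_val : e.val = i + 1) (hpure : ColPureB i T e.col) : IsCut i T (e :: V) e.col := by
  have he := isLetter_of_letterWord_eq hT hw
  intro j hj
  rw [mem_columns_union_iff]
  constructor
  · intro hle
    rcases hle.eq_or_lt with rfl | hlt
    · exact ⟨e, List.mem_cons_self, .inr he_val, rfl⟩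
    obtain ⟨f, hf, hf_val, rfl⟩ := exists_isLetter_of_colPure hj
    exact ⟨f, (mem_cons_iff_le hT hw hf).2
      (he.lt_of_col_lt_of_colPure hT hf (.inr he_val) hf_val hj hlt).le, hf_val, rfl⟩
  · rintro ⟨f, hf, hf_val, rfl⟩
    have hf_letter := isLetter_of_mem_suffix hT (suffix_of_letterWord_eq hw) hf
    by_contra! hlt
    exact ((mem_cons_iff_le hT hw hf_letter).1 hf).not_gt
      (hf_letter.lt_of_col_lt_of_colPure hT he hf_val (.inr he_val) (.inr hpure) hlt)

theorem count_sub_count_cons_eq (hT : IsBoxedSVRPP R C T) (hw : letterWord R C T = U ++ e :: V)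
    (he_val : e.val = i + 1) (hpure : ColPureB i T e.col) :
    (((e :: V).map Letter.val).count (i + 1) : ℤ) - ((e :: V).map Letter.val).count i =
      fsuffix i T e.col := by
  have hV := suffix_of_letterWord_eq hw
  have he := isLetter_of_letterWord_eq hT hw
  have no_straddling : ∀ j ∈ columns (e :: V) i, ColHas T j (i + 1) →
      j ∈ columns (e :: V) (i + 1) := by
    intro j hj hhas
    obtain ⟨f, hf, hf_val, rfl⟩ := mem_columns_iff.1 hj
    obtain ⟨g, hg, hg_val, hg_col⟩ := exists_isLetter hhas
    have hf_letter := isLetter_of_mem_suffix hT hV hf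
    refine mem_columns_iff.2 ⟨g, (mem_cons_iff_le hT hw hg).2 ?_, hg_val, hg_col⟩
    rcases lt_trichotomy f.col e.col with hlt | heq | hgt
    · exact absurd ((mem_cons_iff_le hT hw hf_letter).1 hf) (not_le.2
        (hf_letter.lt_of_col_lt_of_colPure hT he (.inl hf_val) (.inr he_val) (.inr hpure) hlt))
    · exact absurd (heq ▸ hf_val ▸ hf_letter.colHas) hpure.2
    · refine (he.lt_of_col_le hT hg (by omega) (fun h => ?_) fun s y _ hy => by omega).le
      rw [h] at hgt
      omega
  rw [count_sub_count_eq hT hV (isCut_col_head hT hw he_val hpure), Finset.card_eq_zero.2,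
    Nat.cast_zero, sub_zero]
  refine Finset.filter_eq_empty_iff.2 fun j hj hhas => ?_
  exact (Finset.mem_sdiff.1 hj).2 (no_straddling j (Finset.mem_sdiff.1 hj).1 hhas)

end Head

theorem wordF_readWord (q : ℕ) : wordF i (readWord R C T) q =
    ((((letterWord R C T).drop q).map Letter.val).count (i + 1) : ℤ) -
      (((letterWord R C T).drop q).map Letter.val).count i := by
  rw [wordF, ← map_val_letterWord, List.map_drop]

theorem exists_wordF_le_fsuffix (hT : IsBoxedSVRPP R C T) (q : ℕ) :
    ∃ c, IsCut i T ((letterWord R C T).drop q) c ∧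
      wordF i (readWord R C T) q ≤ fsuffix i T c := by
  obtain ⟨c, hc⟩ := exists_isCut hT (List.drop_suffix q (letterWord R C T)) i
  refine ⟨c, hc, ?_⟩
  rw [wordF_readWord, count_sub_count_eq hT (List.drop_suffix _ _) hc]
  omega

theorem EWord_eq_some_set {w : List ℕ} {p : ℕ} (hmax : ∀ q, wordF i w q ≤ wordF i w p)
    (hlast : ∀ q, p < q → wordF i w q < wordF i w p) (hpos : 1 ≤ wordF i w p) :
    EWord i w = some (w.set p i) := by
  have hex : ∃ p, (∀ q, wordF i w q ≤ wordF i w p) ∧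
      (∀ q, p < q → wordF i w q < wordF i w p) ∧ 1 ≤ wordF i w p := ⟨p, hmax, hlast, hpos⟩
  have choose_eq : hex.choose = p := by
    obtain ⟨hmax', hlast', -⟩ := hex.choose_spec
    rcases lt_trichotomy hex.choose p with h | h | h
    · exact absurd (hlast' p h) (hmax _).not_gt
    · exact h
    · exact absurd (hlast _ h) (hmax' p).not_gt
  rw [EWord, dif_pos hex, choose_eq]

theorem EWord_readWord_eq_some (hT : IsBoxedSVRPP R C T) {U V : List Letter} {e : Letter}
    (hw : letterWord R C T = U ++ e :: V) (he_val : e.val = i + 1)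
    (he_col : LeftmostUnpairedMinus i T e.col) :
    EWord i (readWord R C T) = some (U.map Letter.val ++ i :: V.map Letter.val) := by
  have hpure : ColPureB i T e.col := colPureB_restrictTwo_iff.1 he_col.1
  have wordF_head : wordF i (readWord R C T) U.length = fsuffix i T e.col := by
    rw [wordF_readWord, ← count_sub_count_cons_eq hT hw he_val hpure, hw, List.drop_left]
  rw [EWord_eq_some_set (p := U.length), ← map_val_letterWord, hw]
  · simp
  · intro q
    obtain ⟨c, -, hle⟩ := exists_wordF_le_fsuffix (i := i) hT q
    exact wordF_head ▸ hle.trans (he_col.2.1 c)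
  · intro q hq
    obtain ⟨c, hc, hle⟩ := exists_wordF_le_fsuffix (i := i) hT q
    refine wordF_head ▸ hle.trans_lt (he_col.2.2 c ?_)
    refine lt_of_isCut_of_notMem hT (List.drop_suffix _ _) hc (isLetter_of_letterWord_eq hT hw)
      he_val hpure fun hmem => ?_
    have hnodup := nodup_letterWord hT
    rw [hw] at hmem hnodup
    rw [List.drop_append, List.drop_eq_nil_of_le hq.le, List.nil_append,
      List.drop_cons (by omega)] at hmem
    exact (List.nodup_cons.1 (List.nodup_append.1 hnodup).2.1).1 (List.mem_of_mem_drop hmem)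
  · exact wordF_head ▸ he_col.one_le_fsuffix hT

theorem EWord_readWord_eq_none_iff (hT : IsBoxedSVRPP R C T) :
    EWord i (readWord R C T) = none ↔ ¬ ∃ A, LeftmostUnpairedMinus i T A := by
  refine ⟨fun hnone ⟨A, hA⟩ => ?_, fun hA => ?_⟩
  · obtain ⟨e, he, he_val, rfl⟩ := exists_isLetter (colPureB_restrictTwo_iff.1 hA.1).1
    obtain ⟨U, V, hw⟩ := List.append_of_mem ((mem_letterWord_iff hT).2 he)
    simp [EWord_readWord_eq_some hT hw he_val hA] at hnone
  · refine dif_neg fun ⟨p, _, _, hpos⟩ => hA ?_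
    obtain ⟨c, -, hle⟩ := exists_wordF_le_fsuffix (i := i) hT p
    exact exists_leftmostUnpairedMinus hT (hpos.trans hle)

end Signature

/-! ### Descent resolution -/

/-- The two-letter filling reached from `raiseCol a A S` by the (M1) moves at the columns
`A - 1, A - 2, …, k`: column `k` becomes `a`-pure, and every column strictly after `k` and up to `A`
receives the transition of the column before it. -/
noncomputable def slide (a A : ℕ) (S : ℕ → ℕ → Finset ℕ) (k : ℕ) : ℕ → ℕ → Finset ℕ :=
  fun r j =>
    if j = k then (S r j).image fun _ => a
    else if k < j ∧ j ≤ A then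
      if (S r j).Nonempty then
        if r < sep a S (j - 1) then {a}
        else if r = sep a S (j - 1) then S r (j - 1)
        else {a + 1}
      else ∅
    else S r j

/-- The condition under which `slide a A S k` is a filling with the support of `S` in which the
letters `a + 1` of columns `k, …, A - 1` have kept their rows. -/
structure Slidable (a A : ℕ) (S : ℕ → ℕ → Finset ℕ) (k : ℕ) : Prop where
  le : k ≤ A
  mixed : ∀ j, k ≤ j → j < A → ColMixed a S j
  exists_mem : ∀ j, k ≤ j → j < A → ∃ r, a + 1 ∈ S r j ∧ (S r (j + 1)).Nonempty

section Slide

variable {a A k : ℕ} {S : ℕ → ℕ → Finset ℕ} {r j x : ℕ}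

theorem slide_of_notMem (hk : k ≤ A) (h : j < k ∨ A < j) : slide a A S k r j = S r j := by
  rw [slide, if_neg (by omega), if_neg (by omega)]

theorem mem_slide_self : x ∈ slide a A S k r k ↔ x = a ∧ (S r k).Nonempty := by
  simp only [slide, if_true, Finset.mem_image, Finset.Nonempty]
  grind

theorem slide_succ (hk : k ≤ j) (hj : j < A) :
    slide a A S k r (j + 1) =
      if (S r (j + 1)).Nonempty then
        if r < sep a S j then {a} else if r = sep a S j then S r j else {a + 1}
      else ∅ := by
  rw [slide, if_neg (by omega), if_pos (by omega), Nat.add_sub_cancel]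

theorem isLeast_sep (h : ColHas S j (a + 1)) : IsLeast {r | a + 1 ∈ S r j} (sep a S j) :=
  isLeast_csInf h

theorem lt_or_gt_or_eq_or_eq_succ (k A j : ℕ) :
    (j < k ∨ A < j) ∨ j = k ∨ ∃ m, k ≤ m ∧ m < A ∧ j = m + 1 := by
  by_cases h : k < j ∧ j ≤ A
  · exact .inr (.inr ⟨j - 1, by omega, by omega, by omega⟩)
  · omega

theorem nonempty_slide_iff (hk : Slidable a A S k) :
    (slide a A S k r j).Nonempty ↔ (S r j).Nonempty := by
  unfold slide
  split_ifs with hjk hj hne hlt heq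
  · exact Finset.image_nonempty
  · simpa using hne
  · have hmixed := hk.mixed (j - 1) (by omega) (by omega)
    exact iff_of_true ⟨a + 1, heq ▸ (isLeast_sep hmixed.2).1⟩ hne
  · simpa using hne
  · simpa using hne
  · rfl

theorem raiseCol_eq_slide (htwo : ∀ r j, ∀ x ∈ S r j, x = a ∨ x = a + 1) :
    raiseCol a A S = slide a A S A := by
  funext r j
  by_cases h : j = A
  · rw [raiseCol, slide, if_pos h, if_pos h]
    exact Finset.image_congr fun x hx => by grind
  · rw [raiseCol, if_neg h, slide_of_notMem le_rfl (by omega)]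

section Entries

variable {R C : ℕ} (hS : IsBoxedSVRPP R C S) (htwo : ∀ r j, ∀ x ∈ S r j, x = a ∨ x = a + 1)

include hS

theorem notMem_of_mem_succ {r r' j j' : ℕ} (hr : r ≤ r') (hj : j ≤ j') (hlt : r < r' ∨ j < j')
    (h : a + 1 ∈ S r j) : a ∉ S r' j' := fun h' => by
  have := hS.le_of_mem hr hj hlt h h'
  omega

include htwo

theorem exists_ge_mem_of_lt_sep (hj : ColMixed a S j) (hr : r < sep a S j) :
    ∃ s, r ≤ s ∧ a ∈ S s j := by
  obtain ⟨s, hs⟩ := hj.1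
  rcases le_total r s with hrs | hsr
  · exact ⟨s, hrs, hs⟩
  obtain ⟨z, hz, -⟩ := hS.exists_mem_between hsr hr.le le_rfl le_rfl hs (isLeast_sep hj.2).1
    a.le_succ
  rcases htwo r j z hz with rfl | rfl
  · exact ⟨r, le_rfl, hz⟩
  · exact absurd ((isLeast_sep hj.2).2 hz) hr.not_ge

theorem mem_slide_succ (hk : k ≤ j) (hj : j < A) (hmixed : ColMixed a S j) :
    x ∈ slide a A S k r (j + 1) ↔ (S r (j + 1)).Nonempty ∧
      (x = a ∧ (∃ s, r ≤ s ∧ a ∈ S s j) ∨ x = a + 1 ∧ ∃ s, s ≤ r ∧ a + 1 ∈ S s j) := by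
  obtain ⟨hp, hp_le⟩ := isLeast_sep hmixed.2
  have hp_ge {s : ℕ} (hs : a ∈ S s j) : s ≤ sep a S j := not_lt.1 fun h =>
    notMem_of_mem_succ hS h.le le_rfl (.inl h) hp hs
  rw [slide_succ hk hj]
  by_cases hne : (S r (j + 1)).Nonempty
  swap
  · simp [hne]
  simp only [hne, if_true, true_and]
  rcases lt_trichotomy r (sep a S j) with h | rfl | h
  · rw [if_pos h, Finset.mem_singleton]
    refine ⟨fun hx => .inl ⟨hx, exists_ge_mem_of_lt_sep hS htwo hmixed h⟩, ?_⟩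
    rintro (⟨rfl, -⟩ | ⟨-, s, hsr, hs⟩)
    · rfl
    · exact absurd (hp_le hs) (hsr.trans_lt h).not_ge
  · rw [if_neg (lt_irrefl _), if_pos rfl]
    constructor
    · intro hx
      rcases htwo _ _ _ hx with rfl | rfl
      · exact .inl ⟨rfl, _, le_rfl, hx⟩
      · exact .inr ⟨rfl, _, le_rfl, hp⟩
    · rintro (⟨rfl, s, hps, hs⟩ | ⟨rfl, -⟩)
      · exact (hp_ge hs).antisymm hps ▸ hs
      · exact hp
  · rw [if_neg h.not_gt, if_neg h.ne', Finset.mem_singleton]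
    refine ⟨fun hx => .inr ⟨hx, _, h.le, hp⟩, ?_⟩
    rintro (⟨-, s, hrs, hs⟩ | ⟨rfl, -⟩)
    · exact absurd (hp_ge hs) (h.trans_le hrs).not_ge
    · rfl

theorem exists_ge_mem_of_mem_slide_succ (hk : Slidable a A S k) (hkj : k ≤ j) (hj : j < A)
    (h : a ∈ slide a A S k r (j + 1)) : ∃ s, r ≤ s ∧ a ∈ S s j := by
  simpa using ((mem_slide_succ hS htwo hkj hj (hk.mixed j hkj hj)).1 h).2

theorem exists_le_mem_of_succ_mem_slide_succ (hk : Slidable a A S k) (hkj : k ≤ j) (hj : j < A)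
    (h : a + 1 ∈ slide a A S k r (j + 1)) : ∃ s, s ≤ r ∧ a + 1 ∈ S s j := by
  simpa using ((mem_slide_succ hS htwo hkj hj (hk.mixed j hkj hj)).1 h).2

theorem eq_or_eq_succ_of_mem_slide (hk : Slidable a A S k) (hx : x ∈ slide a A S k r j) :
    x = a ∨ x = a + 1 := by
  rcases lt_or_gt_or_eq_or_eq_succ k A j with h | rfl | ⟨m, hkm, hmA, rfl⟩
  · rw [slide_of_notMem hk.le h] at hx
    exact htwo r j x hx
  · exact .inl (mem_slide_self.1 hx).1
  · have := (mem_slide_succ hS htwo hkm hmA (hk.mixed m hkm hmA)).1 hx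
    tauto

theorem isLeast_mem_slide_iff (hk : Slidable a A S k) (hkj : k ≤ j) (hjA : j ≤ A) :
    IsLeast {s | a ∈ slide a A S k s j} r ↔ IsLeast {s | (S s j).Nonempty} r := by
  refine isLeast_congr_of_subset (fun s hs => (nonempty_slide_iff hk).1 ⟨a, hs⟩)
    (fun s (hs : (S s j).Nonempty) => ?_) r
  rcases lt_or_gt_or_eq_or_eq_succ k A j with h | rfl | ⟨m, hkm, hmA, rfl⟩
  · omega
  · exact ⟨s, mem_slide_self.2 ⟨rfl, hs⟩, le_rfl⟩
  have hmixed := hk.mixed m hkm hmA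
  obtain ⟨t, ht⟩ := hmixed.1
  rcases le_total s t with hst | hts
  · exact ⟨s, (mem_slide_succ hS htwo hkm hmA hmixed).2 ⟨hs, .inl ⟨rfl, t, hst, ht⟩⟩, le_rfl⟩
  · have hne := hS.nonempty_between le_rfl hts m.le_succ le_rfl ⟨a, ht⟩ hs
    exact ⟨t, (mem_slide_succ hS htwo hkm hmA hmixed).2 ⟨hne, .inl ⟨rfl, t, le_rfl, ht⟩⟩, hts⟩

theorem isLeast_succ_mem_slide_iff (hk : Slidable a A S k) (hkj : k ≤ j) (hjA : j < A) :
    IsLeast {s | a + 1 ∈ slide a A S k s (j + 1)} r ↔ IsLeast {s | a + 1 ∈ S s j} r := by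
  have hmixed := hk.mixed j hkj hjA
  obtain ⟨hp, hp_le⟩ := isLeast_sep hmixed.2
  have hp_slide : a + 1 ∈ slide a A S k (sep a S j) (j + 1) := by
    obtain ⟨t, ht, hne⟩ := hk.exists_mem j hkj hjA
    have hne' := hS.nonempty_between le_rfl (hp_le ht) j.le_succ le_rfl ⟨_, hp⟩ hne
    exact (mem_slide_succ hS htwo hkj hjA hmixed).2 ⟨hne', .inr ⟨rfl, _, le_rfl, hp⟩⟩
  have isLeast_slide : IsLeast {s | a + 1 ∈ slide a A S k s (j + 1)} (sep a S j) := by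
    refine ⟨hp_slide, fun s hs => ?_⟩
    obtain ⟨t, hts, ht⟩ := exists_le_mem_of_succ_mem_slide_succ hS htwo hk hkj hjA hs
    exact (hp_le ht).trans hts
  rw [(isLeast_sep hmixed.2).isLeast_iff_eq, isLeast_slide.isLeast_iff_eq]

theorem notMem_slide_below (hk : Slidable a A S k) (h : a + 1 ∈ slide a A S k r j) :
    a ∉ slide a A S k (r + 1) j := by
  intro h'
  rcases lt_or_gt_or_eq_or_eq_succ k A j with hj | rfl | ⟨m, hkm, hmA, rfl⟩
  · rw [slide_of_notMem hk.le hj] at h h'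
    exact notMem_of_mem_succ hS r.le_succ le_rfl (.inl r.lt_succ_self) h h'
  · exact absurd (mem_slide_self.1 h).1 (by omega)
  · obtain ⟨s, hs, hmem_s⟩ := exists_le_mem_of_succ_mem_slide_succ hS htwo hk hkm hmA h
    obtain ⟨t, ht, hmem_t⟩ := exists_ge_mem_of_mem_slide_succ hS htwo hk hkm hmA h'
    exact notMem_of_mem_succ hS (by omega) le_rfl (by omega) hmem_s hmem_t

theorem succ_eq_of_descent_slide {d : ℕ} (hk : Slidable a A S k)
    (h : Descent a (slide a A S k) d) : d + 1 = k := by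
  obtain ⟨r, hleft, hright⟩ := h
  rcases lt_or_gt_or_eq_or_eq_succ k A d with hd | rfl | ⟨m, hkm, hmA, rfl⟩
  · by_contra hne
    rw [slide_of_notMem hk.le hd] at hleft
    rw [slide_of_notMem hk.le (by omega)] at hright
    exact notMem_of_mem_succ hS le_rfl d.le_succ (.inr d.lt_succ_self) hleft hright
  · exact absurd (mem_slide_self.1 hleft).1 (by omega)
  · exfalso
    obtain ⟨t, htr, ht⟩ := exists_le_mem_of_succ_mem_slide_succ hS htwo hk hkm hmA hleft
    rcases lt_or_ge (m + 1) A with hlt | hge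
    · obtain ⟨s, hrs, hs⟩ := exists_ge_mem_of_mem_slide_succ hS htwo hk (by omega) hlt hright
      exact notMem_of_mem_succ hS (htr.trans hrs) m.le_succ (.inr m.lt_succ_self) ht hs
    · rw [slide_of_notMem hk.le (.inr (by omega))] at hright
      exact notMem_of_mem_succ hS htr (by omega) (.inr (by omega)) ht hright

end Entries

theorem resFun_slide (hk : Slidable a A S k) (hkA : k < A) :
    resFun a (slide a A S (k + 1)) k = slide a A S k := by
  have slide_left (r : ℕ) : slide a A S (k + 1) r k = S r k := slide_of_notMem hkA (by omega)
  have hmixed : ColMixed a (slide a A S (k + 1)) k := by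
    simpa only [ColMixed, ColHas, slide_left] using hk.mixed k le_rfl hkA
  have hpure : ColPureA a (slide a A S (k + 1)) (k + 1) := by
    obtain ⟨r, -, hne⟩ := hk.exists_mem k le_rfl hkA
    exact ⟨⟨r, mem_slide_self.2 ⟨rfl, hne⟩⟩, fun ⟨s, hs⟩ => by
      have := (mem_slide_self.1 hs).1
      omega⟩
  have sep_eq : sep a (slide a A S (k + 1)) k = sep a S k := by simp only [sep, slide_left]
  have nonempty_iff (r : ℕ) :
      (slide a A S (k + 1) r (k + 1)).Nonempty ↔ (S r (k + 1)).Nonempty := by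
    simp [Finset.Nonempty, mem_slide_self]
  funext r j
  simp only [resFun, hmixed, hpure, and_self, if_true, sep_eq, slide_left]
  split_ifs with h h' h'' <;> grind [slide]

end Slide

section Raising

variable {R C i A k : ℕ} {T : ℕ → ℕ → Finset ℕ}

theorem eq_or_eq_succ_of_mem_restrictTwo (r j : ℕ) :
    ∀ x ∈ restrictTwo i T r j, x = i ∨ x = i + 1 := fun _ hx => (Finset.mem_filter.1 hx).2

theorem fsuffix_eq_of_colMixed (hT : IsBoxedSVRPP R C T) (hkA : k ≤ A)
    (h : ∀ j, k ≤ j → j < A → ColMixed i (restrictTwo i T) j) :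
    fsuffix i T k = fsuffix i T A := by
  induction hkA using Nat.decreasingInduction with
  | self => rfl
  | of_succ k hkA ih =>
    have hk := h k le_rfl hkA
    rw [fsuffix_eq_succ hT, if_neg fun hp => (colPureB_restrictTwo_iff.2 hp).2 hk.1,
      if_neg fun hp => (colPureA_restrictTwo_iff.2 hp).2 hk.2,
      ih fun j hj => h j (by omega)]
    ring

/- If column `d` were `(i + 1)`-pure, then `fsuffix i T d = fsuffix i T A + 1`, since all columns
strictly between `d` and `A` are mixed. -/
theorem slidable_of_descent (hT : IsBoxedSVRPP R C T) (hA : LeftmostUnpairedMinus i T A) {d : ℕ}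
    (hk : Slidable i A (restrictTwo i T) (d + 1))
    (h : Descent i (slide i A (restrictTwo i T) (d + 1)) d) : Slidable i A (restrictTwo i T) d := by
  obtain ⟨r, hleft, hright⟩ := h
  rw [slide_of_notMem hk.le (.inl d.lt_succ_self)] at hleft
  have hmixed : ColMixed i (restrictTwo i T) d := by
    refine ⟨by_contra fun hnot => ?_, r, hleft⟩
    have hpure : ColPureB i T d := colPureB_restrictTwo_iff.1 ⟨⟨r, hleft⟩, hnot⟩
    have hsucc := fsuffix_eq_succ (i := i) hT d
    rw [if_pos hpure, if_neg fun hp : ColPureA i T d => hp.2 hpure.1,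
      fsuffix_eq_of_colMixed hT hk.le hk.mixed] at hsucc
    have := hA.2.1 d
    omega
  refine ⟨by have := hk.le; omega, fun j hj hjA => ?_, fun j hj hjA => ?_⟩
  all_goals rcases hj.eq_or_lt with rfl | hj
  · exact hmixed
  · exact hk.mixed j hj hjA
  · exact ⟨r, hleft, (mem_slide_self.1 hright).2⟩
  · exact hk.exists_mem j hj hjA

theorem slidable_self (S : ℕ → ℕ → Finset ℕ) : Slidable i A S A :=
  ⟨le_rfl, fun _ _ _ => by omega, fun _ _ _ => by omega⟩

theorem resStep_slide (hT : IsBoxedSVRPP R C T) (hA : LeftmostUnpairedMinus i T A)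
    {S' : ℕ → ℕ → Finset ℕ} (hk : Slidable i A (restrictTwo i T) k)
    (h : ResStep i (slide i A (restrictTwo i T) k) S') :
    ∃ d < k, Slidable i A (restrictTwo i T) d ∧ S' = slide i A (restrictTwo i T) d := by
  obtain ⟨d, hd, rfl⟩ := h
  obtain rfl := succ_eq_of_descent_slide (hT.restrictTwo i) eq_or_eq_succ_of_mem_restrictTwo hk hd
  have hd' := slidable_of_descent hT hA hk hd
  exact ⟨d, d.lt_succ_self, hd', resFun_slide hd' hk.le⟩

theorem exists_slide_of_reflTransGen (hT : IsBoxedSVRPP R C T)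
    (hA : LeftmostUnpairedMinus i T A) {S' : ℕ → ℕ → Finset ℕ}
    (h : Relation.ReflTransGen (ResStep i) (raiseCol i A (restrictTwo i T)) S') :
    ∃ k, Slidable i A (restrictTwo i T) k ∧ S' = slide i A (restrictTwo i T) k := by
  induction h with
  | refl => exact ⟨A, slidable_self _, raiseCol_eq_slide eq_or_eq_succ_of_mem_restrictTwo⟩
  | tail _ hstep ih =>
    obtain ⟨k, hk, rfl⟩ := ih
    obtain ⟨d, -, hd⟩ := resStep_slide hT hA hk hstep
    exact ⟨d, hd⟩

theorem exists_reflTransGen_slide (hT : IsBoxedSVRPP R C T) (hA : LeftmostUnpairedMinus i T A)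
    (hk : Slidable i A (restrictTwo i T) k) :
    ∃ S', Relation.ReflTransGen (ResStep i) (slide i A (restrictTwo i T) k) S' ∧
      ∀ d, ¬ Descent i S' d := by
  induction k using Nat.strong_induction_on with
  | _ k ih =>
  by_cases hdesc : ∃ d, Descent i (slide i A (restrictTwo i T) k) d
  · obtain ⟨d, hd⟩ := hdesc
    have hstep : ResStep i (slide i A (restrictTwo i T) k) _ := ⟨d, hd, rfl⟩
    obtain ⟨d', hd'k, hd', heq⟩ := resStep_slide hT hA hk hstep
    obtain ⟨S', hreach, hS'⟩ := ih d' hd'k hd'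
    exact ⟨S', .head hstep (heq ▸ hreach), hS'⟩
  · exact ⟨_, .refl, not_exists.1 hdesc⟩

theorem exists_ERel_iff (hT : IsBoxedSVRPP R C T) :
    (∃ T', ERel i T T') ↔ ∃ A, LeftmostUnpairedMinus i T A := by
  refine ⟨fun ⟨_, A, _, hA, _⟩ => ⟨A, hA⟩, fun ⟨A, hA⟩ => ?_⟩
  obtain ⟨S', hreach, hS'⟩ := exists_reflTransGen_slide hT hA (slidable_self _)
  rw [← raiseCol_eq_slide eq_or_eq_succ_of_mem_restrictTwo] at hreach
  exact ⟨_, A, S', hA, hreach, hS', rfl⟩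

theorem eOp_eq_none_iff : eOp i T = none ↔ ¬ ∃ T', ERel i T T' := by
  rw [eOp]
  split_ifs with h <;> simp [h]

theorem ERel_of_eOp_eq_some {T' : ℕ → ℕ → Finset ℕ} (h : eOp i T = some T') : ERel i T T' := by
  rw [eOp] at h
  split_ifs at h with hex
  exact Option.some_injective _ h ▸ hex.choose_spec

theorem mem_mergeTwo_iff {S : ℕ → ℕ → Finset ℕ} {r j x : ℕ} :
    x ∈ mergeTwo i T S r j ↔ (x ∈ T r j ∧ x ≠ i ∧ x ≠ i + 1) ∨ x ∈ S r j := by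
  simp [mergeTwo, eraseTwo]

theorem nonempty_mergeTwo_iff {S : ℕ → ℕ → Finset ℕ}
    (hne : ∀ r j, (S r j).Nonempty ↔ (restrictTwo i T r j).Nonempty) {r j : ℕ} :
    (mergeTwo i T S r j).Nonempty ↔ (T r j).Nonempty := by
  constructor
  · rintro ⟨x, hx⟩
    rcases mem_mergeTwo_iff.1 hx with h | h
    · exact ⟨x, h.1⟩
    · exact ((hne r j).1 ⟨x, h⟩).mono (Finset.filter_subset _ _)
  · rintro ⟨x, hx⟩
    by_cases hxi : x = i ∨ x = i + 1
    · obtain ⟨y, hy⟩ := (hne r j).2 ⟨x, Finset.mem_filter.2 ⟨hx, hxi⟩⟩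
      exact ⟨y, mem_mergeTwo_iff.2 (.inr hy)⟩
    · exact ⟨x, mem_mergeTwo_iff.2 (.inl ⟨hx, not_or.1 hxi⟩)⟩

theorem isBoxedSVRPP_mergeTwo (hT : IsBoxedSVRPP R C T) {S : ℕ → ℕ → Finset ℕ}
    (hne : ∀ r j, (S r j).Nonempty ↔ (restrictTwo i T r j).Nonempty)
    (htwo : ∀ r j, ∀ x ∈ S r j, x = i ∨ x = i + 1) (hrow : ∀ k, ¬ Descent i S k)
    (hcol : ∀ {r j}, i + 1 ∈ S r j → i ∉ S (r + 1) j) : IsBoxedSVRPP R C (mergeTwo i T S) := by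
  have merge_ne {r j} : (mergeTwo i T S r j).Nonempty ↔ (T r j).Nonempty :=
    nonempty_mergeTwo_iff hne
  have le_of_mem {r r' j j' x y : ℕ} (hr : r ≤ r') (hj : j ≤ j') (hlt : r < r' ∨ j < j')
      (hS : i + 1 ∈ S r j → i ∉ S r' j') (hx : x ∈ mergeTwo i T S r j)
      (hy : y ∈ mergeTwo i T S r' j') : x ≤ y := by
    have exists_mem {r j x : ℕ} (h : x ∈ S r j) : ∃ z ∈ T r j, z = i ∨ z = i + 1 := by
      obtain ⟨z, hz⟩ := (hne r j).1 ⟨x, h⟩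
      exact ⟨z, Finset.mem_filter.1 hz⟩
    rcases mem_mergeTwo_iff.1 hx with hx | hx <;> rcases mem_mergeTwo_iff.1 hy with hy | hy
    · exact hT.le_of_mem hr hj hlt hx.1 hy.1
    · obtain ⟨z, hz, hzi⟩ := exists_mem hy
      have := hT.le_of_mem hr hj hlt hx.1 hz
      have := htwo _ _ _ hy
      omega
    · obtain ⟨z, hz, hzi⟩ := exists_mem hx
      have := hT.le_of_mem hr hj hlt hz hy.1
      have := htwo _ _ _ hx
      omega
    · have hx_two := htwo _ _ _ hx
      have hy_two := htwo _ _ _ hy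
      by_contra! hyx
      have hx_eq : x = i + 1 := by omega
      have hy_eq : y = i := by omega
      exact hS (hx_eq ▸ hx) (hy_eq ▸ hy)
  refine isBoxedSVRPP_of_adjacent (fun hrs hsr hjm hmj h h' => ?_) (fun {r j x} hx => ?_)
    (fun {r j _ _} =>
      le_of_mem le_rfl j.le_succ (.inr j.lt_succ_self) fun h h' => hrow j ⟨r, h, h'⟩)
    fun {r _ _ _} => le_of_mem r.le_succ le_rfl (.inl r.lt_succ_self) hcol
  · exact merge_ne.2 (hT.nonempty_between hrs hsr hjm hmj (merge_ne.1 h) (merge_ne.1 h'))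
  · obtain ⟨y, hy⟩ := merge_ne.1 ⟨x, hx⟩
    exact hT.lt_of_mem hy

theorem forall_mem_mergeTwo_le_iff {S : ℕ → ℕ → Finset ℕ}
    (hne : ∀ r j, (S r j).Nonempty ↔ (restrictTwo i T r j).Nonempty)
    (htwo : ∀ r j, ∀ x ∈ S r j, x = i ∨ x = i + 1) {r j x : ℕ} (hx : x ≠ i + 1) :
    (∀ y ∈ mergeTwo i T S r j, x ≤ y) ↔ ∀ y ∈ T r j, x ≤ y := by
  simp only [mem_mergeTwo_iff]
  constructor
  · intro h y hy
    by_cases hyi : y = i ∨ y = i + 1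
    · obtain ⟨z, hz⟩ := (hne r j).2 ⟨y, Finset.mem_filter.2 ⟨hy, hyi⟩⟩
      have := h z (.inr hz)
      have := htwo r j z hz
      omega
    · exact h y (.inl ⟨hy, not_or.1 hyi⟩)
  · rintro h y (hy | hy)
    · exact h y hy.1
    · obtain ⟨z, hz⟩ := (hne r j).1 ⟨y, hy⟩
      have := h z (Finset.mem_filter.1 hz).1
      have := eq_or_eq_succ_of_mem_restrictTwo r j z hz
      have := htwo r j y hy
      omega

end Raising

/-! ### Letters of the raised filling -/

/-- The filling `T` after raising column `A` and resolving descents down to column `k`. -/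
noncomputable def raised (i A k : ℕ) (T : ℕ → ℕ → Finset ℕ) : ℕ → ℕ → Finset ℕ :=
  mergeTwo i T (slide i A (restrictTwo i T) k)

/-- The effect of raising and descent resolution on letters: rows and pivots are kept, the `i + 1`
of column `A` becomes `i`, and each `i + 1` in the columns `k, …, A - 1` moves one column right. -/
def Letter.shift (i A k : ℕ) (e : Letter) : Letter :=
  if e.val = i + 1 ∧ k ≤ e.col ∧ e.col ≤ A then
    if e.col = A then { e with val := i } else { e with col := e.col + 1 }
  else e

theorem Letter.shift_injOn (i A k : ℕ) :
    Set.InjOn (Letter.shift i A k) {e | ¬ (e.val = i ∧ e.col = A)} := by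
  rintro ⟨r, j, x, p⟩ he ⟨r', j', x', p'⟩ hf h
  grind [Letter.shift]

theorem isLetter_congr {T T' : ℕ → ℕ → Finset ℕ} {e f : Letter} (hpivot : e.pivot = f.pivot)
    (hrow : IsLeast {s | e.val ∈ T' s e.col} e.row ↔ IsLeast {s | f.val ∈ T s f.col} f.row)
    (hmin : IsLeast {s | f.val ∈ T s f.col} f.row →
      ((∀ y ∈ T' e.row e.col, e.val ≤ y) ↔ ∀ y ∈ T f.row f.col, f.val ≤ y)) :
    IsLetter T' e ↔ IsLetter T f := by
  constructor
  · rintro ⟨hleast, hp⟩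
    exact ⟨hrow.1 hleast, by rw [← hpivot, hp, hmin (hrow.1 hleast)]⟩
  · rintro ⟨hleast, hp⟩
    exact ⟨hrow.2 hleast, by rw [hpivot, hp, hmin hleast]⟩

theorem isLeast_mem_iff_isLeast_nonempty {S : ℕ → ℕ → Finset ℕ} {R C a j r : ℕ}
    (hS : IsBoxedSVRPP R C S) (htwo : ∀ r j, ∀ x ∈ S r j, x = a ∨ x = a + 1)
    (h : ColHas S j a) :
    IsLeast {s | a ∈ S s j} r ↔ IsLeast {s | (S s j).Nonempty} r := by
  refine isLeast_congr_of_subset (fun s (hs : a ∈ S s j) => (⟨a, hs⟩ : (S s j).Nonempty))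
    (fun s (hs : (S s j).Nonempty) => ?_) r
  obtain ⟨⟨t, ht⟩, x, hx⟩ := h, hs
  rcases le_or_gt t s with hts | hst
  · exact ⟨t, ht, hts⟩
  have hxa := hS.le_of_mem hst.le le_rfl (.inl hst) hx ht
  have := htwo s j x hx
  obtain rfl : x = a := by omega
  exact ⟨s, hx, le_rfl⟩

section Raised

variable {R C i A k : ℕ} {T : ℕ → ℕ → Finset ℕ} {e : Letter} {r j x : ℕ}

theorem mem_restrictTwo_iff : x ∈ restrictTwo i T r j ↔ x ∈ T r j ∧ (x = i ∨ x = i + 1) :=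
  Finset.mem_filter

theorem mem_raised_iff_of_eq_or (hx : x = i ∨ x = i + 1) :
    x ∈ raised i A k T r j ↔ x ∈ slide i A (restrictTwo i T) k r j := by
  rw [raised, mem_mergeTwo_iff]
  tauto

theorem raised_of_notMem (hk : k ≤ A) (h : j < k ∨ A < j) : raised i A k T r j = T r j := by
  ext x
  rw [raised, mem_mergeTwo_iff, slide_of_notMem hk h, mem_restrictTwo_iff]
  tauto

variable (hT : IsBoxedSVRPP R C T) (hk : Slidable i A (restrictTwo i T) k)

include hT hk

theorem eq_or_eq_succ_of_mem_slide_restrictTwo (r j : ℕ) :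
    ∀ x ∈ slide i A (restrictTwo i T) k r j, x = i ∨ x = i + 1 := fun _ =>
  eq_or_eq_succ_of_mem_slide (hT.restrictTwo i) eq_or_eq_succ_of_mem_restrictTwo hk

theorem forall_mem_raised_le_iff (hx : x ≠ i + 1) :
    (∀ y ∈ raised i A k T r j, x ≤ y) ↔ ∀ y ∈ T r j, x ≤ y :=
  forall_mem_mergeTwo_le_iff (fun _ _ => nonempty_slide_iff hk)
    (eq_or_eq_succ_of_mem_slide_restrictTwo hT hk) hx

theorem isBoxedSVRPP_raised (hdesc : ∀ d, ¬ Descent i (slide i A (restrictTwo i T) k) d) :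
    IsBoxedSVRPP R C (raised i A k T) :=
  isBoxedSVRPP_mergeTwo hT (fun _ _ => nonempty_slide_iff hk)
    (eq_or_eq_succ_of_mem_slide_restrictTwo hT hk) hdesc
    (notMem_slide_below (hT.restrictTwo i) eq_or_eq_succ_of_mem_restrictTwo hk)

theorem isLetter_raised_iff_of_val_ne (hi : e.val ≠ i) (hi' : e.val ≠ i + 1) :
    IsLetter (raised i A k T) e ↔ IsLetter T e := by
  refine isLetter_congr rfl ?_ fun _ => forall_mem_raised_le_iff hT hk hi'
  have mem_iff (s : ℕ) : e.val ∈ raised i A k T s e.col ↔ e.val ∈ T s e.col := by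
    rw [raised, mem_mergeTwo_iff]
    have := eq_or_eq_succ_of_mem_slide_restrictTwo hT hk s e.col e.val
    tauto
  simp only [mem_iff]

omit hT in
theorem isLetter_raised_iff_of_col (h : e.col < k ∨ A < e.col) :
    IsLetter (raised i A k T) e ↔ IsLetter T e := by
  have raised_eq (s : ℕ) : raised i A k T s e.col = T s e.col := raised_of_notMem hk.le h
  exact isLetter_congr rfl (by simp only [raised_eq]) fun _ => by rw [raised_eq]

theorem isLeast_mem_raised_iff (hkj : k ≤ j) (hjA : j ≤ A) :
    IsLeast {s | i ∈ raised i A k T s j} r ↔ IsLeast {s | (restrictTwo i T s j).Nonempty} r := by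
  simp only [mem_raised_iff_of_eq_or (.inl rfl)]
  exact isLeast_mem_slide_iff (hT.restrictTwo i) eq_or_eq_succ_of_mem_restrictTwo hk hkj hjA

theorem isLetter_raised_iff_of_val_eq (he : e.val = i) (hkj : k ≤ e.col) (hjA : e.col < A) :
    IsLetter (raised i A k T) e ↔ IsLetter T e := by
  refine isLetter_congr rfl ?_ fun _ => forall_mem_raised_le_iff hT hk (by omega)
  rw [he, isLeast_mem_raised_iff hT hk hkj hjA.le, ← isLeast_mem_iff_isLeast_nonempty
    (hT.restrictTwo i) eq_or_eq_succ_of_mem_restrictTwo (hk.mixed _ hkj hjA).1]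
  simp [mem_restrictTwo_iff]

theorem isLetter_raised_iff_of_col_eq (hpure : ColPureB i T A) (he : e.val = i)
    (hcol : e.col = A) : IsLetter (raised i A k T) e ↔ IsLetter T { e with val := i + 1 } := by
  have ne_of_mem {s y : ℕ} (hy : y ∈ T s A) : y ≠ i := fun h => hpure.2 ⟨s, h ▸ hy⟩
  refine isLetter_congr rfl ?_ fun _ => ?_
  · rw [he, isLeast_mem_raised_iff hT hk (hcol ▸ hk.le) hcol.le]
    have nonempty_iff (s : ℕ) : (restrictTwo i T s e.col).Nonempty ↔ i + 1 ∈ T s e.col := by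
      refine ⟨fun ⟨x, hx⟩ => ?_, fun h => ⟨i + 1, mem_restrictTwo_iff.2 ⟨h, .inr rfl⟩⟩⟩
      rw [mem_restrictTwo_iff] at hx
      rw [hcol] at hx ⊢
      exact hx.2.resolve_left (ne_of_mem hx.1) ▸ hx.1
    simp only [nonempty_iff]
  · rw [forall_mem_raised_le_iff hT hk (by omega), he, hcol]
    refine forall₂_congr fun y hy => ?_
    exact (ne_of_mem hy).symm.le_iff_lt

omit hk in
theorem forall_succ_le_iff_notMem (hi : ColHas T j i) (hmem : i + 1 ∈ T r j) :
    (∀ y ∈ T r j, i + 1 ≤ y) ↔ i ∉ T r j := by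
  refine ⟨fun h h' => absurd (h i h') (by omega), fun hnot y hy => ?_⟩
  obtain ⟨s, hs⟩ := hi
  have hsr : s < r := by
    by_contra! hrs
    rcases hrs.eq_or_lt with rfl | hrs
    · exact hnot hs
    · exact notMem_of_mem_succ hT hrs.le le_rfl (.inl hrs) hmem hs
  have := hT.le_of_mem hsr.le le_rfl (.inl hsr) hs hy
  have : y ≠ i := fun h => hnot (h ▸ hy)
  omega

theorem forall_mem_raised_succ_le_iff (hkj : k ≤ j) (hjA : j < A) (hmem : i + 1 ∈ T r j)
    (hmem' : i + 1 ∈ raised i A k T r (j + 1)) :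
    (∀ y ∈ raised i A k T r (j + 1), i + 1 ≤ y) ↔ i ∉ T r j := by
  have mem_slide_iff {x : ℕ} := mem_slide_succ (x := x) (r := r) (hT.restrictTwo i)
    eq_or_eq_succ_of_mem_restrictTwo hkj hjA (hk.mixed j hkj hjA)
  constructor
  · intro h hi
    have hne := (mem_slide_iff.1 ((mem_raised_iff_of_eq_or (.inr rfl)).1 hmem')).1
    have hi_slide := mem_slide_iff.2
      ⟨hne, .inl ⟨rfl, r, le_rfl, mem_restrictTwo_iff.2 ⟨hi, .inl rfl⟩⟩⟩
    have := h i ((mem_raised_iff_of_eq_or (.inl rfl)).2 hi_slide)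
    omega
  · intro hnot y hy
    rw [raised, mem_mergeTwo_iff, mem_slide_iff] at hy
    rcases hy with ⟨hy, -⟩ | ⟨-, ⟨-, s, hrs, hs⟩ | ⟨rfl, -⟩⟩
    · exact hT.le_of_mem le_rfl j.le_succ (.inr j.lt_succ_self) hmem hy
    · have hs := (mem_restrictTwo_iff.1 hs).1
      rcases hrs.eq_or_lt with rfl | hrs
      · exact absurd hs hnot
      · exact absurd hs (notMem_of_mem_succ hT hrs.le le_rfl (.inl hrs) hmem)
    · exact le_rfl

theorem isLetter_raised_iff_of_col_eq_succ (he : e.val = i + 1) (hcol : e.col = j + 1)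
    (hkj : k ≤ j) (hjA : j < A) :
    IsLetter (raised i A k T) e ↔ IsLetter T { e with col := j } := by
  have isLeast_iff (r : ℕ) : IsLeast {s | i + 1 ∈ raised i A k T s (j + 1)} r ↔
      IsLeast {s | i + 1 ∈ T s j} r := by
    simpa [mem_raised_iff_of_eq_or, mem_restrictTwo_iff] using
      isLeast_succ_mem_slide_iff (hT.restrictTwo i) eq_or_eq_succ_of_mem_restrictTwo hk hkj hjA
  refine isLetter_congr rfl (by simpa only [he, hcol] using isLeast_iff e.row) fun hleast => ?_
  simp only [he, hcol] at hleast ⊢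
  have hi : ColHas T j i := (colHas_restrictTwo_iff.1 (hk.mixed j hkj hjA).1).1
  rw [forall_succ_le_iff_notMem hT hi hleast.1,
    forall_mem_raised_succ_le_iff hT hk hkj hjA hleast.1 ((isLeast_iff _).2 hleast).1]

omit hT hk in
theorem not_isLetter_raised (he : e.val = i + 1) (hcol : e.col = k) :
    ¬ IsLetter (raised i A k T) e := fun h => by
  have hmem := h.isLeast_row.1
  simp only [he, hcol, Set.mem_ofPred_eq] at hmem
  have := (mem_slide_self.1 ((mem_raised_iff_of_eq_or (.inr rfl)).1 hmem)).1
  omega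

theorem isLetter_raised_shift_iff (hpure : ColPureB i T A)
    (he : ¬ (e.val = i ∧ e.col = A)) :
    IsLetter (raised i A k T) (e.shift i A k) ↔ IsLetter T e := by
  by_cases hout : e.col < k ∨ A < e.col
  · rw [Letter.shift, if_neg (by omega), isLetter_raised_iff_of_col hk hout]
  rw [not_or, not_lt, not_lt] at hout
  by_cases hval : e.val = i + 1
  · rw [Letter.shift, if_pos ⟨hval, hout⟩]
    split_ifs with hcol
    · rw [isLetter_raised_iff_of_col_eq (e := { e with val := i }) hT hk hpure rfl hcol, ← hval]
    · exact isLetter_raised_iff_of_col_eq_succ (e := { e with col := e.col + 1 }) hT hk hval rfl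
        hout.1 (by omega)
  · rw [Letter.shift, if_neg fun h => hval h.1]
    by_cases hval' : e.val = i
    · rw [isLetter_raised_iff_of_val_eq hT hk hval' hout.1 (by omega)]
    · rw [isLetter_raised_iff_of_val_ne hT hk hval' hval]

omit hT in
theorem exists_shift_eq (he : IsLetter (raised i A k T) e) :
    ∃ f : Letter, ¬ (f.val = i ∧ f.col = A) ∧ f.shift i A k = e := by
  have hne : ¬ (e.val = i + 1 ∧ e.col = k) := fun h => not_isLetter_raised h.1 h.2 he
  have hkA := hk.le
  obtain ⟨r, j, x, p⟩ := e
  by_cases hA : x = i ∧ j = A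
  · obtain ⟨rfl, rfl⟩ := hA
    exact ⟨⟨r, j, x + 1, p⟩, fun h => absurd h.1 x.succ_ne_self, by simp [Letter.shift, hkA]⟩
  by_cases hright : x = i + 1 ∧ k < j ∧ j ≤ A
  · obtain ⟨rfl, hkj, hjA⟩ := hright
    obtain ⟨m, rfl⟩ := Nat.exists_eq_add_of_lt hkj
    refine ⟨⟨r, k + m, i + 1, p⟩, fun h => absurd h.1 i.succ_ne_self, ?_⟩
    rw [Letter.shift, if_pos ⟨rfl, k.le_add_right m, (k + m).le_succ.trans hjA⟩,
      if_neg (Nat.lt_of_succ_le hjA).ne]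
  · exact ⟨⟨r, j, x, p⟩, hA, if_neg fun h => hright
      ⟨h.1, h.2.1.lt_of_ne fun hkj => hne ⟨h.1, hkj.symm⟩, h.2.2⟩⟩

end Raised

/-! ### The reading word of the raised filling -/

section ReadingWord

variable {R C i A k : ℕ} {T : ℕ → ℕ → Finset ℕ} {U V : List Letter} {e : Letter}

theorem letterWord_raised_perm (hT : IsBoxedSVRPP R C T)
    (hk : Slidable i A (restrictTwo i T) k)
    (hdesc : ∀ d, ¬ Descent i (slide i A (restrictTwo i T) k) d) (hpure : ColPureB i T A) :
    (letterWord R C (raised i A k T)).Perm ((letterWord R C T).map (Letter.shift i A k)) := by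
  have hraised := isBoxedSVRPP_raised hT hk hdesc
  have ne_of_isLetter {e : Letter} (he : IsLetter T e) : ¬ (e.val = i ∧ e.col = A) :=
    fun ⟨hval, hcol⟩ => hpure.2 (hcol ▸ hval ▸ he.colHas)
  have hnodup : ((letterWord R C T).map (Letter.shift i A k)).Nodup :=
    (nodup_letterWord hT).map_on fun e he f hf => Letter.shift_injOn i A k
      (ne_of_isLetter ((mem_letterWord_iff hT).1 he))
      (ne_of_isLetter ((mem_letterWord_iff hT).1 hf))
  refine (List.perm_ext_iff_of_nodup (nodup_letterWord hraised) hnodup).2 fun e => ?_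
  simp only [List.mem_map, mem_letterWord_iff hraised, mem_letterWord_iff hT]
  constructor
  · intro he
    obtain ⟨f, hf, rfl⟩ := exists_shift_eq hk he
    exact ⟨f, (isLetter_raised_shift_iff hT hk hpure hf).1 he, rfl⟩
  · rintro ⟨f, hf, rfl⟩
    exact (isLetter_raised_shift_iff hT hk hpure (ne_of_isLetter hf)).2 hf

theorem Letter.forgetCol_shift (h : ¬ (e.val = i + 1 ∧ e.col = A)) :
    (e.shift i A k).forgetCol = e.forgetCol := by
  rw [shift]
  split_ifs with hshift hcol
  · exact absurd ⟨hshift.1, hcol⟩ h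
  all_goals rfl

theorem isLetter_of_mem_append (hT : IsBoxedSVRPP R C T) (hw : letterWord R C T = U ++ e :: V)
    {f : Letter} (hf : f ∈ U ++ V) : IsLetter T f := by
  refine (mem_letterWord_iff hT).1 ?_
  rw [hw, List.mem_append, List.mem_cons]
  exact (List.mem_append.1 hf).imp_right .inr

theorem map_forgetCol_letterWord_raised_perm (hT : IsBoxedSVRPP R C T)
    (hk : Slidable i A (restrictTwo i T) k)
    (hdesc : ∀ d, ¬ Descent i (slide i A (restrictTwo i T) k) d) (hpure : ColPureB i T A)
    (hw : letterWord R C T = U ++ e :: V) (he_val : e.val = i + 1) (he_col : e.col = A) :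
    ((letterWord R C (raised i A k T)).map Letter.forgetCol).Perm
      ((U ++ { e with val := i } :: V).map Letter.forgetCol) := by
  have hnodup := nodup_letterWord hT
  rw [hw, List.nodup_middle, List.nodup_cons] at hnodup
  have forgetCol_shift {f : Letter} (hf : f ∈ U ++ V) :
      (f.shift i A k).forgetCol = f.forgetCol := by
    refine Letter.forgetCol_shift fun ⟨hval, hcol⟩ => hnodup.1 ?_
    exact (isLetter_of_letterWord_eq hT hw).eq_of_val_eq_of_col_eq
      (isLetter_of_mem_append hT hw hf) (he_val.trans hval.symm) (he_col.trans hcol.symm) ▸ hf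
  have shift_self : e.shift i A k = { e with val := i } := by
    rw [Letter.shift, if_pos ⟨he_val, he_col ▸ hk.le, he_col.le⟩, if_pos he_col]
  have map_shift : ((letterWord R C T).map (Letter.shift i A k)).map Letter.forgetCol =
      (U ++ { e with val := i } :: V).map Letter.forgetCol := by
    rw [hw, List.map_map, List.map_append, List.map_cons, List.map_append, List.map_cons,
      Function.comp_apply, shift_self]
    congr 1
    · exact List.map_congr_left fun f hf => forgetCol_shift (List.mem_append_left _ hf)
    · congr 1
      exact List.map_congr_left fun f hf => forgetCol_shift (List.mem_append_right _ hf)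
  exact map_shift ▸ (letterWord_raised_perm hT hk hdesc hpure).map Letter.forgetCol

theorem LeftmostUnpairedMinus.colHas_left {j : ℕ} (hA : LeftmostUnpairedMinus i T (j + 1))
    (hT : IsBoxedSVRPP R C T) (hj : ColHas T j (i + 1)) : ColHas T j i := by
  by_contra hnot
  have hmax := hA.2.1 j
  rw [fsuffix_eq_succ hT j, if_pos ⟨hj, hnot⟩, if_neg fun h => hnot h.1] at hmax
  omega

theorem col_le_of_pivot (hT : IsBoxedSVRPP R C T) (hA : LeftmostUnpairedMinus i T e.col)
    (he : IsLetter T e) (he_val : e.val = i + 1) {f : Letter} (hf : IsLetter T f)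
    (hf_val : f.val = i + 1) (hf_pivot : f.pivot = true) (hrow : f.row = e.row) :
    e.col ≤ f.col := by
  obtain ⟨r, j, x, p⟩ := e
  obtain ⟨r', j', x', p'⟩ := f
  dsimp only at *
  subst he_val hf_val hrow
  by_contra! hlt
  obtain ⟨m, rfl⟩ := Nat.exists_eq_add_of_lt hlt
  have hpure : ColPureB i T (j' + m + 1) := colPureB_restrictTwo_iff.1 hA.1
  have he_mem : i + 1 ∈ T r' (j' + m + 1) := he.isLeast_row.1
  have hf_mem : i + 1 ∈ T r' j' := hf.isLeast_row.1
  obtain ⟨z, hz, hz_ge, hz_le⟩ := hT.exists_mem_between le_rfl le_rfl (j'.le_add_right m)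
    (j' + m).le_succ hf_mem he_mem le_rfl
  obtain rfl : z = i + 1 := le_antisymm hz_le hz_ge
  obtain ⟨s, hs⟩ := hA.colHas_left hT ⟨r', hz⟩
  have hsr : s < r' := by
    by_contra! hrs
    by_cases hbox : r' = s ∧ m = 0
    · obtain ⟨rfl, rfl⟩ := hbox
      exact absurd (hf.pivot_iff.1 hf_pivot i hs) i.not_succ_le_self
    · exact absurd (hT.le_of_mem hrs (j'.le_add_right m) (by omega) hf_mem hs) i.not_succ_le_self
  obtain ⟨y, hy, hiy, hyi⟩ := hT.exists_mem_between (s := r' - 1) (by omega) (r'.sub_le 1)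
    (j' + m).le_succ le_rfl hs he_mem i.le_succ
  rcases hiy.eq_or_lt with rfl | hiy
  · exact hpure.2 ⟨_, hy⟩
  · obtain rfl : y = i + 1 := le_antisymm hyi hiy
    have hle : r' ≤ r' - 1 := he.isLeast_row.2 hy
    omega

theorem col_le_of_not_pivot (hT : IsBoxedSVRPP R C T) (he : IsLetter T e) {f : Letter}
    (hf : IsLetter T f) (hval : f.val = e.val) (hf_pivot : ¬ f.pivot = true)
    (hrow : f.row = e.row) : f.col ≤ e.col := by
  by_contra! hlt
  refine hf_pivot (hf.pivot_iff.2 fun y hy => ?_)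
  rw [hval]
  exact hT.le_of_mem le_rfl hlt.le (.inr hlt) he.isLeast_row.1 (hrow ▸ hy)

/- Lowering the value of `e` by one changes its rank by one, so only a letter of the same rank could
end up on the wrong side of it. -/
theorem forgetCol_le_forgetCol_lower (hT : IsBoxedSVRPP R C T)
    (hA : LeftmostUnpairedMinus i T e.col) (he : IsLetter T e) (he_val : e.val = i + 1)
    {f : Letter} (hf : IsLetter T f) (hfe : f < e) :
    f.forgetCol ≤ Letter.forgetCol { e with val := i } := by
  refine Letter.forgetCol_le_forgetCol_iff.2 ((Letter.lt_iff.1 hfe).imp_right ?_)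
  rintro ⟨hrow, hrank⟩
  refine ⟨hrow, ?_⟩
  by_cases hsame : f.val = i + 1 ∧ f.pivot = true
  · have hcol := col_le_of_pivot hT hA he he_val hf hsame.1 hsame.2 hrow
    grind [Letter.rank]
  · grind [Letter.rank]

theorem forgetCol_lower_le_forgetCol (hT : IsBoxedSVRPP R C T) (he : IsLetter T e)
    (he_val : e.val = i + 1) {f : Letter} (hf : IsLetter T f) (hef : e < f) :
    Letter.forgetCol { e with val := i } ≤ f.forgetCol := by
  refine Letter.forgetCol_le_forgetCol_iff.2 ((Letter.lt_iff.1 hef).imp_right ?_)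
  rintro ⟨hrow, hrank⟩
  refine ⟨hrow, ?_⟩
  by_cases hsame : f.val = e.val ∧ ¬ f.pivot = true
  · have hcol := col_le_of_not_pivot hT he hf hsame.1 hsame.2 hrow.symm
    grind [Letter.rank]
  · grind [Letter.rank]

theorem pairwise_map_forgetCol (hT : IsBoxedSVRPP R C T)
    (hw : letterWord R C T = U ++ e :: V) (he_val : e.val = i + 1)
    (hA : LeftmostUnpairedMinus i T e.col) :
    ((U ++ { e with val := i } :: V).map Letter.forgetCol).Pairwise (· ≤ ·) := by
  have he := isLetter_of_letterWord_eq hT hw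
  have hsorted := pairwise_letterWord hT
  simp only [hw, List.pairwise_append, List.pairwise_cons, List.forall_mem_cons] at hsorted
  obtain ⟨hU, ⟨heV, hV⟩, hUeV⟩ := hsorted
  simp only [List.pairwise_map, List.pairwise_append, List.pairwise_cons, List.forall_mem_cons]
  refine ⟨hU.imp fun h => Letter.forgetCol_monotone h.le,
    ⟨fun f hf => ?_, hV.imp fun h => Letter.forgetCol_monotone h.le⟩,
    fun f hf => ⟨?_, fun g hg => Letter.forgetCol_monotone ((hUeV f hf).2 g hg).le⟩⟩
  · exact forgetCol_lower_le_forgetCol hT he he_val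
      (isLetter_of_mem_append hT hw (List.mem_append_right _ hf)) (heV f hf)
  · exact forgetCol_le_forgetCol_lower hT hA he he_val
      (isLetter_of_mem_append hT hw (List.mem_append_left _ hf)) (hUeV f hf).1

theorem map_forgetCol_letterWord_raised (hT : IsBoxedSVRPP R C T)
    (hk : Slidable i e.col (restrictTwo i T) k)
    (hdesc : ∀ d, ¬ Descent i (slide i e.col (restrictTwo i T) k) d)
    (hw : letterWord R C T = U ++ e :: V) (he_val : e.val = i + 1)
    (hA : LeftmostUnpairedMinus i T e.col) :
    (letterWord R C (raised i e.col k T)).map Letter.forgetCol =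
      (U ++ { e with val := i } :: V).map Letter.forgetCol := by
  have hsorted := (pairwise_letterWord (isBoxedSVRPP_raised hT hk hdesc)).imp LT.lt.le
  refine List.Perm.eq_of_pairwise (fun _ _ _ _ => le_antisymm)
    (hsorted.map _ fun _ _ h => Letter.forgetCol_monotone h)
    (pairwise_map_forgetCol hT hw he_val hA) ?_
  exact map_forgetCol_letterWord_raised_perm hT hk hdesc (colPureB_restrictTwo_iff.1 hA.1) hw
    he_val rfl

theorem EWord_readWord_of_ERel (hT : IsBoxedSVRPP R C T) {T' : ℕ → ℕ → Finset ℕ}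
    (h : ERel i T T') : EWord i (readWord R C T) = some (readWord R C T') := by
  obtain ⟨A, S', hA, hsteps, hdesc, rfl⟩ := h
  obtain ⟨k, hk, rfl⟩ := exists_slide_of_reflTransGen hT hA hsteps
  obtain ⟨e, he, he_val, rfl⟩ := exists_isLetter (colPureB_restrictTwo_iff.1 hA.1).1
  obtain ⟨U, V, hw⟩ := List.append_of_mem ((mem_letterWord_iff hT).2 he)
  have map_val_forgetCol (l : List Letter) : (l.map Letter.forgetCol).map Letter.val =
      l.map Letter.val := List.map_map
  have map_forgetCol := map_forgetCol_letterWord_raised hT hk hdesc hw he_val hA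
  calc EWord i (readWord R C T)
      = some ((U ++ { e with val := i } :: V).map Letter.val) := by
        rw [EWord_readWord_eq_some hT hw he_val hA, List.map_append, List.map_cons]
    _ = some (readWord R C (raised i e.col k T)) := by
        rw [← map_val_forgetCol, ← map_forgetCol, map_val_forgetCol, map_val_letterWord]

end ReadingWord

/-- For `T ∈ SVRPP^n(lam/mu)` and `i ∈ {1,…,n−1}`,
`E_i(read(T)) = read(e_i(T))`, with both sides `0` simultaneously; in particular
`e_i(T) = 0` iff `E_i(read(T)) = 0`. -/
theorem EWord_readWord_intertwine (lam mu : ℕ → ℕ)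
    (hlam : IsPartitionFun lam) (hmu : IsPartitionFun mu) (hsub : ∀ r, mu r ≤ lam r)
    (R C : ℕ) (hR : ∀ r, R ≤ r → lam r = 0) (hC : ∀ r, lam r ≤ C)
    (n : ℕ) (hn : 1 ≤ n) (i : ℕ) (hi1 : 1 ≤ i) (hi2 : i < n)
    (T : ℕ → ℕ → Finset ℕ) (hT : IsSVRPPn lam mu n T) :
    (eOp i T = none ↔ EWord i (readWord R C T) = none) ∧
    (∀ T', eOp i T = some T' →
      EWord i (readWord R C T) = some (readWord R C T')) := by
  have hB := isBoxedSVRPP_of_isSVRPP hlam hmu hR hC hT.1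
  refine ⟨?_, fun T' h => EWord_readWord_of_ERel hB (ERel_of_eOp_eq_some h)⟩
  rw [eOp_eq_none_iff, exists_ERel_iff hB, EWord_readWord_eq_none_iff hB]
end
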